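/- arXiv:math/0204143 — 2 statements merged into one kernel-verified Lean document; each statement's English description precedes it below -/
import Mathlib

section
/- For every cardinal number α ≥ 𝔠, there exists a metrizable topological space X with |X| = α such that: for every set Q with |Q| ≤ α and every pair of quasiorders ≤₁, ≤₂ on Q satisfying (q ≤₁ q' implies q ≤₂ q') for all q, q' ∈ Q, there exists a family {X(q) : q ∈ Q} of clopen subsets of X which are pairwise non-homeomorphic (as subspaces of X) and satisfy: (1) q ≤₁ q' if and only if X(q) is homeomorphic to a clopen subset of X(q'); (2) if q ≤₂ q', then X(q) is homeomorphic to a closed subset of X(q'); and (3) if ¬(q ≤₂ q'), then there exists no injective continuous map from X(q) into X(q'). -/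
universe u

open Cardinal

/-- `A` is homeomorphic to a clopen subset of `B`. -/
def HomeoToClopenSubset (A : Type*) [TopologicalSpace A]
    (B : Type*) [TopologicalSpace B] : Prop :=
  ∃ t : Set B, IsClopen t ∧ Nonempty (A ≃ₜ t)

/-- `A` is homeomorphic to a closed subset of `B`. -/
def HomeoToClosedSubset (A : Type*) [TopologicalSpace A]
    (B : Type*) [TopologicalSpace B] : Prop :=
  ∃ t : Set B, IsClosed t ∧ Nonempty (A ≃ₜ t)

/-- There exists an injective continuous map from `A` into `B`. -/
def ExistsInjCont (A : Type*) [TopologicalSpace A]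
    (B : Type*) [TopologicalSpace B] : Prop :=
  ∃ f : A → B, Continuous f ∧ Function.Injective f

/-- The representation property of the space `X` for a pair of quasiorders. -/
def RepresentsPairs (α : Cardinal.{u}) (X : Type u) [TopologicalSpace X] : Prop :=
  ∀ (Q : Type u) (le1 le2 : Q → Q → Prop), #Q ≤ α →
    (∀ q, le1 q q) → (∀ a b c, le1 a b → le1 b c → le1 a c) →
    (∀ q, le2 q q) → (∀ a b c, le2 a b → le2 b c → le2 a c) →
    (∀ q q', le1 q q' → le2 q q') →
    ∃ Xq : Q → Set X,
      (∀ q, IsClopen (Xq q)) ∧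
      (∀ q q', q ≠ q' → IsEmpty ((Xq q) ≃ₜ (Xq q'))) ∧
      (∀ q q', le1 q q' ↔ HomeoToClopenSubset (Xq q) (Xq q')) ∧
      (∀ q q', le2 q q' → HomeoToClosedSubset (Xq q) (Xq q')) ∧
      (∀ q q', ¬ le2 q q' → ¬ ExistsInjCont (Xq q) (Xq q'))

/-!
The space is built on a graph which has a component for each label (the space itself splits into
much smaller clopen sets), and three devices let it remember data.

* Rigidity. `rigidGraph i k` remembers `i` and `k`: an injective homomorphism
  `rigidGraph i k → rigidGraph i' k'` exists only if `i = i'` and `k ≤ k'`, and it fixes all nodes.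
  Its edges encode a well-order with maximum together with ladders, which leaves no room for
  nontrivial order embeddings.
* Topological recognition. `ArcSpace` replaces every edge of a graph by sequences of disjoint arcs
  approaching both ends, so that adjacent vertices are `Linked`, a property which is preserved by
  injective continuous maps of clopen sets. Such maps therefore induce injective homomorphisms of
  rigid graphs. A lower component (`k = 1`) embeds in an upper one (`k = 2`) as a closed set but is
  not homeomorphic to it, and there is no map in the other direction. This encodes `≤₁` and `≤₂`.
* Counting. The rows over each `c` are permuted by a homeomorphism, and the limit points force it
  to translate all rows far out by one and the same number. Removing the first row over `q` alone
  thus distinguishes `X(q)` from all `X(q')`, whereas embeddings may still shift the rows.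
-/

section Ladder

variable {J : Type*} [LinearOrder J]

open Classical in
/-- A chosen strictly increasing sequence with supremum `v`; the constant sequence `v` if there is
no such sequence. -/
noncomputable def ladder (v : J) : ℕ → J :=
  if h : ∃ s : ℕ → J, StrictMono s ∧ IsLUB (Set.range s) v then h.choose else fun _ => v

theorem ladder_spec {v : J} (h : ∃ s : ℕ → J, StrictMono s ∧ IsLUB (Set.range s) v) :
    StrictMono (ladder v) ∧ IsLUB (Set.range (ladder v)) v := by
  rw [ladder, dif_pos h]
  exact h.choose_spec

theorem isLUB_range_ladder (v : J) : IsLUB (Set.range (ladder v)) v := by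
  by_cases h : ∃ s : ℕ → J, StrictMono s ∧ IsLUB (Set.range s) v
  · exact (ladder_spec h).2
  · simp [ladder, dif_neg h]

variable {h : J → J}

/-- The supremum `l` is fixed because `h` maps the ladder of `l` to that of `h l`, while staying
below the iterates. -/
theorem map_eq_of_isLUB_iterate [WellFoundedLT J] (hmono : StrictMono h)
    (hladder : ∀ v n, h (ladder v n) = ladder (h v) n) {x l : J} (hx : x < h x)
    (hl : IsLUB (Set.range fun n => h^[n] x) l) : h l = l := by
  have hiter : StrictMono fun n => h^[n] x := hmono.strictMono_iterate_of_lt_map hx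
  obtain ⟨hL, hLlub⟩ := ladder_spec ⟨_, hiter, hl⟩
  refine le_antisymm ((isLUB_range_ladder (h l)).2 ?_) hmono.le_apply
  rintro _ ⟨n, rfl⟩
  have hlt : ladder l n < l := (hL n.lt_succ_self).trans_le (hLlub.1 ⟨n + 1, rfl⟩)
  obtain ⟨_, ⟨k, rfl⟩, hk⟩ := (lt_isLUB_iff hl).1 hlt
  calc ladder (h l) n = h (ladder l n) := (hladder l n).symm
    _ ≤ h (h^[k] x) := (hmono hk).le
    _ = h^[k + 1] x := (Function.iterate_succ_apply' h k x).symm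
    _ ≤ l := hl.1 ⟨k + 1, rfl⟩

theorem eq_self_of_map_ladder [WellFoundedLT J] [OrderTop J] (hmono : StrictMono h)
    (hladder : ∀ v n, h (ladder v n) = ladder (h v) n) (x : J) : h x = x := by
  by_contra hne
  have hx : x < h x := hmono.le_apply.lt_of_ne (Ne.symm hne)
  have hiter : StrictMono fun n => h^[n] x := hmono.strictMono_iterate_of_lt_map hx
  obtain ⟨l, hl, hmin⟩ := WellFounded.has_min (wellFounded_lt (α := J))
    (upperBounds (Set.range fun n => h^[n] x)) ⟨⊤, fun _ _ => le_top⟩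
  have hlub : IsLUB (Set.range fun n => h^[n] x) l := ⟨hl, fun y hy => not_lt.1 (hmin y hy)⟩
  have hfix : h l = l := map_eq_of_isLUB_iterate hmono hladder hx hlub
  obtain ⟨hL, hLlub⟩ := ladder_spec ⟨_, hiter, hlub⟩
  have hxl : x < l := (hiter Nat.zero_lt_one).trans_le (hl ⟨1, rfl⟩)
  obtain ⟨_, ⟨n, rfl⟩, hn⟩ := (lt_isLUB_iff hLlub).1 hxl
  have hfixL : h (ladder l n) = ladder l n := by rw [hladder, hfix]
  have hbound : l ≤ ladder l n := by
    refine hlub.2 ?_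
    rintro _ ⟨k, rfl⟩
    calc h^[k] x ≤ h^[k] (ladder l n) := (hmono.iterate k).monotone hn.le
      _ = ladder l n := Function.iterate_fixed hfixL k
  exact hbound.not_gt ((hL n.lt_succ_self).trans_le (hLlub.1 ⟨n + 1, rfl⟩))

end Ladder

section RigidGraph

/-- The vertices of `rigidGraph` used to recognise particular vertices: `base` singles out the
nodes of level `0`, `rung` those of positive level, `first` those of level `1`, and `mark` singles
out one node while counting up to `3`. -/
inductive Tag
  | base
  | rung
  | first
  | mark (l : Fin 3)

namespace Tag

/-- The number telling the tags apart: a tag is adjacent to the anchors up to its rank. -/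
def rank : Tag → Fin 11
  | base => 0
  | rung => 1
  | first => 2
  | mark l => ⟨l + 3, by omega⟩

theorem rank_injective : Function.Injective rank := by
  intro s t h
  cases s <;> cases t <;> grind [rank]

theorem rank_lt (t : Tag) : (t.rank : ℕ) < 6 := by
  cases t <;> simp only [rank] <;> omega

instance : Finite Tag := Finite.of_injective rank rank_injective

end Tag

/-- The vertices of `rigidGraph`: over each `j : J` an infinite path of nodes indexed by their
level, together with finitely many tags and anchors. -/
inductive Vertex (J : Type*)
  | node (j : J) (m : ℕ)
  | tag (t : Tag)
  | anchor (a : Fin 11)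

open Vertex Tag

variable {J : Type*}

namespace Vertex

/-- A proper colouring of `rigidGraph` in which the non-anchors use four colours only. -/
def colour : Vertex J → ℕ
  | node _ 0 => 0
  | node _ (m + 1) => m % 2 + 1
  | tag _ => 3
  | anchor a => a + 4

theorem colour_lt_of_ne_anchor {x : Vertex J} (hx : ∀ a, x ≠ anchor a) : x.colour < 10 := by
  match x with
  | node _ 0 => simp [colour]
  | node _ (m + 1) => simp only [colour]; omega
  | tag _ => simp [colour]
  | anchor a => exact absurd rfl (hx a)

end Vertex

variable [LinearOrder J]

/-- The edges of `rigidGraph i k`, each in one direction: level `2` encodes the order of `J`, the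
levels from `3` on encode the ladders, and the marks encode `i` and `k`. -/
inductive Arrow (i : J) (k : Fin 3) : Vertex J → Vertex J → Prop
  | path (j : J) (m : ℕ) : Arrow i k (node j m) (node j (m + 1))
  | lt {u v : J} (h : u < v) : Arrow i k (node v 2) (node u 0)
  | ladder (v : J) (n : ℕ) : Arrow i k (node v (n + 3)) (node (ladder v n) 0)
  | base (j : J) : Arrow i k (tag base) (node j 0)
  | rung (j : J) (m : ℕ) : Arrow i k (tag rung) (node j (m + 1))
  | first (j : J) : Arrow i k (tag first) (node j 1)
  | mark {l : Fin 3} (h : l ≤ k) : Arrow i k (tag (mark l)) (node i 0)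
  | anchorTag {a : Fin 11} {t : Tag} (h : a ≤ t.rank) : Arrow i k (anchor a) (tag t)
  | anchors (a b : Fin 11) : Arrow i k (anchor a) (anchor b)

/-- A graph on `Vertex J` from which `i` and `k` can be recovered and which, for a well-order `J`,
has no injective endomorphism moving a node. -/
def rigidGraph (i : J) (k : Fin 3) : SimpleGraph (Vertex J) := SimpleGraph.fromRel (Arrow i k)

namespace rigidGraph

variable {i i' : J} {k k' : Fin 3} {x y : Vertex J}

theorem adj_of_arrow (h : Arrow i k x y) (hne : x ≠ y) : (rigidGraph i k).Adj x y :=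
  ⟨hne, Or.inl h⟩

theorem mono (h : k ≤ k') : rigidGraph i k ≤ rigidGraph i k' := by
  have harrow {x y} (hxy : Arrow i k x y) : Arrow i k' x y := by
    cases hxy <;> constructor <;> first | assumption | exact le_trans ‹_› h
  exact fun x y hxy => ⟨hxy.1, hxy.2.imp harrow harrow⟩

theorem reachable_anchor_zero (x : Vertex J) : (rigidGraph i k).Reachable x (anchor 0) := by
  have htag (t : Tag) : (rigidGraph i k).Reachable (tag t) (anchor 0) :=
    (adj_of_arrow (.anchorTag (Fin.zero_le _)) (by simp)).symm.reachable
  match x with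
  | node j 0 => exact (adj_of_arrow (.base j) (by simp)).symm.reachable.trans (htag _)
  | node j (m + 1) => exact (adj_of_arrow (.rung j m) (by simp)).symm.reachable.trans (htag _)
  | tag t => exact htag t
  | anchor a =>
    by_cases ha : a = 0
    · rw [ha]
    · exact (adj_of_arrow (.anchors a 0) (by simpa using ha)).reachable

theorem connected (i : J) (k : Fin 3) : (rigidGraph i k).Connected :=
  SimpleGraph.connected_iff_exists_forall_reachable _ |>.2
    ⟨anchor 0, fun x => (reachable_anchor_zero x).symm⟩

theorem not_adj_of_odd {j j' : J} {m m' : ℕ} (hm : Odd m) (hm' : Odd m') :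
    ¬ (rigidGraph i k).Adj (node j m) (node j' m') := by
  rintro ⟨-, h | h⟩ <;> cases h <;> grind

theorem exists_tag_of_adj_anchor {a : Fin 11} (h : (rigidGraph i k).Adj x (anchor a))
    (hx : ∀ b, x ≠ anchor b) : ∃ t, x = tag t ∧ a ≤ t.rank := by
  rcases h with ⟨-, h | h⟩ <;> cases h
  · exact absurd rfl (hx _)
  · exact ⟨_, rfl, ‹_›⟩
  · exact absurd rfl (hx _)

theorem exists_node_of_adj_base (h : (rigidGraph i k).Adj (tag base) x)
    (hx : ∀ a, x ≠ anchor a) : ∃ j, x = node j 0 := by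
  rcases h with ⟨-, h | h⟩ <;> cases h
  · exact ⟨_, rfl⟩
  · exact absurd rfl (hx _)

theorem exists_node_of_adj_rung (h : (rigidGraph i k).Adj (tag rung) x)
    (hx : ∀ a, x ≠ anchor a) : ∃ j m, x = node j (m + 1) := by
  rcases h with ⟨-, h | h⟩ <;> cases h
  · exact ⟨_, _, rfl⟩
  · exact absurd rfl (hx _)

theorem exists_node_of_adj_first (h : (rigidGraph i k).Adj (tag first) x)
    (hx : ∀ a, x ≠ anchor a) : ∃ j, x = node j 1 := by
  rcases h with ⟨-, h | h⟩ <;> cases h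
  · exact ⟨_, rfl⟩
  · exact absurd rfl (hx _)

theorem adj_mark_node {l : Fin 3} {j : J} {m : ℕ} :
    (rigidGraph i k).Adj (tag (mark l)) (node j m) ↔ j = i ∧ m = 0 ∧ l ≤ k := by
  constructor
  · rintro ⟨-, h | h⟩ <;> cases h
    exact ⟨rfl, rfl, ‹_›⟩
  · rintro ⟨rfl, rfl, h⟩
    exact adj_of_arrow (.mark h) (by simp)

theorem adj_node_zero_one {j j' : J} :
    (rigidGraph i k).Adj (node j 0) (node j' 1) ↔ j = j' := by
  constructor
  · rintro ⟨-, h | h⟩ <;> cases h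
    rfl
  · rintro rfl
    exact adj_of_arrow (.path j 0) (by simp)

theorem adj_node_succ_succ {j j' : J} {m m' : ℕ} :
    (rigidGraph i k).Adj (node j (m + 1)) (node j' (m' + 1)) ↔
      j = j' ∧ (m' = m + 1 ∨ m = m' + 1) := by
  constructor
  · rintro ⟨-, h | h⟩ <;> cases h <;> simp
  · rintro ⟨rfl, rfl | rfl⟩
    · exact adj_of_arrow (.path j _) (by simp)
    · exact (adj_of_arrow (.path j _) (by simp)).symm

theorem adj_node_two_zero {j j' : J} :
    (rigidGraph i k).Adj (node j 2) (node j' 0) ↔ j' < j := by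
  constructor
  · rintro ⟨-, h | h⟩ <;> cases h
    assumption
  · exact fun h => adj_of_arrow (.lt h) (by simp)

theorem adj_node_add_three_zero {j j' : J} {n : ℕ} :
    (rigidGraph i k).Adj (node j (n + 3)) (node j' 0) ↔ j' = ladder j n := by
  constructor
  · rintro ⟨-, h | h⟩ <;> cases h
    rfl
  · rintro rfl
    exact adj_of_arrow (.ladder j n) (by simp)

theorem colour_ne_of_adj (h : (rigidGraph i k).Adj x y) : colour x ≠ colour y := by
  have harrow {x y : Vertex J} (h : Arrow i k x y) (hne : x ≠ y) : colour x ≠ colour y := by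
    cases h with
    | path j m => cases m <;> grind [colour]
    | anchors a b => simpa [colour, Fin.ext_iff] using hne
    | _ => grind [colour]
  rcases h with ⟨hne, h | h⟩
  · exact harrow h hne
  · exact (harrow h hne.symm).symm

theorem colour_lt_of_adj (h : (rigidGraph i k).Adj x y) (hx : ∀ a, x ≠ anchor a) :
    colour y < 10 := by
  by_cases hy : ∃ a, y = anchor a
  · obtain ⟨a, rfl⟩ := hy
    obtain ⟨t, -, ha⟩ := exists_tag_of_adj_anchor h hx
    have := t.rank_lt
    simp only [colour]
    omega
  · exact colour_lt_of_ne_anchor (not_exists.1 hy)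

end rigidGraph

theorem apply_eq_of_le_apply {ι β : Type*} [Finite ι] [PartialOrder β] {r : ι → β} {g : ι → ι}
    (hg : Function.Injective g) (hr : ∀ x, r x ≤ r (g x)) (x : ι) : r (g x) = r x := by
  obtain ⟨n, hn, hx⟩ := hg.mem_periodicPts x
  have hmono : Monotone fun n => r (g^[n] x) := monotone_nat_of_le_succ fun n => by
    simpa only [Function.iterate_succ_apply'] using hr (g^[n] x)
  refine le_antisymm ?_ (hr x)
  calc r (g x) ≤ r (g^[n] x) := hmono (a := 1) hn
    _ = r x := by rw [hx]

namespace rigidGraph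

variable {i i' : J} {k k' : Fin 3} {f : rigidGraph i k →g rigidGraph i' k'}

/-- Otherwise the image of the 11-clique of anchors would be coloured by ten colours. -/
theorem exists_map_anchor (f : rigidGraph i k →g rigidGraph i' k') (a : Fin 11) :
    ∃ b, f (anchor a) = anchor b := by
  by_contra! hne
  have hadj {b c : Fin 11} (h : b ≠ c) : (rigidGraph i' k').Adj (f (anchor b)) (f (anchor c)) :=
    f.map_adj (adj_of_arrow (.anchors b c) (by simpa using h))
  have hlt (b : Fin 11) : colour (f (anchor b)) < 10 := by
    by_cases h : a = b
    · exact h ▸ colour_lt_of_ne_anchor hne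
    · exact colour_lt_of_adj (hadj h) hne
  have hinj : Function.Injective fun b => (⟨colour (f (anchor b)), hlt b⟩ : Fin 10) :=
    fun b c hbc => by_contra fun h => colour_ne_of_adj (hadj h) (Fin.ext_iff.1 hbc)
  simpa using Fintype.card_le_of_injective _ hinj

theorem map_ne_anchor (hf : Function.Injective f) {x : Vertex J} (hx : ∀ a, x ≠ anchor a)
    (b : Fin 11) : f x ≠ anchor b := by
  intro hb
  choose σ hσ using exists_map_anchor f
  have hσinj : Function.Injective σ := fun a a' h => by
    simpa using hf ((hσ a).trans ((congrArg anchor h).trans (hσ a').symm))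
  obtain ⟨a, rfl⟩ := Finite.surjective_of_injective hσinj b
  exact hx a (hf (hb.trans (hσ a).symm))

theorem exists_map_tag (hf : Function.Injective f) (t : Tag) :
    ∃ t', f (tag t) = tag t' ∧ t.rank ≤ t'.rank := by
  choose σ hσ using exists_map_anchor f
  have hσinj : Function.Injective σ := fun a a' h => by
    simpa using hf ((hσ a).trans ((congrArg anchor h).trans (hσ a').symm))
  have himage (a : Fin 11) (ha : a ≤ t.rank) : ∃ t', f (tag t) = tag t' ∧ σ a ≤ t'.rank := by
    have h := f.map_adj (adj_of_arrow (.anchorTag ha) (by simp)).symm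
    rw [hσ] at h
    exact exists_tag_of_adj_anchor h (map_ne_anchor hf (by simp))
  obtain ⟨t', ht', -⟩ := himage 0 (Fin.zero_le _)
  refine ⟨t', ht', ?_⟩
  have hmaps : Set.MapsTo σ (Finset.Iic t.rank) (Finset.Iic t'.rank) := fun a ha => by
    obtain ⟨t'', h, hle⟩ := himage a (by simpa using ha)
    obtain rfl : t' = t'' := by simpa [ht'] using h
    simpa using hle
  have hcard := Finset.card_le_card_of_injOn σ hmaps hσinj.injOn
  simpa using hcard

theorem map_tag (hf : Function.Injective f) (t : Tag) : f (tag t) = tag t := by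
  choose g hg hrank using exists_map_tag hf
  have hginj : Function.Injective g := fun s t h => by
    simpa using hf ((hg s).trans ((congrArg tag h).trans (hg t).symm))
  rw [hg, rank_injective (apply_eq_of_le_apply hginj hrank t)]

theorem exists_map_node (hf : Function.Injective f) (j : J) :
    ∃ j', ∀ m, f (node j m) = node j' m := by
  have hnode (j m) : ∀ a, f (node j m) ≠ anchor a := map_ne_anchor hf (by simp)
  have htag {t : Tag} {x : Vertex J} (h : Arrow i k (tag t) x) (hne : tag t ≠ x) :
      (rigidGraph i' k').Adj (tag t) (f x) :=
    map_tag hf t ▸ f.map_adj (adj_of_arrow h hne)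
  have hpath (m) : (rigidGraph i' k').Adj (f (node j m)) (f (node j (m + 1))) :=
    f.map_adj (adj_of_arrow (.path j m) (by simp))
  obtain ⟨j', h0⟩ := exists_node_of_adj_base (htag (.base j) (by simp)) (hnode j 0)
  obtain ⟨j'', h1⟩ := exists_node_of_adj_first (htag (.first j) (by simp)) (hnode j 1)
  obtain rfl : j' = j'' := adj_node_zero_one.1 (h0 ▸ h1 ▸ hpath 0)
  suffices h : ∀ m, f (node j m) = node j' m ∧ f (node j (m + 1)) = node j' (m + 1) from
    ⟨j', fun m => (h m).1⟩
  intro m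
  induction m with
  | zero => exact ⟨h0, h1⟩
  | succ m ih =>
    refine ⟨ih.2, ?_⟩
    obtain ⟨l, m', hm'⟩ :=
      exists_node_of_adj_rung (htag (.rung j (m + 1)) (by simp)) (hnode j (m + 2))
    have hadj := hpath (m + 1)
    rw [ih.2, hm'] at hadj
    obtain ⟨rfl, rfl | rfl⟩ := adj_node_succ_succ.1 hadj
    · exact hm'
    · exact absurd (hf (hm'.trans ih.1.symm)) (by simp only [node.injEq]; omega)

theorem eq_of_injective_hom [WellFoundedLT J] [OrderTop J] (hf : Function.Injective f) :
    i = i' ∧ k ≤ k' ∧ ∀ j m, f (node j m) = node j m := by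
  choose h hh using exists_map_node hf
  have hadj {j j' : J} {m m' : ℕ} (hjj' : (rigidGraph i k).Adj (node j m) (node j' m')) :
      (rigidGraph i' k').Adj (node (h j) m) (node (h j') m') := by
    simpa only [hh] using f.map_adj hjj'
  have hmono : StrictMono h := fun u v huv =>
    adj_node_two_zero.1 (hadj (adj_node_two_zero.2 huv))
  have hladder (v n) : h (ladder v n) = ladder (h v) n :=
    adj_node_add_three_zero.1 (hadj (adj_node_add_three_zero.2 rfl))
  have hnode (j m) : f (node j m) = node j m := by
    rw [hh, eq_self_of_map_ladder hmono hladder]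
  have hmark := f.map_adj (adj_mark_node.2 ⟨rfl, rfl, le_refl k⟩)
  rw [map_tag hf, hnode] at hmark
  obtain ⟨hi, -, hk⟩ := adj_mark_node.1 hmark
  exact ⟨hi, hk, hnode⟩

end rigidGraph

end RigidGraph

section Linked

open Set Topology

variable {X Y : Type*} [TopologicalSpace X] [TopologicalSpace Y] {x y : X}

/-- Two distinct points are linked if any neighbourhoods of them are joined by two disjoint
preconnected sets. This is the invariant which allows a space to remember a graph. -/
def Linked (x y : X) : Prop :=
  x ≠ y ∧ ∀ U ∈ 𝓝 x, ∀ V ∈ 𝓝 y, ∃ K L : Set X, IsPreconnected K ∧ IsPreconnected L ∧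
    Disjoint K L ∧ (K ∩ U).Nonempty ∧ (K ∩ V).Nonempty ∧ (L ∩ U).Nonempty ∧ (L ∩ V).Nonempty

theorem Linked.symm (h : Linked x y) : Linked y x :=
  ⟨h.1.symm, fun U hU V hV =>
    let ⟨K, L, hK, hL, hKL, hKV, hKU, hLV, hLU⟩ := h.2 V hV U hU
    ⟨K, L, hK, hL, hKL, hKU, hKV, hLU, hLV⟩⟩

theorem Linked.mem_isClopen {D : Set X} (h : Linked x y) (hD : IsClopen D) (hx : x ∈ D) :
    y ∈ D := by
  by_contra hy
  obtain ⟨K, -, hK, -, -, hKD, ⟨z, hzK, hz⟩, -⟩ :=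
    h.2 D (hD.isOpen.mem_nhds hx) Dᶜ (hD.compl.isOpen.mem_nhds hy)
  exact hz (hK.subset_isClopen hD hKD hzK)

theorem Linked.image_of_isClopen {D : Set X} {F : X → Y} (h : Linked x y) (hD : IsClopen D)
    (hF : ContinuousOn F D) (hinj : InjOn F D) (hx : x ∈ D) : Linked (F x) (F y) := by
  have hy : y ∈ D := h.mem_isClopen hD hx
  refine ⟨hinj.ne hx hy h.1, fun U hU V hV => ?_⟩
  have hnhds {z : X} (hz : z ∈ D) {W : Set Y} (hW : W ∈ 𝓝 (F z)) : F ⁻¹' W ∩ D ∈ 𝓝 z :=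
    Filter.inter_mem ((hF.continuousAt (hD.isOpen.mem_nhds hz)) hW) (hD.isOpen.mem_nhds hz)
  obtain ⟨K, L, hK, hL, hKL, hKU, hKV, hLU, hLV⟩ := h.2 _ (hnhds hx hU) _ (hnhds hy hV)
  have hsub {S : Set X} {W : Set Y} (hS : IsPreconnected S)
      (hSW : (S ∩ (F ⁻¹' W ∩ D)).Nonempty) : S ⊆ D :=
    hS.subset_isClopen hD (hSW.mono (inter_subset_inter_right _ inter_subset_right))
  have hmeet {S : Set X} {W : Set Y} : (S ∩ (F ⁻¹' W ∩ D)).Nonempty → (F '' S ∩ W).Nonempty :=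
    fun ⟨z, hzS, hzW, _⟩ => ⟨F z, mem_image_of_mem F hzS, hzW⟩
  have hdisj : Disjoint (F '' K) (F '' L) := by
    rw [disjoint_iff_inter_eq_empty, ← hinj.image_inter (hsub hK hKU) (hsub hL hLU),
      hKL.inter_eq, image_empty]
  exact ⟨F '' K, F '' L, hK.image F (hF.mono (hsub hK hKU)), hL.image F (hF.mono (hsub hL hLU)),
    hdisj, hmeet hKU, hmeet hKV, hmeet hLU, hmeet hLV⟩

theorem not_linked_of_denselyOrdered [LinearOrder X] [OrderClosedTopology X] [DenselyOrdered X]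
    (x y : X) : ¬ Linked x y := by
  intro h
  wlog hlt : x < y generalizing x y
  · exact this y x h.symm (h.1.lt_or_gt.resolve_left hlt)
  obtain ⟨z, hxz, hzy⟩ := exists_between hlt
  obtain ⟨K, L, hK, hL, hKL, ⟨a, haK, haz⟩, ⟨b, hbK, hzb⟩, ⟨a', haL, haz'⟩, ⟨b', hbL, hzb'⟩⟩ :=
    h.2 _ (Iio_mem_nhds hxz) _ (Ioi_mem_nhds hzy)
  exact disjoint_left.1 hKL (hK.Icc_subset haK hbK ⟨le_of_lt haz, le_of_lt hzb⟩)
    (hL.Icc_subset haL hbL ⟨le_of_lt haz', le_of_lt hzb'⟩)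

end Linked

section TruncatedDistance

open BoundedContinuousFunction

variable {N : Type*} [MetricSpace N]

/-- The bounded version of the Kuratowski embedding: the point `n` is sent to its distance function
truncated at `1`, so that arbitrary metric spaces embed in a normed space. -/
noncomputable def truncDist (n : N) : N →ᵇ ℝ :=
  .ofNormedAddCommGroup (fun x => min (dist n x) 1) (by fun_prop) 1 fun x => by
    rw [Real.norm_of_nonneg (by positivity)]
    exact min_le_right _ _

theorem dist_truncDist (m n : N) : dist (truncDist m) (truncDist n) = min (dist m n) 1 := by
  refine le_antisymm ((dist_le (by positivity)).2 fun x => ?_) ?_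
  · change |min (dist m x) 1 - min (dist n x) 1| ≤ _
    have hm : 0 ≤ dist m x := dist_nonneg
    have hn : 0 ≤ dist n x := dist_nonneg
    have h := abs_le.1 (abs_dist_sub_le m n x)
    grind
  · calc min (dist m n) 1 ≤ |min (dist m n) 1 - min (dist n n) 1| := by simp [le_abs_self]
      _ ≤ dist (truncDist m) (truncDist n) :=
        dist_coe_le_dist (f := truncDist m) (g := truncDist n) n

theorem isUniformEmbedding_truncDist : IsUniformEmbedding (truncDist : N → N →ᵇ ℝ) := by
  refine Metric.isUniformEmbedding_iff'.2 ⟨fun ε hε => ⟨ε, hε, fun {m n} h => ?_⟩,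
    fun δ hδ => ⟨min δ 1, by positivity, fun {m n} h => ?_⟩⟩ <;> rw [dist_truncDist] at *
  · exact min_lt_of_left_lt h
  · exact (lt_min_iff.1 h).elim fun h _ => by grind

end TruncatedDistance

section ArcSpace

open Set Topology Filter BoundedContinuousFunction

/-- The parameters of the `k`-th arc of an edge; these intervals exhaust `(0, 1)`. -/
abbrev arcInterval (k : ℕ) : Set ℝ := Icc (1 / ((k : ℝ) + 3)) (1 - 1 / ((k : ℝ) + 3))

theorem one_div_add_three_le (k : ℕ) : 1 / ((k : ℝ) + 3) ≤ 1 / 3 :=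
  one_div_le_one_div_of_le (by norm_num) (by linarith [Nat.cast_nonneg (α := ℝ) k])

theorem pos_of_mem_arcInterval {k : ℕ} {t : ℝ} (ht : t ∈ arcInterval k) : 0 < t :=
  lt_of_lt_of_le (by positivity) ht.1

theorem lt_one_of_mem_arcInterval {k : ℕ} {t : ℝ} (ht : t ∈ arcInterval k) : t < 1 := by
  have : 0 < 1 / ((k : ℝ) + 3) := by positivity
  linarith [ht.2]

/-- The space obtained from a graph by adding, for each orientation of an edge, a sequence of
disjoint arcs whose end points converge to the ends of the edge. Unlike the edges of a geometric
realisation the arcs are clopen, so that the space decomposes into many clopen pieces. -/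
inductive ArcSpace {N : Type*} (G : SimpleGraph N)
  | vx (n : N)
  | pt (d : G.Dart) (k : ℕ) (t : arcInterval k)

namespace ArcSpace

variable {N : Type*} {G : SimpleGraph N}

/-- The vertex nearest to a point. -/
noncomputable def foot : ArcSpace G → N
  | vx n => n
  | pt d _ t => if (t : ℝ) ≤ 1 / 2 then d.fst else d.snd

/-- The distance of a point from its `foot`, in terms of the parametrisation of the arc. -/
noncomputable def height : ArcSpace G → ℝ
  | vx _ => 0
  | pt _ _ t => min t (1 - t)

theorem height_nonneg (x : ArcSpace G) : 0 ≤ height x := by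
  match x with
  | vx _ => exact le_rfl
  | pt _ _ t =>
    exact le_min (pos_of_mem_arcInterval t.2).le
      (sub_nonneg.2 (lt_one_of_mem_arcInterval t.2).le)

theorem adj_foot_of_ne {d : G.Dart} {k : ℕ} {s t : arcInterval k}
    (h : foot (pt d k s) ≠ foot (pt d k t)) : G.Adj (foot (pt d k s)) (foot (pt d k t)) := by
  have := d.adj
  have := d.adj.symm
  grind [foot]

/-- The part of the space lying over a set of vertices. -/
def above (S : Set N) : Set (ArcSpace G) := foot ⁻¹' S

section Map

variable {M : Type*} {H : SimpleGraph M} {φ : G →g H}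

/-- The map induced by a graph homomorphism, preserving the parametrisation of the arcs. -/
def map (φ : G →g H) : ArcSpace G → ArcSpace H
  | vx n => vx (φ n)
  | pt d k t => pt (φ.mapDart d) k t

theorem foot_map (φ : G →g H) (x : ArcSpace G) : foot (map φ x) = φ (foot x) := by
  match x with
  | vx _ => rfl
  | pt _ _ _ => exact (apply_ite φ _ _ _).symm

theorem height_map (φ : G →g H) (x : ArcSpace G) : height (map φ x) = height x := by
  match x with
  | vx _ => rfl
  | pt _ _ _ => rfl

theorem map_injective (hφ : Function.Injective φ) : Function.Injective (map φ) := by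
  intro x y h
  match x, y with
  | vx m, vx n => exact congrArg vx (hφ (vx.inj h))
  | vx _, pt _ _ _ => cases h
  | pt _ _ _, vx _ => cases h
  | pt _ _ _, pt _ _ _ =>
    simp only [map, pt.injEq] at h ⊢
    refine ⟨SimpleGraph.Dart.ext _ _ ?_, h.2⟩
    exact hφ.prodMap hφ (congrArg SimpleGraph.Dart.toProd h.1)

end Map

section Metric

variable [MetricSpace N]

open Classical in
/-- The embedding of `ArcSpace G` in a normed space which defines its metric: an arc is a segment
joining the ends of the edge, lifted in a direction of its own. -/
noncomputable def realize :
    ArcSpace G → (N →ᵇ ℝ) × lp (fun _ : G.Dart × ℕ => ℝ) 2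
  | vx n => (truncDist n, 0)
  | pt d k t => (AffineMap.lineMap (truncDist d.fst) (truncDist d.snd) (t : ℝ),
      lp.single 2 (d, k) ((t : ℝ) * (1 - t)))

theorem realize_pt_snd_ne_zero (d : G.Dart) (k : ℕ) (t : arcInterval k) :
    (realize (pt d k t)).2 (d, k) ≠ 0 := by
  classical
  rw [realize, lp.single_apply_self]
  exact (mul_pos (pos_of_mem_arcInterval t.2)
    (sub_pos.2 (lt_one_of_mem_arcInterval t.2))).ne'

theorem exists_eq_pt_of_realize_snd_ne_zero {d : G.Dart} {k : ℕ} {x : ArcSpace G}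
    (h : (realize x).2 (d, k) ≠ 0) : ∃ t, x = pt d k t := by
  classical
  match x with
  | vx n => exact absurd rfl h
  | pt d' k' t =>
    by_cases hdk : (d, k) = (d', k')
    · obtain ⟨rfl, rfl⟩ := Prod.ext_iff.1 hdk
      exact ⟨t, rfl⟩
    · exact absurd (lp.single_apply_ne _ _ _ hdk) h

theorem realize_injective : Function.Injective (realize : ArcSpace G → _) := by
  have hpt {d : G.Dart} {k : ℕ} {t : arcInterval k} {x : ArcSpace G}
      (h : realize (pt d k t) = realize x) : pt d k t = x := by
    obtain ⟨t', rfl⟩ := exists_eq_pt_of_realize_snd_ne_zero (h ▸ realize_pt_snd_ne_zero d k t)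
    have hne : truncDist d.fst ≠ truncDist d.snd :=
      isUniformEmbedding_truncDist.injective.ne d.adj.ne
    rw [Subtype.ext (AffineMap.lineMap_injective ℝ hne (congrArg Prod.fst h))]
  intro x y h
  match x, y with
  | pt d k t, y => exact hpt h
  | x, pt d k t => exact (hpt h.symm).symm
  | vx m, vx n => rw [isUniformEmbedding_truncDist.injective (congrArg Prod.fst h)]

noncomputable instance : MetricSpace (ArcSpace G) :=
  .induced realize realize_injective inferInstance

theorem continuous_realize : Continuous (realize : ArcSpace G → _) := continuous_induced_dom

theorem dist_realize_fst_foot_le (x : ArcSpace G) :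
    dist (realize x).1 (truncDist (foot x)) ≤ height x := by
  match x with
  | vx n => simp [realize, foot, height]
  | pt d k t =>
    have hle : dist (truncDist d.fst) (truncDist d.snd) ≤ 1 := by simp [dist_truncDist]
    have h0 := pos_of_mem_arcInterval t.2
    have h1 := lt_one_of_mem_arcInterval t.2
    simp only [foot, height, realize]
    split_ifs with ht
    · rw [dist_lineMap_left, Real.norm_of_nonneg h0.le, min_eq_left (by linarith)]
      exact mul_le_of_le_one_right h0.le hle
    · rw [dist_lineMap_right, Real.norm_of_nonneg (by linarith), min_eq_right (by linarith)]
      exact mul_le_of_le_one_right (by linarith) hle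

theorem norm_realize_snd_le (x : ArcSpace G) : ‖(realize x).2‖ ≤ height x := by
  classical
  match x with
  | vx n => simp [realize, height]
  | pt d k t =>
    have h0 := pos_of_mem_arcInterval t.2
    have h1 := lt_one_of_mem_arcInterval t.2
    rw [realize, lp.norm_single (by norm_num), Real.norm_of_nonneg (by nlinarith)]
    exact le_min (by nlinarith) (by nlinarith)

theorem height_le_norm_realize_snd (x : ArcSpace G) : height x ≤ 2 * ‖(realize x).2‖ := by
  classical
  match x with
  | vx n => simp [realize, height]
  | pt d k t =>
    have h0 := pos_of_mem_arcInterval t.2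
    have h1 := lt_one_of_mem_arcInterval t.2
    rw [realize, lp.norm_single (by norm_num), Real.norm_of_nonneg (by nlinarith), height]
    rcases le_total (t : ℝ) (1 / 2) with ht | ht
    · exact (min_le_left _ _).trans (by nlinarith)
    · exact (min_le_right _ _).trans (by nlinarith)

theorem dist_vx (x : ArcSpace G) (n : N) :
    dist x (vx n) = max (dist (realize x).1 (truncDist n)) ‖(realize x).2‖ := by
  rw [← dist_zero_right]
  rfl

theorem nhds_vx (n : N) :
    𝓝 (vx n : ArcSpace G) = comap foot (𝓝 n) ⊓ comap height (𝓝 0) := by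
  have hheight (x : ArcSpace G) : height x ≤ 2 * dist x (vx n) := by
    rw [dist_vx]
    linarith [height_le_norm_realize_snd x, le_max_right (dist (realize x).1 (truncDist n))
      ‖(realize x).2‖]
  have hdist (x : ArcSpace G) : dist (truncDist (foot x)) (truncDist n) ≤ 3 * dist x (vx n) := by
    have := dist_triangle_left (truncDist (foot x)) (truncDist n) (realize x).1
    have := le_max_left (dist (realize x).1 (truncDist n)) ‖(realize x).2‖
    rw [← dist_vx] at this
    linarith [dist_realize_fst_foot_le x, hheight x]
  have hle (x : ArcSpace G) :
      dist x (vx n) ≤ height x + dist (truncDist (foot x)) (truncDist n) := by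
    rw [dist_vx]
    refine max_le ((dist_triangle _ _ _).trans (add_le_add_left (dist_realize_fst_foot_le x) _)) ?_
    exact (norm_realize_snd_le x).trans (le_add_of_nonneg_right dist_nonneg)
  have hy : IsInducing (truncDist : N → N →ᵇ ℝ) := isUniformEmbedding_truncDist.isInducing
  have hlim (c : ℝ) : Tendsto (fun x : ArcSpace G => c * dist x (vx n)) (𝓝 (vx n)) (𝓝 0) := by
    have : Continuous fun x : ArcSpace G => c * dist x (vx n) := by fun_prop
    simpa using this.tendsto (vx n)
  refine le_antisymm (le_inf (tendsto_iff_comap.1 ?_) (tendsto_iff_comap.1 ?_)) ?_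
  · rw [hy.tendsto_nhds_iff, tendsto_iff_dist_tendsto_zero]
    exact squeeze_zero (fun _ => dist_nonneg) hdist (hlim 3)
  · exact squeeze_zero height_nonneg hheight (hlim 2)
  · rw [← nhds_comap_dist (vx n), ← tendsto_iff_comap]
    refine squeeze_zero (fun _ => dist_nonneg) hle ?_
    have hfoot : Tendsto foot (comap foot (𝓝 n) ⊓ comap height (𝓝 0) : Filter (ArcSpace G))
        (𝓝 n) := tendsto_comap.mono_left inf_le_left
    have h0 := (tendsto_comap.mono_left inf_le_right).add
      (tendsto_iff_dist_tendsto_zero.1 ((hy.continuous.tendsto n).comp hfoot))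
    rwa [add_zero] at h0

theorem isEmbedding_vx : IsEmbedding (vx : N → ArcSpace G) := by
  refine ⟨isInducing_iff_nhds.2 fun n => ?_, fun m n h => congrArg foot h⟩
  have hfoot : foot ∘ (vx : N → ArcSpace G) = id := rfl
  have hheight : height ∘ (vx : N → ArcSpace G) = fun _ => 0 := rfl
  rw [nhds_vx, comap_inf, comap_comap, comap_comap, hfoot, hheight, comap_id,
    comap_const_of_mem (fun _ h => mem_of_mem_nhds h), inf_top_eq]

theorem preimage_foot_mem_nhds {n : N} {O : Set N} (hO : O ∈ 𝓝 n) :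
    foot ⁻¹' O ∈ 𝓝 (vx n : ArcSpace G) := by
  rw [nhds_vx]
  exact mem_inf_of_left (preimage_mem_comap hO)

theorem isOpenEmbedding_pt (d : G.Dart) (k : ℕ) :
    IsOpenEmbedding (pt d k : arcInterval k → ArcSpace G) := by
  have hcont : Continuous (pt d k : arcInterval k → ArcSpace G) := by
    classical
    refine continuous_induced_rng.2 (Continuous.prodMk ?_ ?_)
    · exact AffineMap.lineMap_continuous.comp continuous_subtype_val
    · exact (lp.isometry_single (E := fun _ : G.Dart × ℕ => ℝ) (p := 2) (d, k)).continuous.comp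
        (by fun_prop)
  have hinj : Function.Injective (pt d k : arcInterval k → ArcSpace G) := fun s t h => by
    simpa using h
  have hrange : range (pt d k) = {x : ArcSpace G | (realize x).2 (d, k) ≠ 0} := by
    ext x
    refine ⟨?_, fun h => ?_⟩
    · rintro ⟨t, rfl⟩
      exact realize_pt_snd_ne_zero d k t
    · obtain ⟨t, rfl⟩ := exists_eq_pt_of_realize_snd_ne_zero h
      exact mem_range_self t
  refine ⟨(hcont.isClosedEmbedding hinj).isEmbedding, hrange ▸ isOpen_ne.preimage ?_⟩
  exact (lp.evalCLM ℝ (fun _ : G.Dart × ℕ => ℝ) 2 (d, k)).continuous.comp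
    (continuous_snd.comp continuous_realize)

theorem isClopen_range_pt (d : G.Dart) (k : ℕ) : IsClopen (range (pt d k : _ → ArcSpace G)) :=
  ⟨(isCompact_range (isOpenEmbedding_pt d k).continuous).isClosed,
    (isOpenEmbedding_pt d k).isOpen_range⟩

theorem range_pt_mem_nhds (d : G.Dart) (k : ℕ) (t : arcInterval k) :
    range (pt d k) ∈ 𝓝 (pt d k t : ArcSpace G) :=
  (isOpenEmbedding_pt d k).isOpen_range.mem_nhds (mem_range_self t)

theorem isOpen_above {S : Set N} (hS : IsOpen S) (hadj : ∀ u w, G.Adj u w → (u ∈ S ↔ w ∈ S)) :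
    IsOpen (above S : Set (ArcSpace G)) := by
  refine isOpen_iff_mem_nhds.2 fun x hx => ?_
  match x with
  | vx n => exact preimage_foot_mem_nhds (hS.mem_nhds hx)
  | pt d k t =>
    refine mem_of_superset (range_pt_mem_nhds d k t) ?_
    rintro _ ⟨t', rfl⟩
    by_cases h : foot (pt d k t) = foot (pt d k t')
    · exact (congrArg (· ∈ S) h).mp hx
    · exact (hadj _ _ (adj_foot_of_ne h)).1 hx

theorem isClopen_above {S : Set N} (hS : IsClopen S)
    (hadj : ∀ u w, G.Adj u w → (u ∈ S ↔ w ∈ S)) : IsClopen (above S : Set (ArcSpace G)) :=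
  ⟨⟨isOpen_above hS.isClosed.isOpen_compl fun u w h => not_congr (hadj u w h)⟩,
    isOpen_above hS.isOpen hadj⟩

section Map

variable {M : Type*} {H : SimpleGraph M} {φ : H →g G}

theorem isEmbedding_map [MetricSpace M] (hφ : IsEmbedding φ) : IsEmbedding (map φ) := by
  refine ⟨isInducing_iff_nhds.2 fun x => ?_, map_injective hφ.injective⟩
  match x with
  | vx n =>
    have hfoot : foot ∘ map φ = φ ∘ foot := funext (foot_map φ)
    have hheight : height ∘ map φ = height := funext (height_map φ)
    rw [map, nhds_vx, nhds_vx, hφ.isInducing.nhds_eq_comap, comap_inf, comap_comap, comap_comap,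
      comap_comap, hfoot, hheight]
  | pt d k t =>
    have hcomp : map φ ∘ pt d k = pt (φ.mapDart d) k := rfl
    rw [map, ← (isOpenEmbedding_pt d k).map_nhds_eq, ← (isOpenEmbedding_pt _ k).map_nhds_eq,
      ← hcomp, ← Filter.map_map, comap_map (map_injective hφ.injective)]

theorem isClosed_range_map (hφ : IsClosed (range φ)) : IsClosed (range (map φ)) := by
  rw [← isOpen_compl_iff, isOpen_iff_mem_nhds]
  intro x hx
  match x with
  | vx n =>
    have hn : (range φ)ᶜ ∈ 𝓝 n := hφ.isOpen_compl.mem_nhds fun ⟨m, hm⟩ => hx ⟨vx m, congrArg vx hm⟩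
    refine mem_of_superset (preimage_foot_mem_nhds hn) ?_
    rintro _ hz ⟨z, rfl⟩
    exact hz ⟨foot z, (foot_map φ z).symm⟩
  | pt d k t =>
    refine mem_of_superset (range_pt_mem_nhds d k t) ?_
    rintro _ ⟨t', rfl⟩ ⟨_ | ⟨d', k', s⟩, hz⟩
    · cases hz
    · simp only [map, pt.injEq] at hz
      obtain ⟨rfl, rfl, -⟩ := hz
      exact hx ⟨pt d' k' t, rfl⟩

theorem isOpen_range_map (hφ : IsOpen (range φ))
    (hadj : ∀ u w, G.Adj (φ u) w → ∃ u', H.Adj u u' ∧ φ u' = w) : IsOpen (range (map φ)) := by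
  have hmem {u w} (h : G.Adj u w) : u ∈ range φ → w ∈ range φ := by
    rintro ⟨v, rfl⟩
    obtain ⟨v', -, hv'⟩ := hadj v w h
    exact ⟨v', hv'⟩
  suffices h : range (map φ) = above (range φ) from
    h ▸ isOpen_above hφ fun u w h => ⟨hmem h, hmem h.symm⟩
  refine Subset.antisymm ?_ fun x hx => ?_
  · rintro _ ⟨z, rfl⟩
    exact ⟨foot z, (foot_map φ z).symm⟩
  match x with
  | vx n =>
    obtain ⟨m, hm⟩ := hx
    exact ⟨vx m, congrArg vx hm⟩
  | pt d k t =>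
    have hfst : d.fst ∈ range φ := by
      have hx : foot (pt d k t) ∈ range φ := hx
      simp only [foot] at hx
      split_ifs at hx
      exacts [hx, hmem d.adj.symm hx]
    obtain ⟨⟨u, w⟩, h⟩ := d
    obtain ⟨u, rfl⟩ := hfst
    obtain ⟨w, h', rfl⟩ := hadj u w h
    exact ⟨pt ⟨(u, w), h'⟩ k t, rfl⟩

end Map

/-- The left end of the `k`-th arc of an edge. -/
noncomputable def leftEnd (d : G.Dart) (k : ℕ) : ArcSpace G :=
  pt d k ⟨_, le_rfl, by linarith [one_div_add_three_le k]⟩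

/-- The right end of the `k`-th arc of an edge. -/
noncomputable def rightEnd (d : G.Dart) (k : ℕ) : ArcSpace G :=
  pt d k ⟨_, by linarith [one_div_add_three_le k], le_rfl⟩

theorem tendsto_one_div_add_three : Tendsto (fun k : ℕ => 1 / ((k : ℝ) + 3)) atTop (𝓝 0) := by
  refine ((tendsto_const_div_atTop_nhds_zero_nat (1 : ℝ)).comp
    (tendsto_add_atTop_nat 3)).congr fun k => ?_
  simp

theorem tendsto_vx_of_foot {n : N} {f : ℕ → ArcSpace G} (hfoot : ∀ k, foot (f k) = n)
    (hheight : ∀ k, height (f k) ≤ 1 / ((k : ℝ) + 3)) : Tendsto f atTop (𝓝 (vx n)) := by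
  rw [nhds_vx, tendsto_inf, tendsto_comap_iff, tendsto_comap_iff]
  refine ⟨?_, squeeze_zero (fun _ => height_nonneg _) hheight tendsto_one_div_add_three⟩
  rw [show foot ∘ f = fun _ => n from funext hfoot]
  exact tendsto_const_nhds

theorem tendsto_leftEnd (d : G.Dart) : Tendsto (leftEnd d) atTop (𝓝 (vx d.fst)) :=
  tendsto_vx_of_foot (fun k => if_pos (by linarith [one_div_add_three_le k]))
    fun _ => min_le_left _ _

theorem tendsto_rightEnd (d : G.Dart) : Tendsto (rightEnd d) atTop (𝓝 (vx d.snd)) :=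
  tendsto_vx_of_foot (fun k => if_neg (by linarith [one_div_add_three_le k]))
    fun k => (min_le_right _ _).trans_eq (by ring)

theorem linked_vx {u w : N} (h : G.Adj u w) : Linked (vx u : ArcSpace G) (vx w) := by
  refine ⟨fun huw => h.ne (vx.inj huw), fun U hU V hV => ?_⟩
  let d : G.Dart := ⟨(u, w), h⟩
  obtain ⟨k, hk⟩ := eventually_atTop.1
    (((tendsto_leftEnd d).eventually_mem hU).and ((tendsto_rightEnd d).eventually_mem hV))
  have hconn (l) : IsPreconnected (range (pt d l)) := by
    have : PreconnectedSpace (arcInterval l) := Subtype.preconnectedSpace isPreconnected_Icc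
    exact isPreconnected_range (isOpenEmbedding_pt d l).continuous
  have hdisj : Disjoint (range (pt d k)) (range (pt d (k + 1))) := by
    rw [Set.disjoint_left]
    rintro _ ⟨s, rfl⟩ ⟨t, h⟩
    simp at h
  have hleft (l) (hl : k ≤ l) : (range (pt d l) ∩ U).Nonempty :=
    ⟨leftEnd d l, mem_range_self _, (hk l hl).1⟩
  have hright (l) (hl : k ≤ l) : (range (pt d l) ∩ V).Nonempty :=
    ⟨rightEnd d l, mem_range_self _, (hk l hl).2⟩
  exact ⟨_, _, hconn k, hconn (k + 1), hdisj, hleft k le_rfl, hright k le_rfl,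
    hleft (k + 1) k.le_succ, hright (k + 1) k.le_succ⟩

/-- The parameter of a point on its arc, with junk value `0` at the vertices. -/
noncomputable def param : ArcSpace G → ℝ
  | vx _ => 0
  | pt _ _ t => t

theorem not_linked_pt (d : G.Dart) (k : ℕ) (t : arcInterval k) (x : ArcSpace G) :
    ¬ Linked (pt d k t) x := by
  intro h
  obtain ⟨s, rfl⟩ := h.mem_isClopen (isClopen_range_pt d k) (mem_range_self t)
  have hcont : ContinuousOn param (range (pt d k : _ → ArcSpace G)) := by
    rintro _ ⟨t, rfl⟩
    exact ((isOpenEmbedding_pt d k).continuousAt_iff.1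
      continuous_subtype_val.continuousAt).continuousWithinAt
  have hinj : InjOn param (range (pt d k : _ → ArcSpace G)) := by
    rintro _ ⟨t, rfl⟩ _ ⟨t', rfl⟩ htt'
    rw [Subtype.ext htt']
  exact not_linked_of_denselyOrdered _ _
    (h.image_of_isClopen (isClopen_range_pt d k) hcont hinj (mem_range_self t))

theorem exists_adj_of_isPreconnected [TotallyDisconnectedSpace N] {K : Set (ArcSpace G)}
    (hK : IsPreconnected K) {x y : ArcSpace G} (hx : x ∈ K) (hy : y ∈ K) (hne : foot x ≠ foot y) :
    G.Adj (foot x) (foot y) := by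
  by_cases hvx : K ⊆ range vx
  · obtain ⟨m, rfl⟩ := hvx hx
    obtain ⟨n, rfl⟩ := hvx hy
    have hpre : IsPreconnected (vx ⁻¹' K : Set N) := by
      rwa [← isEmbedding_vx.isInducing.isPreconnected_image, image_preimage_eq_of_subset hvx]
    exact absurd (hpre.subsingleton hx hy) hne
  · obtain ⟨_ | ⟨d, k, t⟩, hz, hzvx⟩ := not_subset.1 hvx
    · exact absurd (mem_range_self _) hzvx
    have hsub : K ⊆ range (pt d k) := hK.subset_isClopen (isClopen_range_pt d k) ⟨_, hz, t, rfl⟩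
    obtain ⟨s, rfl⟩ := hsub hx
    obtain ⟨t, rfl⟩ := hsub hy
    exact adj_foot_of_ne hne

theorem exists_adj_of_linked [TotallyDisconnectedSpace N] {x y : ArcSpace G} (h : Linked x y) :
    ∃ m n, x = vx m ∧ y = vx n ∧ ∀ U ∈ 𝓝 m, ∀ V ∈ 𝓝 n, ∃ u ∈ U, ∃ w ∈ V, G.Adj u w := by
  match x, y with
  | pt d k t, y => exact absurd h (not_linked_pt d k t y)
  | x, pt d k t => exact absurd h.symm (not_linked_pt d k t x)
  | vx m, vx n =>
    refine ⟨m, n, rfl, rfl, fun U hU V hV => ?_⟩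
    obtain ⟨U', V', hU', hV', hm, hn, hdisj⟩ := t2_separation fun hmn => h.1 (congrArg vx hmn)
    obtain ⟨K, -, hK, -, -, ⟨x, hxK, hx, hx'⟩, ⟨y, hyK, hy, hy'⟩, -⟩ :=
      h.2 _ (preimage_foot_mem_nhds (inter_mem hU (hU'.mem_nhds hm)))
        _ (preimage_foot_mem_nhds (inter_mem hV (hV'.mem_nhds hn)))
    exact ⟨foot x, hx, foot y, hy,
      exists_adj_of_isPreconnected hK hxK hyK (hdisj.ne_of_mem hx' hy')⟩

end Metric

end ArcSpace

end ArcSpace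

section ClusterSpace

open Set Topology

/-- Data placing each `i : I` at distance `radius i` of a limit point with number `center i`. -/
structure Placement (I : Type*) where
  /-- the number of the limit point -/
  center : I → ℤ
  /-- the distance to the limit point -/
  radius : I → ℝ
  radius_pos (i : I) : 0 < radius i
  radius_le_one (i : I) : radius i ≤ 1

/-- The sites `i : I` together with their limit points. The metric is the largest ultrametric for
which limit points have mutual distance `1` and sites are placed as prescribed; a site of radius
`1` has distance `1` from all other points, whatever its center. -/
inductive ClusterSpace {I : Type*} (P : Placement I)
  | site (i : I)
  | lim (k : ℤ)

namespace ClusterSpace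

variable {I : Type*} {P : Placement I}

/-- The number of the limit point next to a point. -/
def center : ClusterSpace P → ℤ
  | site i => P.center i
  | lim k => k

/-- The distance to the limit point next to a point. -/
def radius : ClusterSpace P → ℝ
  | site i => P.radius i
  | lim _ => 0

theorem radius_nonneg (x : ClusterSpace P) : 0 ≤ radius x := by
  match x with
  | site i => exact (P.radius_pos i).le
  | lim _ => exact le_rfl

theorem radius_le_one (x : ClusterSpace P) : radius x ≤ 1 := by
  match x with
  | site i => exact P.radius_le_one i
  | lim _ => exact zero_le_one

theorem eq_of_radius_eq_zero {x y : ClusterSpace P} (hc : center x = center y)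
    (hx : radius x = 0) (hy : radius y = 0) : x = y := by
  match x, y with
  | site i, _ => exact absurd hx (P.radius_pos i).ne'
  | lim _, site i => exact absurd hy (P.radius_pos i).ne'
  | lim _, lim _ => exact congrArg lim hc

open Classical in
noncomputable instance : Dist (ClusterSpace P) where
  dist x y := if x = y then 0 else if center x = center y then max (radius x) (radius y) else 1

open Classical in
theorem dist_def (x y : ClusterSpace P) : dist x y =
    if x = y then 0 else if center x = center y then max (radius x) (radius y) else 1 := rfl

theorem dist_of_center_eq {x y : ClusterSpace P} (hne : x ≠ y) (h : center x = center y) :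
    dist x y = max (radius x) (radius y) := by
  rw [dist_def, if_neg hne, if_pos h]

theorem dist_of_center_ne {x y : ClusterSpace P} (h : center x ≠ center y) : dist x y = 1 := by
  rw [dist_def, if_neg (ne_of_apply_ne center h), if_neg h]

theorem radius_le_dist {x y : ClusterSpace P} (hne : x ≠ y) : radius x ≤ dist x y := by
  have := radius_le_one x
  grind [dist_def]

instance : IsUltrametricDist (ClusterSpace P) where
  dist_triangle_max x y z := by
    have := radius_nonneg x
    have := radius_le_one x
    have := radius_nonneg z
    have := radius_le_one z
    grind [dist_def]

noncomputable instance : MetricSpace (ClusterSpace P) where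
  dist_self x := if_pos rfl
  dist_comm x y := by grind [dist_def]
  dist_triangle x y z := by
    have hnonneg (x y : ClusterSpace P) : 0 ≤ dist x y := by
      have := radius_nonneg x
      grind [dist_def]
    exact (IsUltrametricDist.dist_triangle_max x y z).trans
      (max_le_add_of_nonneg (hnonneg x y) (hnonneg y z))
  eq_of_dist_eq_zero {x y} h := by
    by_contra hne
    by_cases hc : center x = center y
    · rw [dist_of_center_eq hne hc] at h
      have := radius_nonneg x
      have := radius_nonneg y
      exact hne (eq_of_radius_eq_zero hc (by grind) (by grind))
    · exact one_ne_zero ((dist_of_center_ne hc).symm.trans h)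

theorem dist_lim (x : ClusterSpace P) (k : ℤ) :
    dist x (lim k) = if center x = k then radius x else 1 := by
  by_cases hx : x = lim k
  · simp [hx, center, radius]
  · split_ifs with hc
    · rw [dist_of_center_eq hx hc]
      exact max_eq_left (radius_nonneg x)
    · exact dist_of_center_ne hc

theorem mem_nhds_lim {S : Set (ClusterSpace P)} {k : ℤ} :
    S ∈ 𝓝 (lim k) ↔ ∃ ε > 0, ∀ x, center x = k → radius x < ε → x ∈ S := by
  rw [Metric.mem_nhds_iff]
  constructor
  · rintro ⟨ε, hε, hS⟩
    refine ⟨ε, hε, fun x hc hr => hS ?_⟩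
    rwa [Metric.mem_ball, dist_lim, if_pos hc]
  · rintro ⟨ε, hε, hS⟩
    refine ⟨min ε 1, by positivity, fun x hx => ?_⟩
    rw [Metric.mem_ball, dist_lim] at hx
    split_ifs at hx with hc
    · exact hS x hc (lt_min_iff.1 hx).1
    · exact absurd hx (min_le_right _ _).not_gt

theorem isOpen_singleton_site (i : I) : IsOpen {(site i : ClusterSpace P)} := by
  refine Metric.isOpen_singleton_iff.2 ⟨P.radius i, P.radius_pos i, fun y hy => ?_⟩
  by_contra hne
  exact (radius_le_dist (Ne.symm hne)).not_gt (dist_comm y _ ▸ hy)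

theorem singleton_site_mem_nhds (i : I) : {site i} ∈ 𝓝 (site i : ClusterSpace P) :=
  (isOpen_singleton_site i).mem_nhds rfl

theorem isOpen_of_site_mem {S : Set (ClusterSpace P)} {ε : ℝ} (hε : 0 < ε)
    (h : ∀ i, P.radius i < ε → site i ∈ S) : IsOpen S := by
  refine isOpen_iff_mem_nhds.2 fun x hx => ?_
  match x with
  | site i => exact Filter.mem_of_superset (singleton_site_mem_nhds i) (singleton_subset_iff.2 hx)
  | lim k =>
    refine mem_nhds_lim.2 ⟨ε, hε, fun y hc hr => ?_⟩
    match y with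
    | site i => exact h i hr
    | lim _ => exact (congrArg (lim · ∈ S) hc).mpr hx

theorem isClosed_of_lim_mem {S : Set (ClusterSpace P)} (h : ∀ k, lim k ∈ S) : IsClosed S := by
  refine ⟨isOpen_iff_mem_nhds.2 fun x hx => ?_⟩
  match x with
  | site i => exact Filter.mem_of_superset (singleton_site_mem_nhds i) (singleton_subset_iff.2 hx)
  | lim k => exact absurd (h k) hx

section Map

variable {g : I → I} {σ : ℤ → ℤ}

/-- The map which acts by `g` on the sites and by `σ` on the limit points. -/
def map (g : I → I) (σ : ℤ → ℤ) : ClusterSpace P → ClusterSpace P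
  | site i => site (g i)
  | lim k => lim (σ k)

theorem map_injective (hg : Function.Injective g) (hσ : Function.Injective σ) :
    Function.Injective (map g σ : ClusterSpace P → ClusterSpace P) := by
  intro x y h
  match x, y with
  | site _, site _ => exact congrArg site (hg (site.inj h))
  | site _, lim _ => cases h
  | lim _, site _ => cases h
  | lim _, lim _ => exact congrArg lim (hσ (lim.inj h))

theorem isEmbedding_map (hg : Function.Injective g) (hσ : Function.Injective σ)
    (hcenter : ∀ i, P.radius i < 1 → P.center (g i) = σ (P.center i))
    (hle : ∀ i, P.radius (g i) ≤ P.radius i) (hge : ∀ i, P.radius i ≤ 2 * P.radius (g i)) :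
    IsEmbedding (map g σ : ClusterSpace P → ClusterSpace P) := by
  have hc (x : ClusterSpace P) (hx : radius x < 1) : center (map g σ x) = σ (center x) := by
    match x with
    | site i => exact hcenter i hx
    | lim _ => rfl
  have hr (x : ClusterSpace P) :
      radius (map g σ x) ≤ radius x ∧ radius x ≤ 2 * radius (map g σ x) := by
    match x with
    | site i => exact ⟨hle i, hge i⟩
    | lim _ => simp [map, radius]
  have hdist (x y : ClusterSpace P) : dist (map g σ x) (map g σ y) ≤ dist x y ∧
      dist x y ≤ 2 * dist (map g σ x) (map g σ y) := by
    have hxy := (map_injective (P := P) hg hσ).eq_iff (a := x) (b := y)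
    have hσxy := hσ.eq_iff (a := center x) (b := center y)
    have := radius_le_one x
    have := radius_le_one y
    have := hc x
    have := hc y
    have := hr x
    have := hr y
    clear hc hr hcenter hle hge
    simp only [dist_def, hxy]
    grind
  have hlip : LipschitzWith 1 (map g σ : ClusterSpace P → ClusterSpace P) :=
    .of_dist_le_mul fun x y => by simpa using (hdist x y).1
  have hanti : AntilipschitzWith 2 (map g σ : ClusterSpace P → ClusterSpace P) :=
    .of_le_mul_dist fun x y => by simpa using (hdist x y).2
  exact (hanti.isUniformEmbedding hlip.uniformContinuous).isEmbedding

theorem isClosed_range_map (hσ : Function.Surjective σ) :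
    IsClosed (range (map g σ : ClusterSpace P → ClusterSpace P)) :=
  isClosed_of_lim_mem fun k => let ⟨k', hk'⟩ := hσ k; ⟨lim k', congrArg lim hk'⟩

theorem isOpen_range_map {ε : ℝ} (hε : 0 < ε) (h : ∀ i, P.radius i < ε → i ∈ range g) :
    IsOpen (range (map g σ : ClusterSpace P → ClusterSpace P)) :=
  isOpen_of_site_mem hε fun i hi => let ⟨i', hi'⟩ := h i hi; ⟨site i', congrArg site hi'⟩

end Map

end ClusterSpace

end ClusterSpace

section RepresentingSpace

open Set Topology Vertex

/-- The labels of the components of the representing space: rows, numbered by `ℕ` over each `c : J`,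
and for each `i : J` a lower component and infinitely many upper components. -/
inductive Label (J : Type*)
  | row (c : J) (n : ℕ)
  | lower (i : J)
  | upper (i : J) (n : ℕ)

namespace Label

variable {J : Type*}

/-- The element of `J` encoded in the component with a given label. -/
def index : Label J → J
  | row c _ => c
  | lower i => i
  | upper i _ => i

/-- The type of component encoded in the component with a given label. -/
def kind : Label J → Fin 3
  | row _ _ => 0
  | lower _ => 1
  | upper _ _ => 2

end Label

open Label

/-- The `m`-th nodes, `m` odd, of the `n`-th rows converge to the limit point number `n - m / 2` as
`n` and `m` tend to infinity; all other vertices are isolated. -/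
noncomputable def placement (J : Type*) : Placement (Label J × Vertex J) where
  center
    | (row _ n, node _ m) => n - (m / 2 : ℕ)
    | _ => 0
  radius
    | (row _ n, node _ m) => if Odd m then (1 / 2) ^ (n + 1) else 1
    | _ => 1
  radius_pos i := by
    split
    · split_ifs <;> positivity
    · exact one_pos
  radius_le_one i := by
    split
    · split_ifs
      · exact pow_le_one₀ (by norm_num) (by norm_num)
      · exact le_rfl
    · exact le_rfl

variable {J : Type*}

theorem placement_radius_row {c j : J} {n m : ℕ} (hm : Odd m) :
    (placement J).radius (row c n, node j m) = (1 / 2) ^ (n + 1) :=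
  if_pos hm

theorem exists_row_node_of_radius_lt {i : Label J × Vertex J}
    (hi : (placement J).radius i < 1) : ∃ c n j m, i = (row c n, node j m) ∧ Odd m := by
  match i with
  | (row c n, node j m) =>
    refine ⟨c, n, j, m, rfl, ?_⟩
    by_contra hm
    exact hi.ne (if_neg hm)
  | (row _ _, tag _) | (row _ _, anchor _) | (.lower _, _) | (.upper _ _, _) =>
    exact absurd hi (lt_irrefl 1)

theorem exists_row_node_of_radius_lt_half {i : Label J × Vertex J}
    (hi : (placement J).radius i < 1 / 2) : ∃ c n j m, i = (row c (n + 1), node j m) := by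
  obtain ⟨c, n, j, m, rfl, hm⟩ := exists_row_node_of_radius_lt (hi.trans one_half_lt_one)
  rw [placement_radius_row hm] at hi
  match n with
  | 0 => exact absurd hi (by norm_num)
  | n + 1 => exact ⟨c, n, j, m, rfl⟩

theorem exists_le_placement_radius (l : Label J) :
    ∃ ε > 0, ∀ u : Vertex J, ε ≤ (placement J).radius (l, u) := by
  by_cases h : ∃ u, (placement J).radius (l, u) < 1
  · obtain ⟨u, hu⟩ := h
    obtain ⟨c, n, j, m, hi, -⟩ := exists_row_node_of_radius_lt hu
    obtain rfl : l = row c n := congrArg Prod.fst hi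
    refine ⟨(1 / 2) ^ (n + 1), by positivity, fun v => ?_⟩
    by_cases hv : (placement J).radius (row c n, v) < 1
    · obtain ⟨c', n', j', m', hi', hm'⟩ := exists_row_node_of_radius_lt hv
      obtain ⟨⟨rfl, rfl⟩, rfl⟩ : (c = c' ∧ n = n') ∧ v = node j' m' := by simpa using hi'
      exact (placement_radius_row hm').ge
    · exact (pow_le_one₀ (by norm_num) (by norm_num)).trans (not_lt.1 hv)
  · exact ⟨1, one_pos, fun u => not_lt.1 fun hu => h ⟨u, hu⟩⟩

/-- Injective maps of labels which respect the components and shift the rows. -/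
structure LabelShift (J : Type*) where
  /-- the map of labels -/
  toFun : Label J → Label J
  injective : Function.Injective toFun
  map_row (c : J) (n : ℕ) : toFun (row c n) = row c (n + 1)
  index_eq (l : Label J) : (toFun l).index = l.index
  kind_le (l : Label J) : l.kind ≤ (toFun l).kind

open Classical in
theorem LabelShift.radius_map (ψ : LabelShift J) (i : Label J × Vertex J) :
    (placement J).radius (Prod.map ψ.toFun id i) =
      if (placement J).radius i < 1 then (placement J).radius i / 2 else 1 := by
  obtain ⟨l, u⟩ := i
  split_ifs with hi
  · obtain ⟨c, n, j, m, h, hm⟩ := exists_row_node_of_radius_lt hi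
    obtain ⟨rfl, rfl⟩ : l = row c n ∧ u = node j m := Prod.ext_iff.1 h
    rw [Prod.map_apply, ψ.map_row, id, placement_radius_row hm, placement_radius_row hm]
    ring
  · refine ((placement J).radius_le_one _).antisymm (not_lt.1 fun hψ => hi ?_)
    obtain ⟨c, n, j, m, h, hm⟩ := exists_row_node_of_radius_lt hψ
    obtain ⟨hl, rfl⟩ : ψ.toFun l = row c n ∧ u = node j m := Prod.ext_iff.1 h
    match l with
    | row c n =>
      rw [placement_radius_row hm]
      exact pow_lt_one₀ (by norm_num) (by norm_num) n.succ_ne_zero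
    | .lower i => exact absurd (ψ.kind_le (.lower i)) (by simp [hl, kind])
    | .upper i k => exact absurd (ψ.kind_le (.upper i k)) (by simp [hl, kind])

variable [LinearOrder J]

open ClusterSpace in
/-- The disjoint union of the rigid graphs given by the index and the kind of the labels. -/
def componentGraph (J : Type*) [LinearOrder J] : SimpleGraph (ClusterSpace (placement J)) where
  Adj x y := ∃ (l : Label J) (u w : Vertex J),
    (rigidGraph l.index l.kind).Adj u w ∧ x = site (l, u) ∧ y = site (l, w)
  symm := ⟨fun _ _ ⟨l, u, w, h, hx, hy⟩ => ⟨l, w, u, h.symm, hy, hx⟩⟩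
  loopless := ⟨fun _ ⟨_, _, _, h, hx, hy⟩ => h.ne (by simpa using hx.symm.trans hy)⟩

/-- The space which represents all pairs of quasiorders on sets which embed in `J`. -/
abbrev RepresentingSpace (J : Type*) [LinearOrder J] : Type _ := ArcSpace (componentGraph J)

namespace RepresentingSpace

open ClusterSpace ArcSpace

/-- The vertex `u` of the component with label `l`. -/
def vertex (l : Label J) (u : Vertex J) : RepresentingSpace J := vx (site (l, u))

/-- The limit point with number `k`. -/
def limit (k : ℤ) : RepresentingSpace J := vx (lim k)

theorem vertex_inj {l l' : Label J} {u u' : Vertex J} :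
    vertex l u = vertex l' u' ↔ l = l' ∧ u = u' := by
  simp [vertex]

theorem linked_vertex {l : Label J} {u w : Vertex J}
    (h : (rigidGraph l.index l.kind).Adj u w) : Linked (vertex l u) (vertex l w) :=
  linked_vx ⟨l, u, w, h, rfl, rfl⟩

theorem exists_vertex_of_linked {x y : RepresentingSpace J} (h : Linked x y) :
    ∃ l u w, (rigidGraph l.index l.kind).Adj u w ∧ x = vertex l u ∧ y = vertex l w := by
  have hlim_site (k : ℤ) (i : Label J × Vertex J) : ¬ ∀ U ∈ 𝓝 (lim k), ∀ V ∈ 𝓝 (site i),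
      ∃ u ∈ U, ∃ w ∈ V, (componentGraph J).Adj u w := by
    intro hadj
    obtain ⟨ε, hε, hle⟩ := exists_le_placement_radius i.1
    obtain ⟨_, hu, _, rfl, l, u, w, -, rfl, hi⟩ := hadj {x | radius x < ε}
      (mem_nhds_lim.2 ⟨ε, hε, fun _ _ hx => hx⟩) _ (singleton_site_mem_nhds i)
    obtain rfl : i = (l, w) := site.inj hi
    exact (hle u).not_gt hu
  obtain ⟨m, n, rfl, rfl, hadj⟩ := exists_adj_of_linked h
  match m, n with
  | site i, site i' =>
    obtain ⟨_, rfl, _, rfl, l, u, w, huw, hi, hi'⟩ :=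
      hadj _ (singleton_site_mem_nhds i) _ (singleton_site_mem_nhds i')
    exact ⟨l, u, w, huw, congrArg vx hi, congrArg vx hi'⟩
  | lim k, site i => exact absurd hadj (hlim_site k i)
  | site i, lim k =>
    refine absurd (fun U hU V hV => ?_) (hlim_site k i)
    obtain ⟨u, hu, w, hw, huw⟩ := hadj V hV U hU
    exact ⟨w, hw, u, hu, huw.symm⟩
  | lim k, lim k' =>
    have hU (k : ℤ) : {x | radius x < 1} ∈ 𝓝 (lim k : ClusterSpace (placement J)) :=
      mem_nhds_lim.2 ⟨1, one_pos, fun _ _ hx => hx⟩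
    obtain ⟨_, hu, _, hw, l, u, w, huw, rfl, rfl⟩ := hadj _ (hU k) _ (hU k')
    obtain ⟨c, n, j, m, hi, hm⟩ := exists_row_node_of_radius_lt hu
    obtain ⟨c', n', j', m', hi', hm'⟩ := exists_row_node_of_radius_lt hw
    obtain ⟨-, rfl⟩ := Prod.ext_iff.1 hi
    obtain ⟨-, rfl⟩ := Prod.ext_iff.1 hi'
    exact absurd huw (rigidGraph.not_adj_of_odd hm hm')

section Rigidity

variable {D : Set (RepresentingSpace J)} {F : RepresentingSpace J → RepresentingSpace J}

theorem vertex_mem_of_vertex_mem (hD : IsClopen D) {l : Label J} {u : Vertex J}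
    (h : vertex l u ∈ D) (w : Vertex J) : vertex l w ∈ D := by
  obtain ⟨p⟩ := (rigidGraph.connected l.index l.kind).preconnected u w
  induction p with
  | nil => exact h
  | cons hadj _ ih => exact ih ((linked_vertex hadj).mem_isClopen hD h)

/-- Linkedness makes `F` send the component of `l` to a single component, by a homomorphism of
rigid graphs. -/
theorem exists_label_of_injOn [WellFoundedLT J] [OrderTop J] (hD : IsClopen D)
    (hF : ContinuousOn F D) (hinj : InjOn F D) {l : Label J} {u₀ : Vertex J}
    (h : vertex l u₀ ∈ D) : ∃ l' : Label J, l.index = l'.index ∧ l.kind ≤ l'.kind ∧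
      ∀ j m, F (vertex l (node j m)) = vertex l' (node j m) := by
  have hmem := vertex_mem_of_vertex_mem hD h
  have hlinked {u w} (hadj : (rigidGraph l.index l.kind).Adj u w) :
      Linked (F (vertex l u)) (F (vertex l w)) :=
    (linked_vertex hadj).image_of_isClopen hD hF hinj (hmem u)
  have : Nontrivial (Vertex J) := ⟨⟨anchor 0, anchor 1, by simp⟩⟩
  have hconn := (rigidGraph.connected l.index l.kind).preconnected
  obtain ⟨l', hl'⟩ : ∃ l', ∃ u', F (vertex l u₀) = vertex l' u' := by
    obtain ⟨w, hw⟩ := hconn.exists_adj_of_nontrivial u₀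
    obtain ⟨l', u', -, -, hu', -⟩ := exists_vertex_of_linked (hlinked hw)
    exact ⟨l', u', hu'⟩
  have hvertex (w : Vertex J) : ∃ w', F (vertex l w) = vertex l' w' := by
    obtain ⟨p⟩ := hconn u₀ w
    clear h
    induction p with
    | nil => exact hl'
    | cons hadj _ ih =>
      obtain ⟨u', hu'⟩ := hl'
      obtain ⟨l'', v, w', -, hv, hw'⟩ := exists_vertex_of_linked (hlinked hadj)
      obtain ⟨rfl, -⟩ := vertex_inj.1 (hu'.symm.trans hv)
      exact ih ⟨w', hw'⟩
  choose f hf using hvertex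
  have hadj {u w} (huw : (rigidGraph l.index l.kind).Adj u w) :
      (rigidGraph l'.index l'.kind).Adj (f u) (f w) := by
    obtain ⟨l'', v, w', hadj, hv, hw'⟩ := exists_vertex_of_linked (hlinked huw)
    obtain ⟨rfl, rfl⟩ := vertex_inj.1 ((hf u).symm.trans hv)
    obtain ⟨-, rfl⟩ := vertex_inj.1 ((hf w).symm.trans hw')
    exact hadj
  have hfinj : Function.Injective f := fun u w huw =>
    (vertex_inj.1 (hinj (hmem u) (hmem w) (by rw [hf, hf, huw]))).2
  obtain ⟨hindex, hkind, hnode⟩ :=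
    rigidGraph.eq_of_injective_hom (f := ⟨f, hadj⟩) hfinj
  exact ⟨l', hindex, hkind, fun j m => (hf _).trans (congrArg (vertex l') (hnode j m))⟩

end Rigidity
section Part

variable {A : Set (Label J)}

/-- The union of the components with labels in `A`, together with the limit points. -/
def part (A : Set (Label J)) : Set (RepresentingSpace J) :=
  above {x | ∀ l u, x = site (l, u) → l ∈ A}

theorem vertex_mem_part {l : Label J} {u : Vertex J} : vertex l u ∈ part A ↔ l ∈ A := by
  simp [vertex, part, above, foot]

theorem limit_mem_part (k : ℤ) : limit k ∈ part A := by
  simp [limit, part, above, foot]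

theorem isClopen_part (hA : ∀ c n, row c (n + 1) ∈ A) : IsClopen (part A) := by
  refine isClopen_above ⟨isClosed_of_lim_mem fun k l u h => (nomatch h),
    isOpen_of_site_mem one_half_pos fun i hi => ?_⟩ fun x y ⟨l, u, w, _, hx, hy⟩ => ?_
  · intro l u hlu
    obtain ⟨c, n, j, m, rfl⟩ := exists_row_node_of_radius_lt_half hi
    obtain ⟨rfl, -⟩ := Prod.ext_iff.1 (site.inj hlu)
    exact hA c n
  · simp [hx, hy]

end Part

end RepresentingSpace

namespace LabelShift

open RepresentingSpace ClusterSpace ArcSpace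

variable (ψ : LabelShift J)

theorem adj_map {l : Label J} {u w : Vertex J} (h : (rigidGraph l.index l.kind).Adj u w) :
    (rigidGraph (ψ.toFun l).index (ψ.toFun l).kind).Adj u w := by
  rw [ψ.index_eq]
  exact rigidGraph.mono (ψ.kind_le l) h

/-- The shift as a graph homomorphism, which also shifts the limit points. -/
noncomputable def hom : componentGraph J →g componentGraph J where
  toFun := ClusterSpace.map (Prod.map ψ.toFun id) (· + 1)
  map_rel' := fun ⟨l, u, w, h, hx, hy⟩ =>
    ⟨ψ.toFun l, u, w, ψ.adj_map h, congrArg _ hx, congrArg _ hy⟩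

theorem isEmbedding_hom : IsEmbedding ψ.hom := by
  refine isEmbedding_map (ψ.injective.prodMap Function.injective_id) (add_left_injective 1)
    (fun i hi => ?_) (fun i => ?_) (fun i => ?_)
  · obtain ⟨c, n, j, m, rfl, -⟩ := exists_row_node_of_radius_lt hi
    rw [Prod.map_apply, ψ.map_row]
    simp only [placement, id]
    push_cast
    ring
  all_goals
    rw [ψ.radius_map]
    grind [(placement J).radius_le_one i, (placement J).radius_pos i]

/-- The map of the representing space induced by a shift. -/
noncomputable def map : RepresentingSpace J → RepresentingSpace J := ArcSpace.map ψ.hom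

theorem isClosedEmbedding_map : IsClosedEmbedding ψ.map :=
  ⟨ArcSpace.isEmbedding_map ψ.isEmbedding_hom, ArcSpace.isClosed_range_map
    (ClusterSpace.isClosed_range_map (add_right_surjective 1))⟩

theorem isOpenEmbedding_map (hkind : ∀ l, (ψ.toFun l).kind = l.kind) :
    IsOpenEmbedding ψ.map := by
  refine ⟨ArcSpace.isEmbedding_map ψ.isEmbedding_hom, ArcSpace.isOpen_range_map
    (ClusterSpace.isOpen_range_map one_half_pos fun i hi => ?_) fun x y ⟨l, u, w, h, hx, hy⟩ => ?_⟩
  · obtain ⟨c, n, j, m, rfl⟩ := exists_row_node_of_radius_lt_half hi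
    exact ⟨(row c n, node j m), by rw [Prod.map_apply, ψ.map_row, id]⟩
  · match x with
    | lim _ => cases hx
    | site (l', u') =>
      obtain ⟨rfl, rfl⟩ : ψ.toFun l' = l ∧ u' = u := Prod.ext_iff.1 (site.inj hx)
      rw [ψ.index_eq, hkind] at h
      exact ⟨site (l', w), ⟨l', u', w, h, rfl, rfl⟩, hy.symm⟩

theorem mapsTo_map {A A' : Set (Label J)} (h : MapsTo ψ.toFun A A') :
    MapsTo ψ.map (part A) (part A') := by
  intro x hx l u hl
  rw [map, foot_map] at hl
  cases hfoot : foot x with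
  | lim k => rw [hfoot] at hl; cases hl
  | site i =>
    rw [hfoot] at hl
    obtain ⟨rfl, -⟩ := Prod.ext_iff.1 (site.inj hl)
    exact h (hx i.1 i.2 hfoot)

end LabelShift
namespace RepresentingSpace

section Homeomorphism

open ArcSpace

variable [WellFoundedLT J] [OrderTop J] {e : OpenPartialHomeomorph (RepresentingSpace J)
  (RepresentingSpace J)} {A A' : Set (Label J)}

theorem exists_label_of_openPartialHomeomorph (hs : IsClopen e.source) (ht : IsClopen e.target)
    {l : Label J} {u₀ : Vertex J} (h : vertex l u₀ ∈ e.source) : ∃ l' : Label J,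
    l.index = l'.index ∧ l.kind = l'.kind ∧
      ∀ j m, e (vertex l (node j m)) = vertex l' (node j m) := by
  obtain ⟨l', hindex, hkind, hl'⟩ := exists_label_of_injOn hs e.continuousOn e.injOn h
  have hmem : vertex l (node ⊤ 0) ∈ e.source := vertex_mem_of_vertex_mem hs h _
  obtain ⟨l'', -, hkind', hl''⟩ := exists_label_of_injOn ht e.symm.continuousOn e.symm.injOn
    (hl' ⊤ 0 ▸ e.map_source hmem)
  obtain ⟨rfl, -⟩ := vertex_inj.1 ((e.left_inv hmem).symm.trans
    ((congrArg e.symm (hl' ⊤ 0)).trans (hl'' ⊤ 0)))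
  exact ⟨l', hindex, hkind.antisymm hkind', hl'⟩

theorem exists_row_of_openPartialHomeomorph (hs : e.source = part A) (ht : e.target = part A')
    (hA : ∀ c n, row c (n + 1) ∈ A) (hA' : ∀ c n, row c (n + 1) ∈ A') {c : J} {n : ℕ}
    (h : row c n ∈ A) :
    ∃ n', row c n' ∈ A' ∧
      ∀ j m, e (vertex (row c n) (node j m)) = vertex (row c n') (node j m) := by
  have hmem : vertex (row c n) (node ⊤ 0) ∈ e.source := hs ▸ vertex_mem_part.2 h
  obtain ⟨l', hindex, hkind, hl'⟩ := exists_label_of_openPartialHomeomorph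
    (hs ▸ isClopen_part hA) (ht ▸ isClopen_part hA') hmem
  match l' with
  | row c' n' =>
    obtain rfl : c = c' := hindex
    refine ⟨n', ?_, hl'⟩
    rw [← vertex_mem_part (u := node ⊤ 0), ← ht, ← hl']
    exact e.map_source hmem
  | .lower _ | .upper _ _ => exact absurd hkind (by simp [kind])

theorem exists_bijOn_of_openPartialHomeomorph (hs : e.source = part A) (ht : e.target = part A')
    (hA : ∀ c n, row c (n + 1) ∈ A) (hA' : ∀ c n, row c (n + 1) ∈ A') :
    ∃ σ : J → ℕ → ℕ, (∀ c, BijOn (σ c) {n | row c n ∈ A} {n | row c n ∈ A'}) ∧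
      ∀ c n, row c n ∈ A →
        ∀ j m, e (vertex (row c n) (node j m)) = vertex (row c (σ c n)) (node j m) := by
  choose! σ hσA hσ using
    fun c n => exists_row_of_openPartialHomeomorph hs ht hA hA' (c := c) (n := n)
  choose! τ hτA hτ using
    fun c n => exists_row_of_openPartialHomeomorph (e := e.symm) ht hs hA' hA (c := c) (n := n)
  refine ⟨σ, fun c => InvOn.bijOn (f' := τ c) ⟨fun n hn => ?_, fun n hn => ?_⟩ (hσA c) (hτA c), hσ⟩
  · have hmem : vertex (row c n) (node ⊤ 0) ∈ e.source := hs ▸ vertex_mem_part.2 hn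
    have := e.left_inv hmem
    rw [hσ c n hn, hτ c _ (hσA c n hn), vertex_inj] at this
    simpa using this
  · have hmem : vertex (row c n) (node ⊤ 0) ∈ e.target := ht ▸ vertex_mem_part.2 hn
    have := e.right_inv hmem
    rw [hτ c n hn, hσ c _ (hτA c n hn), vertex_inj] at this
    simpa using this

end Homeomorphism

section Limit

open ClusterSpace ArcSpace Filter

theorem eventually_vertex_mem {S : Set (RepresentingSpace J)} (hS : S ∈ 𝓝 (limit 0)) :
    ∀ᶠ n in atTop, ∀ c j, vertex (row c n) (node j (2 * n + 1)) ∈ S := by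
  obtain ⟨ε, hε, hmem⟩ := mem_nhds_lim.1 (isEmbedding_vx.continuous.continuousAt hS)
  have htendsto : Tendsto (fun n : ℕ => (1 / 2 : ℝ) ^ (n + 1)) atTop (𝓝 0) :=
    (tendsto_pow_atTop_nhds_zero_of_lt_one (by norm_num) (by norm_num)).comp
      (tendsto_add_atTop_nat 1)
  filter_upwards [htendsto.eventually_lt_const hε] with n hn c j
  refine hmem (site (row c n, node j (2 * n + 1))) ?_ ?_
  · simp only [ClusterSpace.center, placement]
    omega
  · exact (placement_radius_row ⟨n, rfl⟩).trans_lt hn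

/-- The image of the limit point number `0` is a limit point, whose number is the common
translation. -/
theorem exists_eventually_eq_add [Nonempty J] {F : RepresentingSpace J → RepresentingSpace J}
    {σ : J → ℕ → ℕ} (hF : ContinuousAt F (limit 0))
    (hσ : ∀ᶠ n in atTop, ∀ c j m,
      F (vertex (row c n) (node j m)) = vertex (row c (σ c n)) (node j m)) :
    ∃ i : ℤ, ∀ c, ∀ᶠ n in atTop, (σ c n : ℤ) = n + i := by
  obtain ⟨c₀⟩ := ‹Nonempty J›
  have hmem {W : Set (RepresentingSpace J)} (hW : W ∈ 𝓝 (F (limit 0))) (c : J) :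
      ∀ᶠ n in atTop, vertex (row c (σ c n)) (node c₀ (2 * n + 1)) ∈ W := by
    filter_upwards [eventually_vertex_mem (hF hW), hσ] with n hn hσn
    exact hσn c c₀ (2 * n + 1) ▸ hn c c₀
  cases hlim : F (limit 0) with
  | pt d k t =>
    obtain ⟨n, t', ht'⟩ := (hmem (hlim ▸ range_pt_mem_nhds d k t) c₀).exists
    cases ht'
  | vx x =>
    cases x with
    | site s =>
      obtain ⟨N, hN⟩ := eventually_atTop.1 (hmem
        (hlim ▸ preimage_foot_mem_nhds (singleton_site_mem_nhds s)) c₀)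
      have h := (hN N le_rfl).trans (hN (N + 1) N.le_succ).symm
      simp [vertex, foot] at h
    | lim i =>
      have hnhds : {x | center x = i ∧ radius x < 1} ∈ 𝓝 (lim i : ClusterSpace (placement J)) :=
        mem_nhds_lim.2 ⟨1, one_pos, fun _ hc hr => ⟨hc, hr⟩⟩
      refine ⟨i, fun c => ?_⟩
      filter_upwards [hmem (hlim ▸ preimage_foot_mem_nhds hnhds) c] with n hn
      have hcenter := hn.1
      simp only [vertex, foot, ClusterSpace.center, placement] at hcenter
      omega

end Limit

end RepresentingSpace

open Filter in
theorem translation_eq_sub_of_bijOn {σ : ℕ → ℕ} {d d' : ℕ} {i : ℤ}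
    (hσ : BijOn σ (Ici d) (Ici d')) (h : ∀ᶠ n in atTop, (σ n : ℤ) = n + i) : i = d' - d := by
  obtain ⟨N, hN⟩ := eventually_atTop.1 (h.and (eventually_ge_atTop d))
  have hd : d ≤ N := (hN N le_rfl).2
  have hd' : d' ≤ σ N := hσ.mapsTo hd
  have htail : σ '' Ici N = Ici (σ N) := by
    ext k
    constructor
    · rintro ⟨n, hn, rfl⟩
      have := (hN n hn).1
      have := (hN N le_rfl).1
      grind
    · intro hk
      refine ⟨k - σ N + N, Nat.le_add_left _ _, ?_⟩
      have := (hN (k - σ N + N) (Nat.le_add_left _ _)).1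
      have := (hN N le_rfl).1
      grind
  have hinit : σ '' Ico d N = Ico d' (σ N) := by
    rw [← Ici_sdiff_Ici, hσ.injOn.image_sdiff_subset (Ici_subset_Ici.2 hd), hσ.image_eq, htail,
      Ici_sdiff_Ici]
  have hcard := congrArg ncard hinit
  rw [(hσ.injOn.mono Ico_subset_Ici_self).ncard_image] at hcard
  simp only [ncard_Ico_nat] at hcard
  have := (hN N le_rfl).1
  omega

end RepresentingSpace
section Subspaces

open Set Topology

variable {X Y : Type*} [TopologicalSpace X] [TopologicalSpace Y] {F : X → Y} {D : Set X}
  {D' : Set Y}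

theorem homeoToClosedSubset_of_isClosedEmbedding (hF : IsClosedEmbedding F) (hD : IsClosed D)
    (h : MapsTo F D D') : HomeoToClosedSubset D D' := by
  refine ⟨range (h.restrict F D D'), ?_, ⟨(hF.isEmbedding.restrict h).toHomeomorph⟩⟩
  rw [h.range_restrict]
  exact (hF.isClosedMap D hD).preimage continuous_subtype_val

theorem homeoToClopenSubset_of_isOpenEmbedding (hF : IsClosedEmbedding F) (hF' : IsOpenEmbedding F)
    (hD : IsClopen D) (h : MapsTo F D D') : HomeoToClopenSubset D D' := by
  refine ⟨range (h.restrict F D D'), ?_, ⟨(hF.isEmbedding.restrict h).toHomeomorph⟩⟩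
  rw [h.range_restrict]
  exact IsClopen.preimage ⟨hF.isClosedMap D hD.isClosed, hF'.isOpenMap D hD.isOpen⟩
    continuous_subtype_val

theorem exists_openPartialHomeomorph_of_homeomorph (hD : IsOpen D) (hD' : IsOpen D')
    (hne : D.Nonempty) (h : D ≃ₜ D') :
    ∃ e : OpenPartialHomeomorph X Y, e.source = D ∧ e.target = D' := by
  let i := (⟨D, hD⟩ : TopologicalSpace.Opens X).openPartialHomeomorphSubtypeCoe hne.to_subtype
  let i' := (⟨D', hD'⟩ : TopologicalSpace.Opens Y).openPartialHomeomorphSubtypeCoe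
    (hne.to_subtype.map h)
  refine ⟨(i.symm.trans' h.toOpenPartialHomeomorph rfl).trans' i' rfl, ?_, ?_⟩
  · exact TopologicalSpace.Opens.openPartialHomeomorphSubtypeCoe_target _ hne.to_subtype
  · exact TopologicalSpace.Opens.openPartialHomeomorphSubtypeCoe_target _ (hne.to_subtype.map h)

end Subspaces

section Encoding

open Set Topology Label Vertex RepresentingSpace

variable {J Q : Type*} (le1 le2 : Q → Q → Prop) (e : Q ↪ J)

/-- The labels of the components which encode `q`: the lower components encode `le1`, the upper
components encode `le2`, and the missing row encodes `q` itself. -/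
def labelSet (q : Q) : Set (Label J) :=
  {l | match l with
    | row c n => c = e q → n ≠ 0
    | .lower i => ∃ p, e p = i ∧ le1 p q
    | .upper i _ => ∃ p, e p = i ∧ le2 p q}

variable {le1 le2 e} {q q' : Q}

theorem row_mem_labelSet {c : J} {n : ℕ} :
    row c n ∈ labelSet le1 le2 e q ↔ c = e q → n ≠ 0 := Iff.rfl

theorem lower_mem_labelSet {p : Q} : .lower (e p) ∈ labelSet le1 le2 e q ↔ le1 p q := by
  simp [labelSet]

theorem upper_mem_labelSet {p : Q} {n : ℕ} :
    .upper (e p) n ∈ labelSet le1 le2 e q ↔ le2 p q := by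
  simp [labelSet]

variable [LinearOrder J]

theorem isClopen_part_labelSet : IsClopen (part (labelSet le1 le2 e q)) :=
  isClopen_part fun _ n _ => n.succ_ne_zero

/-- The shift which moves the rows only. -/
def rowShift (J : Type*) : LabelShift J where
  toFun
    | row c n => row c (n + 1)
    | l => l
  injective := by rintro (_ | _ | _) (_ | _ | _) h <;> simp_all
  map_row _ _ := rfl
  index_eq := by rintro (_ | _ | _) <;> rfl
  kind_le := by rintro (_ | _ | _) <;> rfl

/-- The shift which moves the lower components to upper ones. -/
def raisingShift (J : Type*) : LabelShift J where
  toFun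
    | row c n => row c (n + 1)
    | .lower i => .upper i 0
    | .upper i n => .upper i (n + 1)
  injective := by rintro (_ | _ | _) (_ | _ | _) h <;> simp_all
  map_row _ _ := rfl
  index_eq := by rintro (_ | _ | _) <;> rfl
  kind_le := by rintro (_ | _ | _) <;> simp [kind]

theorem homeoToClopenSubset_part (htrans1 : ∀ a b c, le1 a b → le1 b c → le1 a c)
    (htrans2 : ∀ a b c, le2 a b → le2 b c → le2 a c) (h1 : le1 q q') (h2 : le2 q q') :
    HomeoToClopenSubset (part (labelSet le1 le2 e q)) (part (labelSet le1 le2 e q')) := by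
  refine homeoToClopenSubset_of_isOpenEmbedding (rowShift J).isClosedEmbedding_map
    ((rowShift J).isOpenEmbedding_map ?_) isClopen_part_labelSet ((rowShift J).mapsTo_map ?_)
  · rintro (_ | _ | _) <;> rfl
  · rintro (⟨c, n⟩ | i | ⟨i, n⟩) hl
    · exact fun _ => n.succ_ne_zero
    · obtain ⟨p, hp, hpq⟩ := hl
      exact ⟨p, hp, htrans1 _ _ _ hpq h1⟩
    · obtain ⟨p, hp, hpq⟩ := hl
      exact ⟨p, hp, htrans2 _ _ _ hpq h2⟩

theorem homeoToClosedSubset_part (htrans : ∀ a b c, le2 a b → le2 b c → le2 a c)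
    (hle : ∀ a b, le1 a b → le2 a b) (h : le2 q q') :
    HomeoToClosedSubset (part (labelSet le1 le2 e q)) (part (labelSet le1 le2 e q')) := by
  refine homeoToClosedSubset_of_isClosedEmbedding (raisingShift J).isClosedEmbedding_map
    isClopen_part_labelSet.isClosed ((raisingShift J).mapsTo_map ?_)
  rintro (⟨c, n⟩ | i | ⟨i, n⟩) hl
  · exact fun _ => n.succ_ne_zero
  · obtain ⟨p, hp, hpq⟩ := hl
    exact ⟨p, hp, htrans _ _ _ (hle _ _ hpq) h⟩
  · obtain ⟨p, hp, hpq⟩ := hl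
    exact ⟨p, hp, htrans _ _ _ hpq h⟩

variable [WellFoundedLT J] [OrderTop J]

theorem le_of_existsInjCont_part (hrefl : le2 q q)
    (h : ExistsInjCont (part (labelSet le1 le2 e q)) (part (labelSet le1 le2 e q'))) :
    le2 q q' := by
  obtain ⟨f, hf, hinj⟩ := h
  let F : RepresentingSpace J → RepresentingSpace J :=
    Function.extend Subtype.val (Subtype.val ∘ f) id
  have hF (x : part (labelSet le1 le2 e q)) : F x = f x :=
    Subtype.val_injective.extend_apply (Subtype.val ∘ f) id x
  have hFc : ContinuousOn F (part (labelSet le1 le2 e q)) :=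
    continuousOn_iff_continuous_domRestrict.2
      ((continuous_subtype_val.comp hf).congr fun x => (hF x).symm)
  have hFinj : InjOn F (part (labelSet le1 le2 e q)) := fun x hx y hy hxy =>
    congrArg Subtype.val (hinj (Subtype.ext ((hF ⟨x, hx⟩).symm.trans (hxy.trans (hF ⟨y, hy⟩)))))
  have hmem : vertex (.upper (e q) 0) (node ⊤ 0) ∈ part (labelSet le1 le2 e q) :=
    vertex_mem_part.2 (upper_mem_labelSet.2 hrefl)
  obtain ⟨l', hindex, hkind, hl'⟩ := exists_label_of_injOn isClopen_part_labelSet hFc hFinj hmem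
  have hmem' : l' ∈ labelSet le1 le2 e q' :=
    vertex_mem_part.1 (hl' ⊤ 0 ▸ hF ⟨_, hmem⟩ ▸ (f ⟨_, hmem⟩).2)
  match l' with
  | .upper i n =>
    obtain rfl : e q = i := hindex
    exact upper_mem_labelSet.1 hmem'
  | row _ _ | .lower _ => exact absurd hkind (by simp [kind])

theorem le_of_homeoToClopenSubset_part (hrefl : le1 q q)
    (h : HomeoToClopenSubset (part (labelSet le1 le2 e q)) (part (labelSet le1 le2 e q'))) :
    le1 q q' := by
  obtain ⟨t, ht, ⟨φ⟩⟩ := h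
  have hclopen : IsClopen (Subtype.val '' t) :=
    ⟨isClopen_part_labelSet.isClosed.isClosedMap_subtype_val t ht.isClosed,
      isClopen_part_labelSet.isOpen.isOpenMap_subtype_val t ht.isOpen⟩
  obtain ⟨f, hs, hft⟩ := exists_openPartialHomeomorph_of_homeomorph
    isClopen_part_labelSet.isOpen hclopen.isOpen ⟨_, limit_mem_part 0⟩
    (φ.trans (IsEmbedding.subtypeVal.homeomorphImage t))
  have hmem : vertex (.lower (e q)) (node ⊤ 0) ∈ f.source :=
    hs ▸ vertex_mem_part.2 (lower_mem_labelSet.2 hrefl)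
  obtain ⟨l', hindex, hkind, hl'⟩ := exists_label_of_openPartialHomeomorph
    (hs ▸ isClopen_part_labelSet) (hft ▸ hclopen) hmem
  have hmem' : l' ∈ labelSet le1 le2 e q' := by
    have himage := hft ▸ f.map_source hmem
    rw [hl'] at himage
    exact vertex_mem_part.1 (Subtype.coe_image_subset _ _ himage)
  match l' with
  | .lower i =>
    obtain rfl : e q = i := hindex
    exact lower_mem_labelSet.1 hmem'
  | row _ _ | .upper _ _ => exact absurd hkind (by simp [kind])

/-- A homeomorphism would translate all rows by the same number, which is `-1` over `e q` and `1`
over `e q'`. -/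
theorem isEmpty_homeomorph_part (hne : q ≠ q') :
    IsEmpty (part (labelSet le1 le2 e q) ≃ₜ part (labelSet le1 le2 e q')) := by
  refine ⟨fun φ => ?_⟩
  obtain ⟨f, hs, ht⟩ := exists_openPartialHomeomorph_of_homeomorph isClopen_part_labelSet.isOpen
    isClopen_part_labelSet.isOpen ⟨_, limit_mem_part 0⟩ φ
  obtain ⟨σ, hbij, hσ⟩ := exists_bijOn_of_openPartialHomeomorph hs ht
    (fun _ n _ => n.succ_ne_zero) (fun _ n _ => n.succ_ne_zero)
  obtain ⟨i, hi⟩ := exists_eventually_eq_add (f.continuousAt (hs ▸ limit_mem_part 0))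
    (Filter.eventually_atTop.2 ⟨1, fun n hn c => hσ c n fun _ => Nat.ne_of_gt hn⟩)
  have hIci {p : Q} : {n | row (e p) n ∈ labelSet le1 le2 e p} = Ici 1 := by
    ext n
    simp [row_mem_labelSet, Nat.one_le_iff_ne_zero]
  have hIci' {p p' : Q} (h : p ≠ p') : {n | row (e p) n ∈ labelSet le1 le2 e p'} = Ici 0 := by
    ext n
    simp [row_mem_labelSet, h]
  have hq := hbij (e q)
  have hq' := hbij (e q')
  rw [hIci, hIci' hne] at hq
  rw [hIci, hIci' hne.symm] at hq'
  have := translation_eq_sub_of_bijOn hq (hi _)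
  have := translation_eq_sub_of_bijOn hq' (hi _)
  omega

end Encoding

theorem representsPairs_representingSpace (J : Type u) [LinearOrder J] [WellFoundedLT J]
    [OrderTop J] : RepresentsPairs #J (RepresentingSpace J) := by
  intro Q le1 le2 hQ hrefl1 htrans1 hrefl2 htrans2 hle
  obtain ⟨e⟩ := hQ
  exact ⟨fun q => RepresentingSpace.part (labelSet le1 le2 e q), fun _ => isClopen_part_labelSet,
    fun _ _ => isEmpty_homeomorph_part,
    fun q q' => ⟨fun h => homeoToClopenSubset_part htrans1 htrans2 h (hle q q' h),
      le_of_homeoToClopenSubset_part (hrefl1 q)⟩,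
    fun _ _ => homeoToClosedSubset_part htrans2 hle,
    fun q _ => mt (le_of_existsInjCont_part (hrefl2 q))⟩

section Cardinality

open Vertex

theorem mk_label_le (J : Type u) : #(Label J) ≤ max #J ℵ₀ := by
  let f : (J × ℕ) ⊕ J ⊕ (J × ℕ) → Label J :=
    Sum.elim (fun x => .row x.1 x.2) (Sum.elim .lower fun x => .upper x.1 x.2)
  have hf : Function.Surjective f
    | .row c n => ⟨.inl (c, n), rfl⟩
    | .lower i => ⟨.inr (.inl i), rfl⟩
    | .upper i n => ⟨.inr (.inr (i, n)), rfl⟩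
  refine (mk_le_of_surjective hf).trans ?_
  simp only [mk_sum, mk_prod, lift_id, mk_nat, lift_aleph0, lift_uzero]
  have hinf : ℵ₀ ≤ max #J ℵ₀ := le_max_right _ _
  have hJ : #J ≤ max #J ℵ₀ := le_max_left _ _
  have hmul : #J * ℵ₀ ≤ max #J ℵ₀ := mul_le_of_le hinf hJ hinf
  exact add_le_of_le hinf hmul (add_le_of_le hinf hJ hmul)

theorem mk_vertex_le (J : Type u) : #(Vertex J) ≤ max #J ℵ₀ := by
  let f : (J × ℕ) ⊕ Tag ⊕ Fin 11 → Vertex J :=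
    Sum.elim (fun x => node x.1 x.2) (Sum.elim tag anchor)
  have hf : Function.Surjective f
    | node j m => ⟨.inl (j, m), rfl⟩
    | tag t => ⟨.inr (.inl t), rfl⟩
    | anchor a => ⟨.inr (.inr a), rfl⟩
  refine (mk_le_of_surjective hf).trans ?_
  rw [mk_sum (J × ℕ), mk_prod, mk_nat, lift_uzero, lift_uzero, lift_aleph0]
  have hinf : ℵ₀ ≤ max #J ℵ₀ := le_max_right _ _
  have hfin : lift.{u} #(Tag ⊕ Fin 11) ≤ ℵ₀ := lift_le_aleph0.2 mk_le_aleph0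
  exact add_le_of_le hinf (mul_le_of_le hinf (le_max_left _ _) hinf) (hfin.trans hinf)

theorem ClusterSpace.mk_le {I : Type u} (P : Placement I) : #(ClusterSpace P) ≤ max #I ℵ₀ := by
  let f : I ⊕ ℤ → ClusterSpace P := Sum.elim site lim
  have hf : Function.Surjective f
    | site i => ⟨.inl i, rfl⟩
    | lim k => ⟨.inr k, rfl⟩
  refine (mk_le_of_surjective hf).trans ?_
  simp only [mk_sum, mk_int, lift_aleph0, lift_uzero]
  exact add_le_of_le (le_max_right _ _) (le_max_left _ _) (le_max_right _ _)

theorem ArcSpace.mk_le {N : Type u} (G : SimpleGraph N) : #(ArcSpace G) ≤ max #N 𝔠 := by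
  let f : ArcSpace G → N ⊕ (N × N) × ℕ × ℝ
    | vx n => .inl n
    | pt d k t => .inr (d.toProd, k, t)
  have hf : Function.Injective f := by
    rintro (n | ⟨d, k, t⟩) (n' | ⟨d', k', t'⟩) h
    · exact congrArg vx (Sum.inl.inj h)
    · cases h
    · cases h
    · obtain ⟨hd, rfl, ht⟩ : d.toProd = d'.toProd ∧ k = k' ∧ (t : ℝ) = t' := by simpa [f] using h
      obtain rfl := SimpleGraph.Dart.toProd_injective hd
      obtain rfl := Subtype.ext ht
      rfl
  refine (mk_le_of_injective hf).trans ?_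
  simp only [mk_sum, mk_prod, lift_id, mk_nat, mk_real, lift_aleph0, lift_continuum, lift_mul,
    lift_uzero]
  have hN : #N ≤ max #N 𝔠 := le_max_left _ _
  have hinf : ℵ₀ ≤ max #N 𝔠 := aleph0_le_continuum.trans (le_max_right _ _)
  refine add_le_of_le hinf hN (mul_le_of_le hinf (mul_le_of_le hinf hN hN) ?_)
  rw [aleph0_mul_continuum]
  exact le_max_right _ _

theorem mk_representingSpace {J : Type u} [LinearOrder J] (hJ : 𝔠 ≤ #J) :
    #(RepresentingSpace J) = #J := by
  have hinf : ℵ₀ ≤ #J := aleph0_le_continuum.trans hJ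
  have hmax : max #J ℵ₀ = #J := max_eq_left hinf
  refine le_antisymm ?_ (mk_le_of_injective
    (f := fun j => RepresentingSpace.vertex (.lower j) (anchor 0)) ?_)
  · refine (ArcSpace.mk_le _).trans (max_le ((ClusterSpace.mk_le _).trans (max_le ?_ hinf)) hJ)
    rw [mk_prod, lift_id, lift_id]
    exact mul_le_of_le hinf ((mk_label_le J).trans_eq hmax) ((mk_vertex_le J).trans_eq hmax)
  · intro i j h
    simpa [RepresentingSpace.vertex_inj] using h

end Cardinality

theorem statement0 (α : Cardinal.{u}) (hα : Cardinal.continuum ≤ α) :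
    ∃ (X : Type u) (tX : TopologicalSpace X),
      @TopologicalSpace.MetrizableSpace X tX ∧ #X = α ∧
      @RepresentsPairs α X tX := by
  have hJ : #(WithTop α.ord.ToType) = α := by
    have hα₀ : ℵ₀ ≤ α := aleph0_le_continuum.trans hα
    exact mk_option.trans (by rw [mk_ord_toType, add_one_eq hα₀])
  refine ⟨RepresentingSpace (WithTop α.ord.ToType), inferInstance, inferInstance, ?_, ?_⟩
  · rw [mk_representingSpace (hα.trans_eq hJ.symm), hJ]
  · exact hJ.subst (motive := fun κ => RepresentsPairs κ _)
      (representsPairs_representingSpace (WithTop α.ord.ToType))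
end

section
/- For every cardinal number α ≥ 𝔠, there exists a metrizable topological space X with |X| = α such that: for every set Q with |Q| ≤ α and every pair of quasiorders ≤₁, ≤₂ on Q satisfying (q ≤₁ q' implies q ≤₂ q') for all q, q' ∈ Q, there exists a family {X(q) : q ∈ Q} of clopen subsets of X, pairwise non-homeomorphic and each having no isolated points, such that: (1) q ≤₁ q' if and only if X(q) is homeomorphic to a clopen subset of X(q'); (2) if q ≤₂ q', then X(q) is homeomorphic to a closed subset of X(q'); and (3) if ¬(q ≤₂ q'), then there exists no injective continuous map from X(q) into X(q'). -/
universe u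

open Cardinal

/-- The representation property of the space `X` for a pair of quasiorders, by clopen
subspaces without isolated points. -/
def RepresentsPairsNoIsolated (α : Cardinal.{u}) (X : Type u) [TopologicalSpace X] : Prop :=
  ∀ (Q : Type u) (le1 le2 : Q → Q → Prop), #Q ≤ α →
    (∀ q, le1 q q) → (∀ a b c, le1 a b → le1 b c → le1 a c) →
    (∀ q, le2 q q) → (∀ a b c, le2 a b → le2 b c → le2 a c) →
    (∀ q q', le1 q q' → le2 q q') →
    ∃ Xq : Q → Set X,
      (∀ q, IsClopen (Xq q)) ∧
      (∀ q q', q ≠ q' → IsEmpty ((Xq q) ≃ₜ (Xq q'))) ∧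
      (∀ q (x : (Xq q)), ¬ IsOpen ({x} : Set (Xq q))) ∧
      (∀ q q', le1 q q' ↔ HomeoToClopenSubset (Xq q) (Xq q')) ∧
      (∀ q q', le2 q q' → HomeoToClosedSubset (Xq q) (Xq q')) ∧
      (∀ q q', ¬ le2 q q' → ¬ ExistsInjCont (Xq q) (Xq q'))

/-!
A diagonalization of length `𝔠` gives a dense set `B` in the plane that meets every uncountable
closed set in `𝔠` points and admits no injective continuous motion of an open subset. Copies of `B`
are glued at marked points along an incidence structure on a successor ordinal. As the copies are
rigid and stay connected when countably many points are removed, a continuous injection between two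
glued spaces is a map of the incidence structures. The edges encode the order and, at every point
of cofinality `ω`, a chosen ladder. The induced map `γ` of the ordinal is strictly monotone and
preserves the ladders, so it is the identity: if `x < γ x`, the supremum `l` of the orbit of `x` is
fixed by `γ`, hence so are the terms of the ladder at `l`, but a fixed point between `x` and `l`
would bound the orbit. One constant edge distinguishes the glued spaces `Y i` from each other, and
there are no continuous injections among them but the identities.

Over each `Y i` a gadget consists of copies of `Y i`, called blocks, indexed by `ℕ`, and limit
points indexed by `ℤ`, the `j`-th being the limit of the points of index `n + 2 * j` in block `n`.
Moving all blocks two places further is a clopen self-embedding that avoids block `0`. However, the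
gadget is not homeomorphic to the complement of block `0`: a homeomorphism would give a bijection
of `ℕ` that is eventually the translation by an odd number.

The set representing `q` consists of the gadgets over all `p ≤₁ q`, without block `0` of the one
over `q`, and of the products with the Cantor space of the gadgets over all `p ≤₂ q`. These
products contain closed copies of the blocks, but no open ones.
-/

namespace RigidRepresentation

open Set Topology Filter

section Diagonalization

variable {Ω : Type u} {κ : Cardinal.{u}}

/-- A relation is `κ`-rich if it relates two distinct points outside any given set of fewer than
`κ` points: the requirement on `R` under which a transfinite recursion of length `κ` can pick
fresh `R`-related pairs at every stage. -/
def IsRich (κ : Cardinal.{u}) (R : Ω → Ω → Prop) : Prop :=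
  ∀ S : Set Ω, #S < κ → ∃ z ∉ S, ∃ w ∉ S, z ≠ w ∧ R z w

lemma IsRich.of_injective {ι : Type u} {a b : ι → Ω} {R : Ω → Ω → Prop} (hκ : ℵ₀ ≤ κ)
    (hι : κ ≤ #ι) (ha : Function.Injective a) (hb : Function.Injective b)
    (hab : ∀ i, a i ≠ b i) (hR : ∀ i, R (a i) (b i)) : IsRich κ R := fun S hS ↦ by
  have hbad : #(a ⁻¹' S ∪ b ⁻¹' S : Set ι) < #(univ : Set ι) := calc
    _ ≤ #(a ⁻¹' S) + #(b ⁻¹' S) := mk_union_le _ _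
    _ ≤ #S + #S := add_le_add (mk_preimage_of_injective a S ha) (mk_preimage_of_injective b S hb)
    _ < κ := add_lt_of_lt hκ hS hS
    _ ≤ #(univ : Set ι) := by rwa [mk_univ]
  obtain ⟨i, -, hi⟩ := sdiff_nonempty_of_mk_lt_mk hbad
  rw [mem_union, not_or] at hi
  exact ⟨a i, hi.1, b i, hi.2, hab i, hR i⟩

lemma exists_fresh_pairs {T : Type u} {R : T → Ω → Ω → Prop} (hκ : ℵ₀ ≤ κ) (hT : #T ≤ κ)
    (hR : ∀ t, IsRich κ (R t)) :
    ∃ z w : T → Ω, (∀ t, R t (z t) (w t)) ∧ Function.Injective z ∧ ∀ s t, z s ≠ w t := by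
  obtain ⟨_, _, hord⟩ := exists_ord_eq_type_lt T
  rcases isEmpty_or_nonempty T with _ | ⟨⟨t₀⟩⟩
  · exact ⟨isEmptyElim, isEmptyElim, isEmptyElim, Function.injective_of_subsingleton _, isEmptyElim⟩
  have : Nonempty Ω := let ⟨z, _⟩ := hR t₀ ∅ (by simpa using aleph0_pos.trans_le hκ); ⟨z⟩
  choose! z hz w hw hzw hRzw using hR
  let used (t : T) (prev : ∀ s, s < t → Ω × Ω) : Set Ω :=
    (range fun s : Iio t ↦ (prev s s.2).1) ∪ range fun s : Iio t ↦ (prev s s.2).2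
  let q : T → Ω × Ω := wellFounded_lt.fix fun t prev ↦ (z t (used t prev), w t (used t prev))
  have hq (t) : q t = (z t (used t fun s _ ↦ q s), w t (used t fun s _ ↦ q s)) :=
    wellFounded_lt.fix_eq _ t
  have hused (t) : #(used t fun s _ ↦ q s) < κ := by
    have hIio : #(Iio t) < κ := (mk_Iio_lt t hord).trans_le hT
    exact (mk_union_le _ _).trans_lt
      (add_lt_of_lt hκ (mk_range_le.trans_lt hIio) (mk_range_le.trans_lt hIio))
  have hlt {s t} (hst : s < t) : (q s).1 ≠ (q t).1 ∧ (q s).1 ≠ (q t).2 ∧ (q t).1 ≠ (q s).2 := by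
    rw [hq t]
    exact ⟨fun h ↦ hz t _ (hused t) (.inl ⟨⟨s, hst⟩, h⟩),
      fun h ↦ hw t _ (hused t) (.inl ⟨⟨s, hst⟩, h⟩),
      fun h ↦ hz t _ (hused t) (.inr ⟨⟨s, hst⟩, h.symm⟩)⟩
  refine ⟨fun t ↦ (q t).1, fun t ↦ (q t).2, fun t ↦ ?_, ?_, fun s t ↦ ?_⟩
  · simpa only [hq t] using hRzw t _ (hused t)
  · exact Function.injective_iff_pairwise_ne.2 fun s t hst ↦
      hst.lt_or_gt.elim (fun h ↦ (hlt h).1) fun h ↦ (hlt h).1.symm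
  · rcases lt_trichotomy s t with h | rfl | h
    · exact (hlt h).2.1
    · simpa only [hq s] using hzw s _ (hused s)
    · exact (hlt h).2.2

theorem exists_diagonal_set {𝓡 : Set (Ω → Ω → Prop)} (hκ : ℵ₀ ≤ κ) (h𝓡 : #𝓡 ≤ κ)
    (hrich : ∀ R ∈ 𝓡, IsRich κ R) :
    ∃ B : Set Ω, ∀ R ∈ 𝓡, κ ≤ #{z | z ∈ B ∧ ∃ w ∉ B, R z w} := by
  obtain ⟨z, w, hR, hz, hzw⟩ := exists_fresh_pairs (T := 𝓡 × κ.out) (R := fun t ↦ t.1.1) hκ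
    (by simpa using mul_le_of_le hκ h𝓡 le_rfl) fun t ↦ hrich t.1 t.1.2
  refine ⟨range z, fun R hRmem ↦ ?_⟩
  let code (a : κ.out) : {x | x ∈ range z ∧ ∃ y ∉ range z, R x y} :=
    ⟨z (⟨R, hRmem⟩, a), mem_range_self _, w (⟨R, hRmem⟩, a), fun ⟨s, hs⟩ ↦ hzw s _ hs,
      hR (⟨R, hRmem⟩, a)⟩
  have hcode : Function.Injective code := fun a b hab ↦
    (Prod.mk.inj (hz (congrArg Subtype.val hab))).2
  exact κ.mk_out.ge.trans (mk_le_of_injective hcode)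

end Diagonalization

section ThickSets

lemma continuum_le_mk_of_range_subset {X : Type u} {f : (ℕ → Bool) → X}
    (hf : Function.Injective f) {K : Set X} (hK : range f ⊆ K) : 𝔠 ≤ #K := by
  have hrange : #(range f) = 𝔠 := by simpa using mk_range_eq_of_injective hf
  exact hrange.ge.trans (mk_le_mk_of_subset hK)

variable {X : Type u} [TopologicalSpace X]

lemma mk_setOf_isOpen_le [SecondCountableTopology X] : #{O : Set X | IsOpen O} ≤ 𝔠 := by
  have hsub : {O : Set X | IsOpen O} ⊆ sUnion '' 𝒫 TopologicalSpace.countableBasis X := fun O hO ↦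
    let ⟨S, hS, h⟩ := (TopologicalSpace.isBasis_countableBasis X).open_eq_sUnion hO
    ⟨S, hS, h.symm⟩
  calc #{O : Set X | IsOpen O} ≤ #(𝒫 TopologicalSpace.countableBasis X) :=
        (mk_le_mk_of_subset hsub).trans mk_image_le
    _ ≤ 𝔠 := by
        rw [mk_powerset, ← two_power_aleph0]
        exact power_le_power_left two_ne_zero
          (le_aleph0_iff_set_countable.2 (TopologicalSpace.countable_countableBasis X))

lemma mk_setOf_isClosed_le [SecondCountableTopology X] : #{K : Set X | IsClosed K} ≤ 𝔠 :=
  (mk_le_of_injective (f := fun K : {K : Set X | IsClosed K} ↦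
    (⟨K.1ᶜ, K.2.isOpen_compl⟩ : {O : Set X | IsOpen O})) fun _ _ h ↦
      Subtype.ext (compl_injective (congrArg Subtype.val h))).trans mk_setOf_isOpen_le

lemma mk_le_continuum [T1Space X] [SecondCountableTopology X] : #X ≤ 𝔠 :=
  (mk_le_of_injective (f := fun x : X ↦ (⟨{x}, isClosed_singleton⟩ : {K : Set X | IsClosed K}))
    fun _ _ h ↦ singleton_injective (congrArg Subtype.val h)).trans mk_setOf_isClosed_le

/-- `B` is thick if it meets every uncountable closed set in at least `𝔠` points, as one half of
a Bernstein set does. -/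
def IsThick (B : Set X) : Prop :=
  ∀ K : Set X, IsClosed K → ¬ K.Countable → 𝔠 ≤ #(K ∩ B : Set X)

lemma continuum_le_mk_of_isClosed [PolishSpace X] {K : Set X} (hK : IsClosed K)
    (hunc : ¬ K.Countable) : 𝔠 ≤ #K :=
  let ⟨_, hfK, _, hf⟩ := hK.exists_nat_bool_injection_of_not_countable hunc
  continuum_le_mk_of_range_subset hf hfK

lemma not_countable_closure_of_isOpen [PolishSpace X] [PerfectSpace X] {O : Set X}
    (hO : IsOpen O) (hne : O.Nonempty) : ¬ (closure O).Countable := fun hcount ↦ by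
  let _ := TopologicalSpace.upgradeIsCompletelyMetrizable X
  obtain ⟨f, hf, -, hinj⟩ := (hO.perfect_closure).exists_nat_bool_injection hne.closure
  exact absurd ((continuum_le_mk_of_range_subset hinj hf).trans
    (le_aleph0_iff_set_countable.2 hcount)) aleph0_lt_continuum.not_ge

lemma isRich_mem_of_isClosed [PolishSpace X] {K : Set X} (hK : IsClosed K)
    (hunc : ¬ K.Countable) : IsRich 𝔠 fun z _ : X ↦ z ∈ K := fun S hS ↦ by
  have hKc := continuum_le_mk_of_isClosed hK hunc
  obtain ⟨z, hzK, hzS⟩ := sdiff_nonempty_of_mk_lt_mk (hS.trans_le hKc)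
  have hlt : #(insert z S : Set X) < #K :=
    (mk_insert_le.trans_lt (add_lt_of_lt aleph0_le_continuum hS
      (one_lt_aleph0.trans aleph0_lt_continuum))).trans_le hKc
  obtain ⟨w, -, hw⟩ := sdiff_nonempty_of_mk_lt_mk hlt
  rw [mem_insert_iff, not_or] at hw
  exact ⟨z, hzS, w, hw.2, Ne.symm hw.1, hzK⟩

lemma IsThick.inter_diff_nonempty {B D K : Set X} (hB : IsThick B) (hD : D.Countable)
    (hK : IsClosed K) (hunc : ¬ K.Countable) : ((K ∩ B) \ D).Nonempty :=
  sdiff_nonempty_of_mk_lt_mk ((le_aleph0_iff_set_countable.2 hD).trans_lt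
    (aleph0_lt_continuum.trans_le (hB K hK hunc)))

variable [PolishSpace X] [PerfectSpace X] {B : Set X}

lemma IsThick.continuum_le_mk_inter (hB : IsThick B) {O : Set X} (hO : IsOpen O)
    (hne : O.Nonempty) : 𝔠 ≤ #(B ∩ O : Set X) := by
  obtain ⟨x, hx⟩ := hne
  obtain ⟨K, hxK, hKcl, hKO⟩ := exists_mem_nhds_isClosed_subset (hO.mem_nhds hx)
  obtain ⟨U, hUK, hU, hxU⟩ := mem_nhds_iff.1 hxK
  calc 𝔠 ≤ #(closure U ∩ B : Set X) :=
        hB _ isClosed_closure (not_countable_closure_of_isOpen hU ⟨x, hxU⟩)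
    _ ≤ #(B ∩ O : Set X) :=
        mk_le_mk_of_subset fun y hy ↦ ⟨hy.2, hKO (closure_minimal hUK hKcl hy.1)⟩

lemma IsThick.dense (hB : IsThick B) : Dense B := dense_iff_inter_open.2 fun O hO hne ↦ by
  rw [inter_comm, ← nonempty_coe_sort, ← mk_ne_zero_iff]
  exact (continuum_pos.trans_le (hB.continuum_le_mk_inter hO hne)).ne'

lemma IsThick.continuum_le_mk_of_isOpen (hB : IsThick B) {W : Set B} (hW : IsOpen W)
    (hne : W.Nonempty) : 𝔠 ≤ #W := by
  obtain ⟨O, hO, rfl⟩ := isOpen_induced_iff.1 hW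
  rw [← mk_image_eq Subtype.val_injective, Subtype.image_preimage_coe]
  exact hB.continuum_le_mk_inter hO (hne.image _ |>.mono (image_preimage_subset _ _))

lemma IsThick.dense_compl (hB : IsThick B) {D : Set B} (hD : D.Countable) : Dense Dᶜ :=
  dense_iff_inter_open.2 fun _ hW hne ↦
    sdiff_nonempty_of_mk_lt_mk ((le_aleph0_iff_set_countable.2 hD).trans_lt
      (aleph0_lt_continuum.trans_le (hB.continuum_le_mk_of_isOpen hW hne)))

lemma IsThick.isPreconnected_compl (hB : IsThick B)
    (hX : ∀ C : Set X, C.Countable → IsPreconnected Cᶜ) {D : Set B} (hD : D.Countable) :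
    IsPreconnected Dᶜ := by
  rintro _ _ ⟨U, hU, rfl⟩ ⟨V, hV, rfl⟩ hUV ⟨a, -, haU⟩ ⟨b, -, hbV⟩
  have hcount : (U ∪ V)ᶜ.Countable := by
    by_contra hunc
    obtain ⟨y, ⟨hyUV, hyB⟩, hyD⟩ := hB.inter_diff_nonempty (hD.image (↑))
      (hU.union hV).isClosed_compl hunc
    exact hyUV (hUV (a := ⟨y, hyB⟩) fun hy ↦ hyD ⟨_, hy, rfl⟩)
  have hUVne : (U ∩ V).Nonempty := by
    have := hX _ hcount U V hU hV
    rw [compl_compl] at this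
    exact (this subset_rfl ⟨a, .inl haU, haU⟩ ⟨b, .inr hbV, hbV⟩).mono inter_subset_right
  obtain ⟨x, hxB, hx⟩ := hB.dense.inter_open_nonempty _ (hU.inter hV) hUVne |>.imp fun _ h ↦ h.symm
  rw [inter_comm, ← preimage_inter]
  exact (hB.dense_compl hD).inter_open_nonempty _ ((hU.inter hV).preimage continuous_subtype_val)
    ⟨⟨x, hxB⟩, hx⟩

end ThickSets

section Rigidity

variable {X : Type u} [TopologicalSpace X]

/-- The graph of the extension by limits of the partial function `D n ↦ g n`, over the points
of `O` in the closure of the sequence `D`. -/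
def limitRelation (O : Set X) (D g : ℕ → X) (z w : X) : Prop :=
  z ∈ O ∧ (comap D (𝓝 z)).NeBot ∧ Tendsto g (comap D (𝓝 z)) (𝓝 w)

lemma exists_seq_neBot_comap_nhds [SecondCountableTopology X] {W : Set X} (hW : W.Nonempty) :
    ∃ D : ℕ → X, ∀ z ∈ W, (comap D (𝓝 z)).NeBot := by
  have : Nonempty W := hW.to_subtype
  refine ⟨fun n ↦ TopologicalSpace.denseSeq W n, fun z hz ↦ ?_⟩
  refine comap_neBot_iff.2 fun t ht ↦ ?_
  have ht' : Subtype.val ⁻¹' t ∈ 𝓝 (⟨z, hz⟩ : W) := continuous_subtype_val.continuousAt ht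
  obtain ⟨_, ⟨n, rfl⟩, hn⟩ := (TopologicalSpace.denseRange_denseSeq W).inter_nhds_nonempty ht'
  exact ⟨n, hn⟩

lemma exists_isOpen_forall_ne [T2Space X] {O : Set X} {f : X → X} (hO : IsOpen O)
    (hf : ContinuousOn f O) {x : X} (hx : x ∈ O) (hne : f x ≠ x) :
    ∃ W ⊆ O, IsOpen W ∧ x ∈ W ∧ ∀ y ∈ W, y ≠ f y := by
  have hmove : ∀ᶠ y in 𝓝 x, y ≠ f y :=
    (continuousAt_id.prodMk (hf.continuousAt (hO.mem_nhds hx))).eventually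
      (isClosed_diagonal.isOpen_compl.mem_nhds hne.symm)
  obtain ⟨W, hW, hWo, hxW⟩ := eventually_nhds_iff.1 (hmove.and (hO.mem_nhds hx))
  exact ⟨W, fun y hy ↦ (hW y hy).2, hWo, hxW, fun y hy ↦ (hW y hy).1⟩

variable [PolishSpace X]

/-- The requirements met by the diagonalization that yields a thick rigid set: one for every
uncountable closed set, one for every motion of an open set described along a sequence. -/
def requirements (X : Type u) [TopologicalSpace X] : Set (X → X → Prop) :=
  (fun K z _ ↦ z ∈ K) '' {K : Set X | IsClosed K} ∪
    (fun q ↦ limitRelation q.1 q.2.1 q.2.2) ''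
      ({O : Set X | IsOpen O} ×ˢ (univ : Set ((ℕ → X) × (ℕ → X))))

lemma mk_requirements_le : #(requirements X) ≤ 𝔠 := by
  have hseq : #(ℕ → X) ≤ 𝔠 := by
    simpa using power_le_power_right (c := ℵ₀) (mk_le_continuum (X := X))
  have hpairs : #((ℕ → X) × (ℕ → X)) ≤ 𝔠 := by
    rw [← mul_def]
    exact mul_le_of_le aleph0_le_continuum hseq hseq
  refine (mk_union_le _ _).trans (add_le_of_le aleph0_le_continuum ?_ ?_)
  · exact mk_image_le.trans mk_setOf_isClosed_le
  · refine mk_image_le.trans ?_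
    rw [mk_setProd, mk_univ]
    exact mul_le_of_le aleph0_le_continuum mk_setOf_isOpen_le hpairs

lemma IsThick.eqOn_id [PerfectSpace X] {B : Set X} (hthick : IsThick B)
    (hB : ∀ R ∈ requirements X, IsRich 𝔠 R → ∃ z ∈ B, ∃ w ∉ B, R z w) {O : Set B} {f : B → B}
    (hO : IsOpen O) (hf : ContinuousOn f O) (hinj : InjOn f O) : EqOn f id O := by
  refine fun x hx ↦ by_contra fun hne ↦ ?_
  obtain ⟨W, hWO, hW, hxW, hmove⟩ := exists_isOpen_forall_ne hO hf hx hne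
  obtain ⟨O', hO', rfl⟩ := isOpen_induced_iff.1 hW
  obtain ⟨D, hD⟩ := exists_seq_neBot_comap_nhds ⟨x, hxW⟩
  have hcomap (y : B) : comap (fun n ↦ (D n : X)) (𝓝 y) = comap D (𝓝 y) := by
    rw [nhds_subtype_eq_comap, comap_comap]; rfl
  have hlim {y : B} (hy : (y : X) ∈ O') :
      Tendsto (fun n ↦ (f (D n) : X)) (comap D (𝓝 y)) (𝓝 (f y)) :=
    (continuous_subtype_val.continuousAt.comp
      (hf.continuousAt (hO.mem_nhds (hWO hy)))).tendsto.comp tendsto_comap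
  let R := limitRelation O' (fun n ↦ (D n : X)) fun n ↦ (f (D n) : X)
  have hgraph (y : (Subtype.val ⁻¹' O' : Set B)) : R (y : B) (f y) :=
    ⟨y.2, by rw [hcomap]; exact hD y y.2, by rw [hcomap]; exact hlim y.2⟩
  have hrich : IsRich 𝔠 R :=
    .of_injective aleph0_le_continuum (hthick.continuum_le_mk_of_isOpen hW ⟨x, hxW⟩)
      (Subtype.val_injective.comp Subtype.val_injective)
      (Subtype.val_injective.comp (hinj.mono hWO).injective)
      (fun y h ↦ hmove y y.2 (Subtype.ext h)) hgraph
  obtain ⟨z, hzB, w, hwB, hzO', hneBot, hzw⟩ := hB R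
    (.inr ⟨(O', _, _), ⟨hO', mem_univ _⟩, rfl⟩) hrich
  lift z to B using hzB
  rw [hcomap] at hneBot hzw
  rw [tendsto_nhds_unique hzw (hlim hzO')] at hwB
  exact hwB (f z).2

theorem exists_isThick_eqOn_id (X : Type u) [TopologicalSpace X] [PolishSpace X] [PerfectSpace X] :
    ∃ B : Set X, IsThick B ∧ ∀ (O : Set B) (f : B → B), IsOpen O → ContinuousOn f O →
      InjOn f O → EqOn f id O := by
  obtain ⟨B, hB⟩ := exists_diagonal_set (𝓡 := {R ∈ requirements X | IsRich 𝔠 R})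
    aleph0_le_continuum ((mk_le_mk_of_subset (sep_subset _ _)).trans mk_requirements_le)
    fun R hR ↦ hR.2
  have hthick : IsThick B := fun K hK hunc ↦
    (hB _ ⟨.inl ⟨K, hK, rfl⟩, isRich_mem_of_isClosed hK hunc⟩).trans
      (mk_le_mk_of_subset fun z hz ↦ ⟨hz.2.choose_spec.2, hz.1⟩)
  refine ⟨B, hthick, fun O f hO hf hinj ↦ hthick.eqOn_id (fun R hR hrich ↦ ?_) hO hf hinj⟩
  have hne : {z | z ∈ B ∧ ∃ w ∉ B, R z w}.Nonempty := by
    rw [← nonempty_coe_sort, ← mk_ne_zero_iff]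
    exact (continuum_pos.trans_le (hB R ⟨hR, hrich⟩)).ne'
  exact hne

end Rigidity

/-- A space in which countable sets are negligible and whose only continuous injective motions of
open sets are the inclusions. -/
structure StronglyRigid (B : Type*) [TopologicalSpace B] : Prop where
  isPreconnected_compl {D : Set B} : D.Countable → IsPreconnected Dᶜ
  dense_compl {D : Set B} : D.Countable → Dense Dᶜ
  eqOn_id {O : Set B} {f : B → B} : IsOpen O → ContinuousOn f O → InjOn f O → EqOn f id O

theorem exists_stronglyRigid_dense (E : Type u) [NormedAddCommGroup E] [NormedSpace ℝ E]
    [CompleteSpace E] [SecondCountableTopology E] (hE : 1 < Module.rank ℝ E) :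
    ∃ B : Set E, StronglyRigid B ∧ Dense B := by
  have : Nontrivial E := (rank_pos_iff_nontrivial (R := ℝ)).1 (zero_lt_one.trans hE)
  obtain ⟨B, hB, hid⟩ := exists_isThick_eqOn_id E
  exact ⟨B, ⟨hB.isPreconnected_compl fun C hC ↦
    (hC.isConnected_compl_of_one_lt_rank hE).isPreconnected, hB.dense_compl, hid _ _⟩, hB.dense⟩

lemma exists_seq_pairwise_one_le_dist {E : Type*} [NormedAddCommGroup E] [NormedSpace ℝ E]
    [Nontrivial E] {B : Set E} (hB : Dense B) :
    ∃ p : ℕ → B, Pairwise fun i j ↦ 1 ≤ dist (p i) (p j) := by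
  obtain ⟨v, hv⟩ := exists_norm_eq E (zero_le_three (α := ℝ))
  choose p hpB hp using fun n : ℕ ↦ hB.exists_dist_lt ((n : ℝ) • v) one_pos
  refine ⟨fun n ↦ ⟨p n, hpB n⟩, fun i j hij ↦ ?_⟩
  have hfar : 3 ≤ dist ((i : ℝ) • v) ((j : ℝ) • v) := by
    have hij' : (1 : ℝ) ≤ |(i : ℝ) - j| := mod_cast Int.one_le_abs (z := (i : ℤ) - j) (by lia)
    rw [dist_eq_norm, ← sub_smul, norm_smul, hv, Real.norm_eq_abs]
    linarith
  have htri := dist_triangle4 ((i : ℝ) • v) (p i) (p j) ((j : ℝ) • v)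
  have hi := hp i
  have hj := hp j
  rw [dist_comm] at hj
  change 1 ≤ dist (p i) (p j)
  linarith

section Gluing

variable {B V : Type*} [MetricSpace B]

/-- The ambient space in which the copies of `B` indexed by sequences of labels in `V` are glued:
it records the point of `B`, the labels near the marked points, and the copy away from them. -/
abbrev SheetSpace (B V : Type*) : Type _ :=
  B × (ℕ → lp (fun _ : V ↦ ℝ) ⊤) × lp (fun _ : ℕ → V ↦ ℝ) ⊤

open scoped Classical in
/-- The copy of `B` with sequence of labels `e`. The `j`-th marked point `p j` lies on another
copy `e'` exactly when `e j = e' j`, and no other point is shared. -/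
noncomputable def sheet (p : ℕ → B) (e : ℕ → V) (b : B) : SheetSpace B V :=
  (b, fun j ↦ lp.single ⊤ (e j) (max 0 (1 - dist b (p j))),
    lp.single ⊤ e (Metric.infDist b (range p)))

/-- The open set of the points lying on the copy `e` only. -/
def petal (e : ℕ → V) : Set (SheetSpace B V) := {x | x.2.2 e ≠ 0}

/-- An open neighbourhood of the `j`-th marked point of the copies with `j`-th label `a`. -/
def star (j : ℕ) (a : V) : Set (SheetSpace B V) := {x | x.2.1 j a ≠ 0}

/-- The union of the copies of `B` indexed by `E`. -/
def glued (p : ℕ → B) (E : Set (ℕ → V)) : Set (SheetSpace B V) := ⋃ e ∈ E, range (sheet p e)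

/-- The marked points of all the copies of `B`. -/
def nodes (p : ℕ → B) (V : Type*) : Set (SheetSpace B V) :=
  range fun q : (ℕ → V) × ℕ ↦ sheet p q.1 (p q.2)

lemma isOpen_petal (e : ℕ → V) : IsOpen (petal e : Set (SheetSpace B V)) :=
  isOpen_ne_fun ((lp.evalCLM ℝ (fun _ : ℕ → V ↦ ℝ) ⊤ e).continuous.comp
    continuous_snd.snd) continuous_const

lemma isOpen_star (j : ℕ) (a : V) : IsOpen (star j a : Set (SheetSpace B V)) :=
  isOpen_ne_fun ((lp.evalCLM ℝ (fun _ : V ↦ ℝ) ⊤ a).continuous.comp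
    ((continuous_apply j).comp continuous_snd.fst)) continuous_const

variable {p : ℕ → B} {E : Set (ℕ → V)} {e e' : ℕ → V} {b : B} {x : SheetSpace B V} {j : ℕ}

open scoped Classical in
lemma continuous_sheet (p : ℕ → B) (e : ℕ → V) : Continuous (sheet p e) :=
  continuous_id.prodMk <| .prodMk
    (continuous_pi fun j ↦ (lp.isometry_single (e j)).continuous.comp (by fun_prop))
    ((lp.isometry_single e).continuous.comp (Metric.continuous_infDist_pt _))

lemma sheet_injective (p : ℕ → B) (e : ℕ → V) : Function.Injective (sheet p e) :=
  fun _ _ h ↦ congrArg Prod.fst h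

lemma sheet_mem_glued (p : ℕ → B) (he : e ∈ E) (b : B) : sheet p e b ∈ glued p E :=
  mem_biUnion he (mem_range_self b)

lemma mem_glued_iff : x ∈ glued p E ↔ ∃ e ∈ E, x = sheet p e x.1 := by
  simp only [glued, mem_iUnion₂, mem_range, exists_prop]
  refine exists_congr fun e ↦ and_congr_right fun _ ↦ ⟨?_, fun h ↦ ⟨x.1, h.symm⟩⟩
  rintro ⟨b, rfl⟩
  rfl

lemma sheet_mem_star {a : V} : sheet p e b ∈ star j a ↔ e j = a ∧ dist b (p j) < 1 := by
  classical
  rcases eq_or_ne (e j) a with rfl | h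
  · simp [star, sheet]
  · simp [star, sheet, h]

section Separated

variable (hp : Pairwise fun i j ↦ 1 ≤ dist (p i) (p j))
include hp

lemma isClosed_range_of_pairwise_one_le_dist : IsClosed (range p) :=
  Metric.isClosed_of_pairwise_le_dist one_pos <| by
    rintro _ ⟨i, rfl⟩ _ ⟨j, rfl⟩ hij
    exact hp (ne_of_apply_ne p hij)

lemma sheet_mem_petal : sheet p e' b ∈ petal e ↔ e = e' ∧ b ∉ range p := by
  classical
  rw [(isClosed_range_of_pairwise_one_le_dist hp).mem_iff_infDist_zero (range_nonempty p)]
  rcases eq_or_ne e e' with rfl | h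
  · simp [petal, sheet]
  · simp [petal, sheet, h]

lemma sheet_eq_sheet_iff : sheet p e (p j) = sheet p e' (p j) ↔ e j = e' j := by
  refine ⟨fun h ↦ ?_, fun h ↦ Prod.ext rfl (Prod.ext (funext fun i ↦ ?_) ?_)⟩
  · have hmem : sheet p e (p j) ∈ star j (e j) := sheet_mem_star.2 ⟨rfl, by simp⟩
    rw [h, sheet_mem_star] at hmem
    exact hmem.1.symm
  · rcases eq_or_ne i j with rfl | hij
    · simp [sheet, h]
    · simp [sheet, hp hij.symm]
  · simp [sheet, Metric.infDist_zero_of_mem (mem_range_self j)]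

lemma eq_sheet_of_mem_petal (hx : x ∈ glued p E) (hxe : x ∈ petal e) :
    e ∈ E ∧ x = sheet p e x.1 := by
  obtain ⟨e', he', hx'⟩ := mem_glued_iff.1 hx
  rw [hx', sheet_mem_petal hp] at hxe
  obtain rfl := hxe.1
  exact ⟨he', hx'⟩

lemma mem_petal_unique (hx : x ∈ glued p E) (he : x ∈ petal e) (he' : x ∈ petal e') : e = e' := by
  rw [(eq_sheet_of_mem_petal hp hx he').2, sheet_mem_petal hp] at he
  exact he.1

lemma exists_mem_petal (hx : x ∈ glued p E) (hxp : x.1 ∉ range p) : ∃ e, x ∈ petal e := by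
  obtain ⟨e, -, hx⟩ := mem_glued_iff.1 hx
  exact ⟨e, hx ▸ (sheet_mem_petal hp).2 ⟨rfl, hxp⟩⟩

lemma discreteTopology_nodes (V : Type*) : DiscreteTopology (nodes p V) := by
  rw [discreteTopology_iff_isOpen_singleton]
  rintro ⟨_, ⟨e, j⟩, rfl⟩
  refine ⟨star j (e j), isOpen_star j (e j), eq_singleton_iff_unique_mem.2
    ⟨sheet_mem_star.2 ⟨rfl, by simp⟩, ?_⟩⟩
  rintro ⟨_, ⟨e', i⟩, rfl⟩ hmem
  obtain ⟨hlabel, hdist⟩ := sheet_mem_star.1 hmem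
  obtain rfl : i = j := by_contra fun hij ↦ (hp hij).not_gt hdist
  exact Subtype.ext ((sheet_eq_sheet_iff hp).2 hlabel)

variable {φ : B → SheetSpace B V} (hφ : Continuous φ) (hinj : Function.Injective φ)
  (hφE : ∀ b, φ b ∈ glued p E)
include hφ hinj hφE

lemma countable_setOf_fst_mem_range [SecondCountableTopology B] :
    {b | (φ b).1 ∈ range p}.Countable := by
  have hnodes : MapsTo φ {b | (φ b).1 ∈ range p} (nodes p V) := by
    rintro b ⟨j, hj⟩
    obtain ⟨e, -, hb⟩ := mem_glued_iff.1 (hφE b)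
    exact ⟨(e, j), by rw [hb, ← hj]⟩
  have := discreteTopology_nodes hp V
  have : DiscreteTopology {b | (φ b).1 ∈ range p} :=
    .of_continuous_injective (hφ.restrict hnodes) (hnodes.restrict_inj.2 hinj.injOn)
  exact countable_coe_iff.1 countable_of_Lindelof_of_discrete

theorem exists_eq_sheet [SecondCountableTopology B] (hB : StronglyRigid B) :
    ∃ e ∈ E, φ = sheet p e := by
  set D := {b | (φ b).1 ∈ range p}
  have hD : D.Countable := countable_setOf_fst_mem_range hp hφ hinj hφE
  have hDclosed : IsClosed D :=
    (isClosed_range_of_pairwise_one_le_dist hp).preimage (continuous_fst.comp hφ)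
  have hdense : Dense Dᶜ := hB.dense_compl hD
  have : Nonempty B := ⟨p 0⟩
  obtain ⟨b₀, hb₀⟩ := hdense.nonempty
  obtain ⟨e, he⟩ := exists_mem_petal hp (hφE b₀) hb₀
  have hpetal : Dᶜ ⊆ φ ⁻¹' petal e := by
    refine (hB.isPreconnected_compl hD).subset_left_of_subset_union
      ((isOpen_petal e).preimage hφ)
      (isOpen_biUnion fun e' (_ : e' ∈ {e' | e' ≠ e}) ↦ (isOpen_petal e').preimage hφ)
      (disjoint_iUnion₂_right.2 fun e' he' ↦ disjoint_left.2 fun b hb hb' ↦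
        he' (mem_petal_unique hp (hφE b) hb' hb)) (fun b hb ↦ ?_) ⟨b₀, hb₀, he⟩
    obtain ⟨e', he'⟩ := exists_mem_petal hp (hφE b) hb
    rcases eq_or_ne e' e with rfl | hne
    · exact .inl he'
    · exact .inr (mem_biUnion (show e' ∈ {e' | e' ≠ e} from hne) he')
  have hloc {b} (hb : b ∈ Dᶜ) : φ b = sheet p e (φ b).1 :=
    (eq_sheet_of_mem_petal hp (hφE b) (hpetal hb)).2
  have hfst : EqOn (fun b ↦ (φ b).1) id Dᶜ :=
    hB.eqOn_id hDclosed.isOpen_compl (continuous_fst.comp hφ).continuousOn fun b hb c hc hbc ↦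
      hinj (by rw [hloc hb, hloc hc]; exact congrArg _ hbc)
  refine ⟨e, (eq_sheet_of_mem_petal hp (hφE b₀) he).1,
    hφ.ext_on hdense (continuous_sheet p e) fun b hb ↦ ?_⟩
  exact (hloc hb).trans (congrArg (sheet p e) (hfst hb))

end Separated

/-- A map of label sequences preserving and reflecting the incidences `e j = e' j` along which
copies are glued. -/
structure IsIncidenceMap (E E' : Set (ℕ → V)) (τ : (ℕ → V) → ℕ → V) : Prop where
  mapsTo : MapsTo τ E E'
  apply_eq_iff {e e' : ℕ → V} (he : e ∈ E) (he' : e' ∈ E) (j : ℕ) : τ e j = τ e' j ↔ e j = e' j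

theorem exists_isIncidenceMap [SecondCountableTopology B] (hB : StronglyRigid B)
    (hp : Pairwise fun i j ↦ 1 ≤ dist (p i) (p j)) {E' : Set (ℕ → V)}
    {f : glued p E → glued p E'} (hf : Continuous f) (hinj : Function.Injective f) :
    ∃ τ, IsIncidenceMap E E' τ ∧
      ∀ e (he : e ∈ E) b, (f ⟨sheet p e b, sheet_mem_glued p he b⟩ : SheetSpace B V) =
        sheet p (τ e) b := by
  have hsheet (e) (he : e ∈ E) : ∃ e' ∈ E',
      ∀ b, (f ⟨sheet p e b, sheet_mem_glued p he b⟩ : SheetSpace B V) = sheet p e' b := by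
    obtain ⟨e', he', h⟩ := exists_eq_sheet hp (E := E')
      (continuous_subtype_val.comp (hf.comp ((continuous_sheet p e).subtype_mk
        (sheet_mem_glued p he))))
      (Subtype.val_injective.comp (hinj.comp fun b c h ↦
        sheet_injective p e (congrArg Subtype.val h)))
      (fun b ↦ (f _).2) hB
    exact ⟨e', he', congrFun h⟩
  choose! τ hτE hτ using hsheet
  refine ⟨τ, ⟨hτE, fun {e e'} he he' j ↦ ?_⟩, hτ⟩
  rw [← sheet_eq_sheet_iff hp, ← sheet_eq_sheet_iff hp, ← hτ e he, ← hτ e' he',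
    Subtype.val_injective.eq_iff, hinj.eq_iff, Subtype.mk.injEq]

theorem isPreconnected_glued [PreconnectedSpace B]
    (hp : Pairwise fun i j ↦ 1 ≤ dist (p i) (p j))
    (hE : ∀ e ∈ E, ∀ e' ∈ E, Relation.ReflTransGen (fun c d ↦ c ∈ E ∧ ∃ j, c j = d j) e e') :
    IsPreconnected (glued p E) := by
  refine IsPreconnected.biUnion_of_reflTransGen
    (fun e _ ↦ isPreconnected_range (continuous_sheet p e)) fun e he e' he' ↦
      Relation.ReflTransGen.mono ?_ _ _ (hE e he e' he')
  rintro c d ⟨hc, j, hj⟩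
  exact ⟨⟨sheet p c (p j), mem_range_self _, p j, ((sheet_eq_sheet_iff hp).2 hj).symm⟩, hc⟩

end Gluing

section Edges

variable {V : Type*} [LinearOrder V]

/-- The edge with label `y` at `2` and `x` elsewhere; it encodes the relation `x < y`. -/
def arc (x y : V) : ℕ → V := fun j ↦ if j = 2 then y else x

/-- The edge with label `y` at `1` and `2`, and label `x` elsewhere; it forces the label of `y`
as the end of an arc to agree with the label of `y` as the start of an arc. -/
def fork (x y : V) : ℕ → V := fun j ↦ if j = 1 ∨ j = 2 then y else x

/-- A strictly increasing sequence converging to `l` from below. -/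
structure IsLadder (c : ℕ → V) (l : V) : Prop where
  strictMono : StrictMono c
  isLUB : IsLUB (range c) l

open scoped Classical in
/-- A chosen ladder at `l`, constant if there is none. -/
noncomputable def ladder (l : V) : ℕ → V :=
  if h : ∃ c, IsLadder c l then h.choose else fun _ ↦ l

/-- The edge listing the ladder chosen at `l`, with the label `l` at `1` and `2`. By truncated
subtraction its labels are `ladder l 0, l, l, ladder l 0, ladder l 1, …`. -/
noncomputable def comb (l : V) : ℕ → V :=
  fun j ↦ if j = 1 ∨ j = 2 then l else ladder l (j - 3)

/-- The edges of the incidence structure distinguished by its single constant edge `m`. -/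
inductive IsEdge (m : V) : (ℕ → V) → Prop
  | protected arc {x y : V} (h : x < y) : IsEdge m (arc x y)
  | protected fork {x y : V} (h : x < y) : IsEdge m (fork x y)
  | protected comb {l : V} (h : IsLadder (ladder l) l) : IsEdge m (comb l)
  | loop : IsEdge m fun _ ↦ m

variable {m m' l x y : V} {c e : ℕ → V} {j : ℕ}

lemma IsLadder.lt (h : IsLadder c l) (n : ℕ) : c n < l :=
  (h.strictMono n.lt_succ_self).trans_le (h.isLUB.1 (mem_range_self _))

lemma IsLadder.isLadder_ladder (h : IsLadder c l) : IsLadder (ladder l) l := by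
  have hl : ∃ c, IsLadder c l := ⟨c, h⟩
  rw [ladder, dif_pos hl]
  exact hl.choose_spec

lemma IsEdge.exists_eq_arc (he : IsEdge m e) (h : e 1 ≠ e 2) : ∃ x y, e = arc x y := by
  cases he with
  | arc => exact ⟨_, _, rfl⟩
  | fork | comb | loop => simp [fork, comb] at h

lemma IsEdge.exists_eq_fork (he : IsEdge m e) (h : e 0 ≠ e 1) (h' : e 3 = e 4) :
    ∃ x y, x < y ∧ e = fork x y := by
  cases he with
  | fork hxy => exact ⟨_, _, hxy, rfl⟩
  | comb hl => exact absurd h' (hl.strictMono Nat.zero_lt_one).ne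
  | arc | loop => simp [arc] at h

lemma IsEdge.exists_eq_comb (he : IsEdge m e) (h : e 3 ≠ e 4) :
    ∃ l, IsLadder (ladder l) l ∧ e = comb l := by
  cases he with
  | comb hl => exact ⟨_, hl, rfl⟩
  | arc | fork | loop => simp [arc, fork] at h

lemma IsEdge.eq_loop (he : IsEdge m e) (h : e 0 = e 2) : e = fun _ ↦ m := by
  cases he with
  | loop => rfl
  | comb hl => exact absurd h (hl.lt 0).ne
  | arc hxy | fork hxy => exact absurd h hxy.ne

lemma IsEdge.lt_top [OrderTop V] (he : IsEdge m e) (hm : m < ⊤) (h₁ : j ≠ 1) (h₂ : j ≠ 2) :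
    e j < ⊤ := by
  cases he with
  | arc hxy => simpa [arc, h₂] using hxy.lt_top
  | fork hxy => simpa [fork, h₁, h₂] using hxy.lt_top
  | comb hl => simpa [comb, h₁, h₂] using (hl.lt _).lt_top
  | loop => exact hm

lemma IsEdge.bot_lt [OrderBot V] (he : IsEdge m e) (hm : ⊥ < m) : ⊥ < e 2 := by
  cases he with
  | arc hxy | fork hxy => exact hxy.bot_lt
  | comb hl => exact (hl.lt 0).bot_lt
  | loop => exact hm

lemma reflTransGen_isEdge [BoundedOrder V] (hm : m < ⊤) {e' : ℕ → V}
    (he : IsEdge m e) (he' : IsEdge m e') :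
    Relation.ReflTransGen (fun c d ↦ c ∈ {e | IsEdge m e} ∧ ∃ j, c j = d j) e e' := by
  have h := he.lt_top hm zero_ne_one (by decide : 0 ≠ 2)
  have h' := he'.lt_top hm zero_ne_one (by decide : 0 ≠ 2)
  have hincident : Relation.ReflTransGen (fun c d ↦ c ∈ {e | IsEdge m e} ∧ ∃ j, c j = d j)
      (arc (e 0) ⊤) (arc (e' 0) ⊤) := .single ⟨.arc h, 2, rfl⟩
  exact .head (b := arc (e 0) ⊤) ⟨he, 0, rfl⟩ (.tail hincident ⟨.arc h', 0, rfl⟩)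

lemma mk_setOf_isEdge_le {V : Type u} [LinearOrder V] (m : V) {α : Cardinal.{u}} (hα : ℵ₀ ≤ α)
    (hV : #V ≤ α) : #{e | IsEdge m e} ≤ α := by
  have hsub : {e | IsEdge m e} ⊆ range (fun q : V × V ↦ arc q.1 q.2) ∪
      range (fun q : V × V ↦ fork q.1 q.2) ∪ range comb ∪ {fun _ ↦ m} := by
    rintro e (h | h | h | -)
    · exact .inl (.inl (.inl ⟨(_, _), rfl⟩))
    · exact .inl (.inl (.inr ⟨(_, _), rfl⟩))
    · exact .inl (.inr ⟨_, rfl⟩)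
    · exact .inr rfl
  have hVV : #(V × V) ≤ α := (mk_prod V V).trans_le (by simpa using mul_le_of_le hα hV hV)
  have hloop : #({fun _ ↦ m} : Set (ℕ → V)) ≤ α :=
    (mk_singleton _).trans_le (one_le_aleph0.trans hα)
  exact (mk_le_mk_of_subset hsub).trans <| (mk_union_le _ _).trans <| add_le_of_le hα
    ((mk_union_le _ _).trans <| add_le_of_le hα ((mk_union_le _ _).trans <|
      add_le_of_le hα (mk_range_le.trans hVV) (mk_range_le.trans hVV)) (mk_range_le.trans hV)) hloop

theorem eq_id_of_map_ladder [WellFoundedLT V] [OrderTop V] {γ : V → V} (hγ : StrictMono γ)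
    (hlad : ∀ l, IsLadder (ladder l) l → IsLadder (γ ∘ ladder l) (γ l) ∧
      ladder (γ l) = γ ∘ ladder l) : γ = id := by
  by_contra hne
  obtain ⟨x, hx⟩ := Function.ne_iff.1 hne
  have hlt : x < γ x := lt_of_le_of_ne hγ.le_apply (Ne.symm hx)
  set orbit := fun n ↦ γ^[n] x
  obtain ⟨l, hl⟩ : ∃ l, IsLUB (range orbit) l := by
    have hbdd : (upperBounds (range orbit)).Nonempty := ⟨⊤, fun _ _ ↦ le_top⟩
    exact ⟨_, wellFounded_lt.min_mem _ hbdd, fun b hb ↦ not_lt.1 (wellFounded_lt.not_lt_min _ hb)⟩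
  have hladder : IsLadder (ladder l) l :=
    IsLadder.isLadder_ladder ⟨hγ.strictMono_iterate_of_lt_map hlt, hl⟩
  obtain ⟨hladder', hcomp⟩ := hlad l hladder
  have hγl : γ l = l := by
    refine le_antisymm (hladder'.isLUB.2 ?_) hγ.le_apply
    rintro _ ⟨n, rfl⟩
    obtain ⟨_, ⟨k, rfl⟩, hk⟩ := (lt_isLUB_iff hl).1 (hladder.lt n)
    refine (hγ hk).le.trans ?_
    rw [← Function.iterate_succ_apply' γ k x]
    exact hl.1 ⟨k + 1, rfl⟩
  obtain ⟨_, ⟨n, rfl⟩, hn⟩ := (lt_isLUB_iff hladder.isLUB).1 (hlt.trans_le (hl.1 ⟨1, rfl⟩))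
  have hfix : γ (ladder l n) = ladder l n := by
    rw [hγl] at hcomp
    exact (congrFun hcomp n).symm
  have horbit (k : ℕ) : orbit k ≤ ladder l n := by
    have := hγ.monotone.iterate k hn.le
    rwa [Function.iterate_fixed hfix] at this
  exact (hl.2 (forall_mem_range.2 horbit)).not_gt (hladder.lt n)

section Incidence

variable [BoundedOrder V] {τ : (ℕ → V) → ℕ → V}

open scoped Classical in
/-- The map of labels induced by a map `τ` of edges, read off at the start of an arc. Since `⊤`
starts no arc, its image is read off at the end of one. -/
noncomputable def labelMap (τ : (ℕ → V) → ℕ → V) (x : V) : V :=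
  if x < ⊤ then τ (arc x ⊤) 0 else τ (arc ⊥ ⊤) 2

namespace IsIncidenceMap

variable (hτ : IsIncidenceMap {e | IsEdge m e} {e | IsEdge m' e} τ)
include hτ

lemma map_arc_apply_of_ne_two (htop : Order.IsSuccPrelimit (⊤ : V)) (hxy : x < y) (hj : j ≠ 2) :
    τ (arc x y) j = labelMap τ x := by
  have hx : x < ⊤ := hxy.lt_top
  -- The arcs from `x` to two different ends share the label at `1` but not the one at `2`.
  obtain ⟨z, hz, hne⟩ : ∃ z, x < z ∧ τ (arc x z) 1 ≠ τ (arc x z) 2 := by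
    by_contra! h
    obtain ⟨y', hy', hxy'⟩ := htop.lt_iff_exists_lt.1 hx
    have h₁ := (hτ.apply_eq_iff (.arc hxy') (.arc hx) 1).2 rfl
    exact hy'.ne ((hτ.apply_eq_iff (.arc hxy') (.arc hx) 2).1 (by rw [← h _ hxy', h₁, h _ hx]))
  obtain ⟨a, b, hab⟩ := (hτ.mapsTo (IsEdge.arc hz)).exists_eq_arc hne
  have hshare {w : V} (hw : x < w) {i : ℕ} (hi : i ≠ 2) : τ (arc x w) i = a := by
    rw [(hτ.apply_eq_iff (.arc hw) (.arc hz) i).2 (by simp [arc, hi]), hab]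
    simp [arc, hi]
  rw [hshare hxy hj, labelMap, if_pos hx, hshare hx (by decide)]

lemma map_fork (htop : Order.IsSuccPrelimit (⊤ : V)) (hxy : x < y) :
    labelMap τ x < τ (arc x y) 2 ∧ τ (fork x y) = fork (labelMap τ x) (τ (arc x y) 2) := by
  have hx : x < ⊤ := hxy.lt_top
  have hbase {j : ℕ} (h₁ : j ≠ 1) (h₂ : j ≠ 2) : τ (fork x y) j = labelMap τ x := by
    rw [← hτ.map_arc_apply_of_ne_two htop hx h₂]
    exact (hτ.apply_eq_iff (.fork hxy) (.arc hx) j).2 (by simp [arc, fork, h₁, h₂])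
  have hend : τ (fork x y) 2 = τ (arc x y) 2 :=
    (hτ.apply_eq_iff (.fork hxy) (.arc hxy) 2).2 rfl
  have hmid : τ (fork x y) 0 ≠ τ (fork x y) 1 := by
    rw [hbase (by decide) (by decide), ← hτ.map_arc_apply_of_ne_two htop hx (by decide : 1 ≠ 2)]
    exact fun h ↦ hxy.ne ((hτ.apply_eq_iff (.arc hx) (.fork hxy) 1).1 h)
  obtain ⟨a, b, hab, hfork⟩ := (hτ.mapsTo (IsEdge.fork hxy)).exists_eq_fork hmid
    (by rw [hbase (by decide) (by decide), hbase (by decide) (by decide)])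
  obtain rfl : labelMap τ x = a := by rw [← hbase zero_ne_one (by decide : 0 ≠ 2), hfork]; rfl
  obtain rfl : τ (arc x y) 2 = b := by rw [← hend, hfork]; rfl
  exact ⟨hab, hfork⟩

lemma map_arc_apply_two (htop : Order.IsSuccPrelimit (⊤ : V)) (hxy : x < y) :
    τ (arc x y) 2 = labelMap τ y := by
  rcases (le_top : y ≤ ⊤).lt_or_eq with hy | rfl
  · rw [← hτ.map_arc_apply_of_ne_two htop hy (by decide : 1 ≠ 2),
      ← (hτ.apply_eq_iff (.fork hxy) (.arc hy) 1).2 rfl, (hτ.map_fork htop hxy).2]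
    rfl
  · rw [labelMap, if_neg (lt_irrefl _)]
    exact (hτ.apply_eq_iff (.arc hxy) (.arc (bot_le.trans_lt hxy)) 2).2 rfl

lemma strictMono_labelMap (htop : Order.IsSuccPrelimit (⊤ : V)) : StrictMono (labelMap τ) :=
  fun _ _ hxy ↦ hτ.map_arc_apply_two htop hxy ▸ (hτ.map_fork htop hxy).1

lemma map_apply (htop : Order.IsSuccPrelimit (⊤ : V)) (hm₀ : ⊥ < m) (hm₁ : m < ⊤)
    (he : IsEdge m e) (j : ℕ) : τ e j = labelMap τ (e j) := by
  have harc (h₂ : j ≠ 2) (h : e j < ⊤) : τ e j = labelMap τ (e j) := by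
    rw [← hτ.map_arc_apply_of_ne_two htop h h₂]
    exact (hτ.apply_eq_iff he (.arc h) j).2 (by simp [arc, h₂])
  have hfork (h₁₂ : j = 1 ∨ j = 2) (h : ⊥ < e j) : τ e j = labelMap τ (e j) := by
    rw [(hτ.apply_eq_iff he (.fork h) j).2 (by simp [fork, h₁₂]), (hτ.map_fork htop h).2,
      hτ.map_arc_apply_two htop h]
    simp [fork, h₁₂]
  rcases eq_or_ne j 2 with rfl | h₂
  · exact hfork (.inr rfl) (he.bot_lt hm₀)
  rcases (le_top : e j ≤ ⊤).lt_or_eq with h | h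
  · exact harc h₂ h
  · have h₁ : j = 1 := by_contra fun h₁ ↦ (he.lt_top hm₁ h₁ h₂).ne h
    exact hfork (.inl h₁) (h ▸ hm₀.trans hm₁)

lemma map_ladder (htop : Order.IsSuccPrelimit (⊤ : V)) (hm₀ : ⊥ < m) (hm₁ : m < ⊤)
    (hl : IsLadder (ladder l) l) :
    IsLadder (labelMap τ ∘ ladder l) (labelMap τ l) ∧
      ladder (labelMap τ l) = labelMap τ ∘ ladder l := by
  have hcomb := hτ.map_apply htop hm₀ hm₁ (.comb hl)
  have hne : τ (comb l) 3 ≠ τ (comb l) 4 := by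
    rw [hcomb, hcomb]
    exact ((hτ.strictMono_labelMap htop) (hl.strictMono Nat.zero_lt_one)).ne
  obtain ⟨l', hl', heq⟩ := (hτ.mapsTo (IsEdge.comb hl)).exists_eq_comb hne
  simp only [heq] at hcomb
  obtain rfl : l' = labelMap τ l := hcomb 1
  have hladder : ladder (labelMap τ l) = labelMap τ ∘ ladder l := funext fun n ↦ hcomb (n + 3)
  exact ⟨hladder ▸ hl', hladder⟩

theorem eq_and_map_eq [WellFoundedLT V] (htop : Order.IsSuccPrelimit (⊤ : V)) (hm₀ : ⊥ < m)
    (hm₁ : m < ⊤) : m' = m ∧ ∀ e, IsEdge m e → τ e = e := by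
  have hid : labelMap τ = id :=
    eq_id_of_map_ladder (hτ.strictMono_labelMap htop) fun _ ↦ hτ.map_ladder htop hm₀ hm₁
  have hmap {e : ℕ → V} (he : IsEdge m e) : τ e = e :=
    funext fun j ↦ (hτ.map_apply htop hm₀ hm₁ he j).trans (congrFun hid _)
  have hloop : IsEdge m' fun _ ↦ m := hmap .loop ▸ hτ.mapsTo (IsEdge.loop (m := m))
  exact ⟨(congrFun (hloop.eq_loop rfl) 0).symm, fun e ↦ hmap⟩

end IsIncidenceMap

end Incidence

end Edges

/-- A sequence of points together with continuous functions separating each of them from all the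
others. -/
structure BiorthogonalSystem (Y : Type*) [TopologicalSpace Y] where
  point : ℕ → Y
  func : ℕ → C(Y, ℝ)
  func_point (n k : ℕ) : func n (point k) = if n = k then 1 else 0

/-- A family of connected spaces without continuous injections between its members, other than
the identity maps. -/
structure IsRigidFamily {I : Type*} (Y : I → Type*) [∀ i, TopologicalSpace (Y i)] : Prop where
  preconnectedSpace (i : I) : PreconnectedSpace (Y i)
  eq_of_injective {i j : I} {f : Y i → Y j} (hf : Continuous f) (hinj : Function.Injective f) :
    i = j
  eq_id {i : I} {f : Y i → Y i} (hf : Continuous f) (hinj : Function.Injective f) : f = id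

section Glued

variable {B V : Type*} [MetricSpace B] {p : ℕ → B}

/-- The marked points of a single copy of `B`, separated by functions on `B`. -/
noncomputable def gluedBiorthogonalSystem (hp : Pairwise fun i j ↦ 1 ≤ dist (p i) (p j))
    {E : Set (ℕ → V)} {e : ℕ → V} (he : e ∈ E) : BiorthogonalSystem (glued p E) where
  point k := ⟨sheet p e (p k), sheet_mem_glued p he (p k)⟩
  func n := ⟨fun x ↦ max 0 (1 - dist x.1.1 (p n)), by fun_prop⟩
  func_point n k := by
    rcases eq_or_ne n k with rfl | h
    · simp [sheet]
    · simp [sheet, h, hp h.symm]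

theorem isRigidFamily_glued [SecondCountableTopology B] (hB : StronglyRigid B)
    (hp : Pairwise fun i j ↦ 1 ≤ dist (p i) (p j)) [LinearOrder V] [WellFoundedLT V]
    [BoundedOrder V] (htop : Order.IsSuccPrelimit (⊤ : V)) {I : Type*} {m : I → V}
    (hm : Function.Injective m) (hm₀ : ∀ i, ⊥ < m i) (hm₁ : ∀ i, m i < ⊤) :
    IsRigidFamily fun i ↦ glued p {e | IsEdge (m i) e} where
  preconnectedSpace i := by
    have : PreconnectedSpace B := ⟨by simpa using hB.isPreconnected_compl countable_empty⟩
    exact isPreconnected_iff_preconnectedSpace.1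
      (isPreconnected_glued hp fun e he e' he' ↦ reflTransGen_isEdge (hm₁ i) he he')
  eq_of_injective {i j f} hf hinj := by
    obtain ⟨τ, hτ, -⟩ := exists_isIncidenceMap hB hp hf hinj
    exact hm (hτ.eq_and_map_eq htop (hm₀ i) (hm₁ i)).1.symm
  eq_id {i f} hf hinj := by
    obtain ⟨τ, hτ, hfτ⟩ := exists_isIncidenceMap hB hp hf hinj
    refine funext fun ⟨x, hx⟩ ↦ Subtype.ext ?_
    obtain ⟨e, he, hxe⟩ := mem_glued_iff.1 hx
    obtain ⟨b, rfl⟩ : ∃ b, x = sheet p e b := ⟨_, hxe⟩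
    rw [hfτ e he, (hτ.eq_and_map_eq htop (hm₀ i) (hm₁ i)).2 e he, id]

end Glued

universe v in
lemma mk_glued_le {B : Type v} [MetricSpace B] {V : Type u} (p : ℕ → B) (E : Set (ℕ → V)) :
    #(glued p E) ≤ lift.{v} #E * lift.{u} #B := by
  rw [← mk_prod]
  refine mk_le_of_surjective
    (f := fun q : E × B ↦ ⟨sheet p q.1 q.2, sheet_mem_glued p q.1.2 q.2⟩) ?_
  rintro ⟨x, hx⟩
  obtain ⟨e, he, hxe⟩ := mem_glued_iff.1 hx
  exact ⟨(⟨e, he⟩, x.1), Subtype.ext hxe.symm⟩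

theorem exists_isRigidFamily (I : Type u) (hI : 𝔠 ≤ #I) :
    ∃ (Y : I → Type u) (_ : ∀ i, TopologicalSpace (Y i)), IsRigidFamily Y ∧
      ∀ i, TopologicalSpace.MetrizableSpace (Y i) ∧ #(Y i) ≤ #I ∧
        Nonempty (BiorthogonalSystem (Y i)) := by
  obtain ⟨B, hB, hdense⟩ := exists_stronglyRigid_dense ℂ (by rw [Complex.rank_real_complex]; simp)
  obtain ⟨p, hp⟩ := exists_seq_pairwise_one_le_dist hdense
  have hI₀ : ℵ₀ ≤ #I := aleph0_le_continuum.trans hI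
  have : NoMaxOrder (#I).ord.ToType := noMaxOrder hI₀
  obtain ⟨index⟩ : Nonempty (I ≃ (#I).ord.ToType) := Cardinal.eq.1 (mk_ord_toType _).symm
  have : Nonempty (#I).ord.ToType := index.nonempty_congr.1 (infinite_iff.2 hI₀).nonempty
  let V := WithTop (WithBot (#I).ord.ToType)
  let label (i : I) : V := ((index i : WithBot (#I).ord.ToType) : V)
  have hlabel : Function.Injective label :=
    WithTop.coe_injective.comp (WithBot.coe_injective.comp index.injective)
  have hV : #V ≤ #I := by
    change #(Option (Option _)) ≤ #I
    rw [mk_option, mk_option, mk_ord_toType, add_one_eq hI₀, add_one_eq hI₀]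
  refine ⟨fun i ↦ glued p {e | IsEdge (label i) e}, inferInstance, isRigidFamily_glued hB hp
    WithTop.isSuccPrelimit_top hlabel (fun i ↦ WithTop.coe_lt_coe.2 (WithBot.bot_lt_coe _))
    fun i ↦ WithTop.coe_lt_top _,
    fun i ↦ ⟨inferInstance, (mk_glued_le p _).trans (mul_le_of_le hI₀ ?_ ?_),
      ⟨gluedBiorthogonalSystem hp IsEdge.loop⟩⟩⟩
  · simpa using mk_setOf_isEdge_le (label i) hI₀ hV
  · exact (lift_le_continuum.2 mk_le_continuum).trans hI

lemma metrizableSpace_sum (X Y : Type*) [TopologicalSpace X] [TopologicalSpace Y]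
    [TopologicalSpace.MetrizableSpace X] [TopologicalSpace.MetrizableSpace Y] :
    TopologicalSpace.MetrizableSpace (X ⊕ Y) := by
  let := TopologicalSpace.metrizableSpaceMetric X
  let := TopologicalSpace.metrizableSpaceMetric Y
  let := Metric.metricSpaceSum (X := X) (Y := Y)
  infer_instance

lemma metrizableSpace_sigma {ι : Type*} (X : ι → Type*) [∀ i, TopologicalSpace (X i)]
    [∀ i, TopologicalSpace.MetrizableSpace (X i)] :
    TopologicalSpace.MetrizableSpace (Σ i, X i) := by
  let := fun i ↦ TopologicalSpace.metrizableSpaceMetric (X i)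
  let := Metric.Sigma.metricSpace (E := X)
  infer_instance

lemma isOpen_singleton_of_injective {X Z : Type*} [TopologicalSpace X] [TopologicalSpace Z]
    {f : X → Z} (hf : Continuous f) (hinj : Function.Injective f) {x : X} (h : IsOpen {f x}) :
    IsOpen {x} := by
  rw [← preimage_image_eq {x} hinj, image_singleton]
  exact h.preimage hf

lemma exists_lift_of_isClopen_range {Z X W : Type*} [TopologicalSpace Z] [PreconnectedSpace Z]
    [TopologicalSpace X] [TopologicalSpace W] {e : X → W} (he : IsEmbedding e)
    (hrange : IsClopen (range e)) {f : Z → W} (hf : Continuous f) {z : Z} (hz : f z ∈ range e) :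
    ∃ g, Continuous g ∧ f = e ∘ g := by
  choose g hg using eq_univ_iff_forall.1 ((hrange.preimage hf).eq_univ ⟨z, hz⟩)
  obtain rfl : e ∘ g = f := funext hg
  exact ⟨g, he.continuous_iff.2 hf, rfl⟩

lemma BiorthogonalSystem.nontrivial {Y : Type*} [TopologicalSpace Y] (S : BiorthogonalSystem Y) :
    Nontrivial Y :=
  ⟨S.point 0, S.point 1, fun h ↦ by simpa [h, S.func_point] using S.func_point 0 0⟩

/-- Countably many copies `block n` of a space `Y` together with limit points `limit j`, where
`limit j` is the limit of the points of index `n + 2 * j` in `block n`. The topology is defined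
by the map `Gadget.coords`. -/
inductive Gadget {Y : Type*} [TopologicalSpace Y] (S : BiorthogonalSystem Y) : Type _
  | limit (j : ℤ) : Gadget S
  | block (n : ℕ) (y : Y) : Gadget S

namespace Gadget

section

variable {Y : Type*} [TopologicalSpace Y] {S : BiorthogonalSystem Y}

@[simp]
lemma block_mem_range_block {n m : ℕ} {y : Y} : block n y ∈ range (block (S := S) m) ↔ n = m := by
  simp [eq_comm]

@[simp]
lemma limit_notMem_range_block {j : ℤ} {m : ℕ} : limit j ∉ range (block (S := S) m) := by simp

/-- The coordinate that detects `block m`: it collapses the complement of this block to a point. -/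
def blockCoord (m : ℕ) : Gadget S → Y ⊕ Unit
  | limit _ => Sum.inr ()
  | block n y => if n = m then Sum.inl y else Sum.inr ()

/-- The coordinate that detects `limit j`: the real function extending the biorthogonal functions
`func (n + 2 * j)` on `block n`. Where `n + 2 * j` is negative, the index is truncated to `0`; this
affects finitely many blocks only. -/
def realCoord (j : ℤ) : Gadget S → ℝ
  | limit k => if k = j then 1 else 0
  | block n y => S.func (n + 2 * j).toNat y

/-- The map by which the topology of the gadget is defined. -/
def coords (a : Gadget S) : (ℕ → Y ⊕ Unit) × (ℤ → ℝ) :=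
  (fun m ↦ blockCoord m a, fun j ↦ realCoord j a)

instance : TopologicalSpace (Gadget S) := .induced coords inferInstance

lemma preimage_blockCoord_range_inl (m : ℕ) :
    blockCoord m ⁻¹' range Sum.inl = range (block (S := S) m) := by
  ext (j | ⟨n, y⟩)
  · simp [blockCoord]
  · rw [block_mem_range_block, mem_preimage, blockCoord]
    by_cases h : n = m <;> simp [h]

lemma blockCoord_comp_block (m : ℕ) : blockCoord m ∘ block (S := S) m = Sum.inl := by
  funext y
  simp [blockCoord]

lemma isEmbedding_coords : IsEmbedding (coords (S := S)) := by
  refine ⟨⟨rfl⟩, fun a b hab ↦ ?_⟩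
  have hblock (m : ℕ) : blockCoord m a = blockCoord m b := congrFun (congrArg Prod.fst hab) m
  have hreal (j : ℤ) : realCoord j a = realCoord j b := congrFun (congrArg Prod.snd hab) j
  rcases a with j | ⟨n, y⟩
  · rcases b with k | ⟨k, z⟩
    · simpa [realCoord, eq_comm] using hreal j
    · simpa [blockCoord] using hblock k
  · have hn := hblock n
    rcases b with k | ⟨k, z⟩
    · simp [blockCoord] at hn
    · by_cases h : k = n <;> simp_all [blockCoord]

instance [TopologicalSpace.MetrizableSpace Y] : TopologicalSpace.MetrizableSpace (Gadget S) :=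
  have := metrizableSpace_sum Y Unit
  let := TopologicalSpace.metrizableSpaceMetric (Y ⊕ Unit)
  isEmbedding_coords.metrizableSpace

lemma continuous_iff {Z : Type*} [TopologicalSpace Z] {f : Z → Gadget S} :
    Continuous f ↔ (∀ m, Continuous fun z ↦ blockCoord m (f z)) ∧
      ∀ j, Continuous fun z ↦ realCoord j (f z) := by
  rw [isEmbedding_coords.continuous_iff, ← continuous_pi_iff, ← continuous_pi_iff]
  exact continuous_prodMk

lemma continuous_blockCoord (m : ℕ) : Continuous (blockCoord (S := S) m) :=
  (continuous_iff.1 continuous_id).1 m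

lemma continuous_realCoord (j : ℤ) : Continuous (realCoord (S := S) j) :=
  (continuous_iff.1 continuous_id).2 j

lemma isClopen_range_block (n : ℕ) : IsClopen (range (block (S := S) n)) :=
  preimage_blockCoord_range_inl (S := S) n ▸ isClopen_range_inl.preimage (continuous_blockCoord n)

lemma isOpenEmbedding_block (n : ℕ) : IsOpenEmbedding (block (S := S) n) := by
  have hcont : Continuous (block (S := S) n) := by
    refine continuous_iff.2 ⟨fun m ↦ ?_, fun j ↦ (S.func _).continuous⟩
    by_cases h : n = m
    · simpa only [blockCoord, if_pos h] using continuous_inl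
    · simpa only [blockCoord, if_neg h] using continuous_const
  refine ⟨.of_comp hcont (continuous_blockCoord n) ?_, (isClopen_range_block n).isOpen⟩
  rw [blockCoord_comp_block]
  exact .inl

lemma tendsto_block_limit (j : ℤ) :
    Tendsto (fun n : ℕ ↦ block (S := S) n (S.point (n + 2 * j).toNat)) atTop (𝓝 (limit j)) := by
  refine isEmbedding_coords.tendsto_nhds_iff.2 (.prodMk_nhds ?_ ?_)
  · refine tendsto_pi_nhds.2 fun m ↦ tendsto_const_nhds.congr' ?_
    filter_upwards [eventually_gt_atTop m] with n hn
    simp [blockCoord, hn.ne']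
  · refine tendsto_pi_nhds.2 fun k ↦ tendsto_const_nhds.congr' ?_
    filter_upwards [eventually_gt_atTop (2 * k.natAbs + 2 * j.natAbs)] with n hn
    have : j = k ↔ (n + 2 * k).toNat = (n + 2 * j).toNat := by lia
    simp only [realCoord, S.func_point, this]

lemma exists_eventually_toNat_eq_of_tendsto {s t : ℕ → ℕ} (hs : Function.Injective s)
    {a : Gadget S} (h : Tendsto (fun n ↦ block (S := S) (s n) (S.point (t n))) atTop (𝓝 a)) :
    ∃ k : ℤ, ∀ᶠ n in atTop, (s n + 2 * k).toNat = t n := by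
  rcases a with k | ⟨m, y⟩
  · have hlim :
        Tendsto (fun n ↦ realCoord k (block (S := S) (s n) (S.point (t n)))) atTop (𝓝 1) := by
      simpa [realCoord, Function.comp_def] using
        ((continuous_realCoord k).tendsto (limit (S := S) k)).comp h
    refine ⟨k, (hlim.eventually_ne one_ne_zero).mono fun n hn ↦ ?_⟩
    by_contra hne
    exact hn (by simp [realCoord, S.func_point, hne])
  · have hblock : ∀ᶠ n in atTop, s n = m :=
      (h.eventually ((isClopen_range_block m).isOpen.mem_nhds (mem_range_self y))).mono
        fun n hn ↦ block_mem_range_block.1 hn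
    have hne : ∀ᶠ n in atTop, s n ≠ m :=
      (hs.nat_tendsto_atTop.eventually_gt_atTop m).mono fun n hn ↦ hn.ne'
    exact ((hblock.and hne).exists.elim fun n hn ↦ hn.2 hn.1).elim

lemma exists_mem_range_block {Z : Type*} [TopologicalSpace Z] [PreconnectedSpace Z]
    [Nontrivial Z] {f : Z → Gadget S} (hf : Continuous f) (hinj : Function.Injective f) :
    ∃ n z, f z ∈ range (block (S := S) n) := by
  by_contra! hmeet
  have hlimit (z : Z) : ∃ k, f z = limit k := by
    rcases hz : f z with k | ⟨n, y⟩
    · exact ⟨k, rfl⟩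
    · exact (hmeet n z ⟨y, hz.symm⟩).elim
  choose k hk using hlimit
  have hlocal : IsLocallyConstant k := by
    refine IsLocallyConstant.iff_isOpen_fiber.2 fun j ↦ ?_
    have hfiber : k ⁻¹' {j} = {z | realCoord j (f z) ≠ 0} := by
      ext z
      simp [hk, realCoord]
    rw [hfiber]
    exact isOpen_ne.preimage ((continuous_realCoord j).comp hf)
  obtain ⟨z₀, z₁, hne⟩ := exists_pair_ne Z
  exact hne (hinj (by rw [hk, hk, hlocal.apply_eq_of_preconnectedSpace z₀ z₁]))

theorem exists_eq_block_comp {Z : Type*} [TopologicalSpace Z] [PreconnectedSpace Z]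
    [Nontrivial Z] {f : Z → Gadget S} (hf : Continuous f) (hinj : Function.Injective f) :
    ∃ (n : ℕ) (φ : Z → Y), Continuous φ ∧ f = block n ∘ φ := by
  obtain ⟨n, z, hz⟩ := exists_mem_range_block hf hinj
  exact ⟨n, exists_lift_of_isClopen_range (isOpenEmbedding_block n).isEmbedding
    (isClopen_range_block n) hf hz⟩

/-- The self-embedding of the gadget that moves every block two places further, which leaves the
blocks `0` and `1` free. -/
def shift : Gadget S → Gadget S
  | limit j => limit (j - 1)
  | block n y => block (n + 2) y

lemma blockCoord_shift (m : ℕ) (a : Gadget S) : blockCoord (m + 2) (shift a) = blockCoord m a := by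
  cases a <;> simp [shift, blockCoord]

lemma realCoord_shift (j : ℤ) (a : Gadget S) : realCoord j (shift a) = realCoord (j + 1) a := by
  cases a with
  | limit k => simp only [shift, realCoord, sub_eq_iff_eq_add]
  | block n y =>
    have : (↑(n + 2) + 2 * j : ℤ) = n + 2 * (j + 1) := by lia
    simp only [shift, realCoord, this]

lemma range_shift : range (shift (S := S)) = (range (block 0) ∪ range (block 1))ᶜ := by
  ext (j | ⟨n, y⟩)
  · simpa using ⟨limit (j + 1), by simp [shift]⟩
  · rw [mem_compl_iff, mem_union, block_mem_range_block, block_mem_range_block]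
    refine ⟨?_, fun h ↦ ⟨block (n - 2) y, by simp only [shift]; congr; lia⟩⟩
    rintro ⟨k | ⟨k, z⟩, h⟩
    · simp [shift] at h
    · simp only [shift, block.injEq] at h
      lia

lemma isClopen_range_shift : IsClopen (range (shift (S := S))) :=
  range_shift (S := S) ▸ ((isClopen_range_block 0).union (isClopen_range_block 1)).compl

lemma shift_notMem_range_block_zero (a : Gadget S) : shift a ∉ range (block (S := S) 0) :=
  fun h ↦ (range_shift.subset (mem_range_self a)) (Or.inl h)

lemma isEmbedding_shift : IsEmbedding (shift (S := S)) := by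
  have hcont : Continuous (shift (S := S)) := by
    refine continuous_iff.2 ⟨fun m ↦ ?_, fun j ↦ ?_⟩
    · match m with
      | 0 | 1 =>
        refine continuous_const (y := Sum.inr ()) |>.congr fun a ↦ ?_
        cases a <;> simp [shift, blockCoord]
      | m + 2 => simpa only [blockCoord_shift] using continuous_blockCoord m
    · simpa only [realCoord_shift] using continuous_realCoord (j + 1)
  let unshift (c : (ℕ → Y ⊕ Unit) × (ℤ → ℝ)) : (ℕ → Y ⊕ Unit) × (ℤ → ℝ) :=
    (fun m ↦ c.1 (m + 2), fun j ↦ c.2 (j - 1))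
  have hunshift : unshift ∘ coords ∘ shift = coords (S := S) := by
    funext a
    simp [unshift, coords, blockCoord_shift, realCoord_shift]
  refine .of_comp hcont isEmbedding_coords.continuous
    (.of_comp (isEmbedding_coords.continuous.comp hcont) (g := unshift) (by fun_prop) ?_)
  rw [hunshift]
  exact isEmbedding_coords

lemma not_isOpen_singleton [PreconnectedSpace Y] [T1Space Y] (a : Gadget S) :
    ¬ IsOpen {a} := by
  intro ha
  rcases a with j | ⟨n, y⟩
  · obtain ⟨n, hn⟩ := ((tendsto_block_limit j).eventually (ha.mem_nhds rfl)).exists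
    exact nomatch mem_singleton_iff.1 hn
  · have : Nontrivial Y := S.nontrivial
    have : ConnectedSpace Y := { toNonempty := ⟨y⟩ }
    exact _root_.not_isOpen_singleton y (isOpen_singleton_of_injective
      (isOpenEmbedding_block n).continuous (isOpenEmbedding_block n).injective ha)

end

lemma mk_le {Y : Type u} [TopologicalSpace Y] (S : BiorthogonalSystem Y) {α : Cardinal.{u}}
    (hα : ℵ₀ ≤ α) (hY : #Y ≤ α) : #(Gadget S) ≤ α := by
  let f : ℤ ⊕ ℕ × Y → Gadget S := Sum.elim limit fun q ↦ block q.1 q.2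
  have hf : Function.Surjective f := by
    rintro (j | ⟨n, y⟩)
    exacts [⟨.inl j, rfl⟩, ⟨.inr (n, y), rfl⟩]
  refine (mk_le_of_surjective hf).trans ?_
  simp only [mk_sum, mk_prod, mk_int, mk_nat, lift_aleph0, lift_uzero]
  exact add_le_of_le hα hα (mul_le_of_le hα hα hY)

end Gadget

lemma eq_zero_of_bijective_of_eventually_eq_add {σ : ℕ → ℕ} (hσ : Function.Bijective σ) {c : ℤ}
    (h : ∀ᶠ n in atTop, (σ n : ℤ) = n + c) : c = 0 := by
  obtain ⟨N, hN⟩ := eventually_atTop.1 h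
  have himage : σ '' Ici N = Ici (N + c).toNat := by
    ext m
    constructor
    · rintro ⟨n, hn, rfl⟩
      have := hN n hn
      simp only [mem_Ici] at hn ⊢
      lia
    · intro hm
      simp only [mem_Ici] at hm
      have hpos := hN N le_rfl
      have hm' := hN (m - c).toNat (by lia)
      exact ⟨(m - c).toNat, by simp only [mem_Ici]; lia, by lia⟩
  have hcompl : σ '' Iio N = Iio (N + c).toNat := by
    rw [← compl_Ici, image_compl_eq hσ, himage, compl_Ici]
  have hcard := ncard_image_of_injective (Iio N) hσ.injective
  rw [hcompl, ncard_Iio_nat, ncard_Iio_nat] at hcard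
  have := hN N le_rfl
  lia

section Embeddings

lemma not_isOpen_singleton_pi {ι : Type*} [Infinite ι] {X : ι → Type*}
    [∀ n, TopologicalSpace (X n)] [∀ n, Nontrivial (X n)] (c : ∀ n, X n) : ¬ IsOpen {c} := by
  classical
  intro hc
  choose d hd using fun n ↦ exists_ne (c n)
  have hlim : Tendsto (fun n ↦ Function.update c n (d n)) cofinite (𝓝 c) := by
    refine tendsto_pi_nhds.2 fun k ↦ tendsto_const_nhds.congr' ?_
    filter_upwards [eventually_cofinite_ne k] with n hn
    rw [Function.update_of_ne hn.symm]
  obtain ⟨n, hn⟩ := (hlim.eventually (hc.mem_nhds rfl)).exists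
  exact hd n (by simpa using congrFun hn n)

lemma exists_lift_sum {Z X W : Type*} [TopologicalSpace Z] [ConnectedSpace Z]
    [TopologicalSpace X] [TopologicalSpace W] {f : Z → X ⊕ W} (hf : Continuous f) :
    (∃ g, Continuous g ∧ f = Sum.inl ∘ g) ∨ ∃ g, Continuous g ∧ f = Sum.inr ∘ g := by
  obtain ⟨z⟩ : Nonempty Z := inferInstance
  rcases hz : f z with x | w
  · exact .inl (exists_lift_of_isClopen_range .inl isClopen_range_inl hf ⟨x, hz.symm⟩)
  · exact .inr (exists_lift_of_isClopen_range .inr isClopen_range_inr hf ⟨w, hz.symm⟩)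

lemma isClosedEmbedding_sigmaMap_id {ι : Type*} {X Z : ι → Type*} [∀ i, TopologicalSpace (X i)]
    [∀ i, TopologicalSpace (Z i)] {f : ∀ i, X i → Z i} (hf : ∀ i, IsClosedEmbedding (f i)) :
    IsClosedEmbedding (Sigma.map id f) := by
  refine ⟨(isEmbedding_sigmaMap Function.injective_id).2 fun i ↦ (hf i).isEmbedding,
    isClosed_sigma_iff.2 fun i ↦ ?_⟩
  convert (hf i).isClosed_range
  ext z
  constructor
  · rintro ⟨⟨j, x⟩, h⟩
    obtain rfl : j = i := congrArg Sigma.fst h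
    exact ⟨x, eq_of_heq (Sigma.mk.inj h).2⟩
  · rintro ⟨x, rfl⟩
    exact ⟨⟨i, x⟩, rfl⟩

variable {X : Type*} [TopologicalSpace X] {f : X → X} {U V : Set X}

lemma isClosedEmbedding_restrict (hf : IsClosedEmbedding f) (hU : IsClosed U)
    (hUV : MapsTo f U V) : IsClosedEmbedding (hUV.restrict f U V) :=
  .of_comp IsEmbedding.subtypeVal (hf.comp hU.isClosedEmbedding_subtypeVal)

lemma homeoToClosedSubset_of_mapsTo (hf : IsClosedEmbedding f) (hU : IsClosed U)
    (hUV : MapsTo f U V) : HomeoToClosedSubset U V :=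
  have h := isClosedEmbedding_restrict hf hU hUV
  ⟨_, h.isClosed_range, ⟨h.isEmbedding.toHomeomorph⟩⟩

lemma homeoToClopenSubset_of_mapsTo (hf : IsClosedEmbedding f) (hf' : IsOpenEmbedding f)
    (hU : IsClopen U) (hV : IsOpen V) (hUV : MapsTo f U V) : HomeoToClopenSubset U V := by
  have hclosed := isClosedEmbedding_restrict hf hU.isClosed hUV
  have hopen : IsOpenEmbedding (hUV.restrict f U V) :=
    .of_comp _ hV.isOpenEmbedding_subtypeVal (hf'.comp hU.isOpen.isOpenEmbedding_subtypeVal)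
  exact ⟨_, ⟨hclosed.isClosed_range, hopen.isOpen_range⟩, ⟨hclosed.isEmbedding.toHomeomorph⟩⟩

end Embeddings

section TotalSpace

variable {I : Type*} {Y : I → Type*} [∀ i, TopologicalSpace (Y i)]

/-- The disjoint union of the gadgets of a family of spaces, together with the disjoint union of
the products of these gadgets with the Cantor space. The clopen sets `region A C i` of this space
represent the quasiorders. -/
abbrev TotalSpace (S : ∀ i, BiorthogonalSystem (Y i)) :=
  (Σ i, Gadget (S i)) ⊕ (Σ i, Gadget (S i)) × (ℕ → Bool)

variable {S : ∀ i, BiorthogonalSystem (Y i)}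

/-- The inclusion of a gadget, without a Cantor factor, in the total space. -/
def core (i : I) (a : Gadget (S i)) : TotalSpace S := Sum.inl ⟨i, a⟩

lemma isClosedEmbedding_core (i : I) : IsClosedEmbedding (core (S := S) i) :=
  IsClosedEmbedding.inl.comp .sigmaMk

lemma core_block_inj {i : I} {n m : ℕ} {y z : Y i} :
    core (S := S) i (Gadget.block n y) = core i (Gadget.block m z) ↔ n = m ∧ y = z :=
  (isClosedEmbedding_core i).injective.eq_iff.trans (by simp)

lemma isOpenEmbedding_core_comp_block (i : I) (n : ℕ) :
    IsOpenEmbedding (core (S := S) i ∘ Gadget.block n) :=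
  (IsOpenEmbedding.inl.comp .sigmaMk).comp (Gadget.isOpenEmbedding_block n)

/-- The clopen set formed by the gadgets over `A` without block `0` of the gadget over `i`, and
by the products of the gadgets over `C` with the Cantor space. -/
def region (A C : Set I) (i : I) : Set (TotalSpace S) :=
  {x | x.elim (fun g ↦ g.1 ∈ A ∧ (g.1 = i → g.2 ∉ range (Gadget.block 0))) fun g ↦ g.1.1 ∈ C}

variable {A A' C C' : Set I} {i i' j : I}

lemma core_mem_region {a : Gadget (S j)} :
    core j a ∈ region A C i ↔ j ∈ A ∧ (j = i → a ∉ range (Gadget.block 0)) :=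
  .rfl

lemma core_block_mem_region {n : ℕ} {y : Y j} :
    core j (Gadget.block n y) ∈ region (S := S) A C i ↔ j ∈ A ∧ (j = i → n ≠ 0) := by
  rw [core_mem_region, Gadget.block_mem_range_block]

lemma isClopen_region : IsClopen (region (S := S) A C i) := by
  have hfst (B : Set I) : IsClopen (Sigma.fst ⁻¹' B : Set (Σ i, Gadget (S i))) :=
    ⟨⟨isOpen_sigma_fst_preimage Bᶜ⟩, isOpen_sigma_fst_preimage B⟩
  have hblock : IsClopen {g : Σ i, Gadget (S i) | g.2 ∈ range (Gadget.block 0)} :=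
    ⟨isClosed_sigma_iff.2 fun _ ↦ (Gadget.isClopen_range_block 0).isClosed,
      isOpen_sigma_iff.2 fun _ ↦ (Gadget.isClopen_range_block 0).isOpen⟩
  have hinl : IsClopen (Sum.inl ⁻¹' region (S := S) A C i) := by
    convert (hfst A).inter ((hfst {i}).compl.union hblock.compl) using 1
    ext g
    exact and_congr_right fun _ ↦ imp_iff_not_or
  have hinr : IsClopen (Sum.inr ⁻¹' region (S := S) A C i) := (hfst C).preimage continuous_fst
  exact ⟨isClosed_sum_iff.2 ⟨hinl.isClosed, hinr.isClosed⟩,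
    isOpen_sum_iff.2 ⟨hinl.isOpen, hinr.isOpen⟩⟩

lemma homeoToClopenSubset_region (hA : A ⊆ A') (hC : C ⊆ C') :
    HomeoToClopenSubset (region (S := S) A C i) (region (S := S) A' C' i') := by
  let shiftAll : (Σ i, Gadget (S i)) → Σ i, Gadget (S i) := Sigma.map id fun _ ↦ Gadget.shift
  have hclosed : IsClosedEmbedding shiftAll := isClosedEmbedding_sigmaMap_id fun _ ↦
    ⟨Gadget.isEmbedding_shift, Gadget.isClopen_range_shift.isClosed⟩
  have hopen : IsOpenEmbedding shiftAll :=
    (isOpenEmbedding_sigmaMap Function.injective_id).2 fun _ ↦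
      ⟨Gadget.isEmbedding_shift, Gadget.isClopen_range_shift.isOpen⟩
  have hinj : Function.Injective (Sum.map shiftAll id : TotalSpace S → TotalSpace S) :=
    Sum.map_injective.2 ⟨hclosed.injective, Function.injective_id⟩
  have hcont : Continuous (Sum.map shiftAll id : TotalSpace S → TotalSpace S) :=
    hclosed.continuous.sumMap continuous_id
  refine homeoToClopenSubset_of_mapsTo
    (.of_continuous_injective_isClosedMap hcont hinj (hclosed.isClosedMap.sumMap .id))
    (.of_continuous_injective_isOpenMap hcont hinj (hopen.isOpenMap.sumMap .id))
    isClopen_region isClopen_region.isOpen ?_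
  rintro (⟨j, a⟩ | ⟨g, c⟩) h
  · exact ⟨hA h.1, fun _ ↦ Gadget.shift_notMem_range_block_zero a⟩
  · exact hC h

lemma homeoToClosedSubset_region (hA : A ⊆ C') (hC : C ⊆ C') :
    HomeoToClosedSubset (region (S := S) A C i) (region (S := S) A' C' i') := by
  let consTrue (c : ℕ → Bool) : ℕ → Bool := fun n ↦ n.casesOn true c
  have hzero : IsClosedEmbedding fun g : Σ i, Gadget (S i) ↦ (g, fun _ : ℕ ↦ false) := by
    refine ⟨isEmbedding_prodMkLeft _, ?_⟩
    convert (isClosed_singleton (x := fun _ : ℕ ↦ false)).preimage continuous_snd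
    ext ⟨g, c⟩
    simp [eq_comm]
  have hconsTrue : IsClosedEmbedding consTrue := by
    refine Continuous.isClosedEmbedding (continuous_pi fun n ↦ ?_) fun c d h ↦ ?_
    · cases n
      exacts [continuous_const, continuous_apply _]
    · exact funext fun n ↦ congrFun h (n + 1)
  refine homeoToClosedSubset_of_mapsTo (f := Sum.inr ∘ Sum.elim (fun g ↦ (g, fun _ ↦ false))
    (Prod.map id consTrue)) (.comp .inr ?_) isClopen_region.isClosed ?_
  · refine hzero.sumElim (IsClosedEmbedding.id.prodMap hconsTrue) ?_
    rintro (g | ⟨g, c⟩) (g' | ⟨g', c'⟩) h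
    · simpa using h
    · simpa [consTrue] using congrFun (congrArg Prod.snd h) 0
    · simpa [consTrue] using congrFun (congrArg Prod.snd h) 0
    · exact congrArg Sum.inr ((IsClosedEmbedding.id.prodMap hconsTrue).injective h)
  rintro (⟨j, a⟩ | ⟨g, c⟩) h
  · exact hA h.1
  · exact hC h

lemma not_isOpen_singleton_totalSpace [∀ i, PreconnectedSpace (Y i)] [∀ i, T1Space (Y i)] :
    ∀ x : TotalSpace S, ¬ IsOpen {x}
  | .inl ⟨i, a⟩ => fun h ↦ Gadget.not_isOpen_singleton a
    (isOpen_singleton_of_injective (isClosedEmbedding_core i).continuous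
      (isClosedEmbedding_core i).injective h)
  | .inr (g, c) => fun h ↦ not_isOpen_singleton_pi c
    (isOpen_singleton_of_injective (f := fun d ↦ Sum.inr (g, d)) (by fun_prop)
      (Sum.inr_injective.comp (Prod.mk_right_injective g)) h)

lemma not_isOpen_singleton_of_isOpen [∀ i, PreconnectedSpace (Y i)] [∀ i, T1Space (Y i)]
    {U : Set (TotalSpace S)} (hU : IsOpen U) (x : U) : ¬ IsOpen {x} := fun h ↦
  not_isOpen_singleton_totalSpace x.1 (by simpa using hU.isOpenMap_subtype_val _ h)

section Rigid

variable (hY : IsRigidFamily Y)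

include hY

lemma exists_eq_sigmaMk_comp_block {f : Y i → Σ j, Gadget (S j)} (hf : Continuous f)
    (hinj : Function.Injective f) : ∃ n, f = Sigma.mk i ∘ Gadget.block n := by
  have := (S i).nontrivial
  have := hY.preconnectedSpace i
  have : ConnectedSpace (Y i) := { toNonempty := ⟨(S i).point 0⟩ }
  obtain ⟨j, g, hg, rfl⟩ := hf.exists_lift_sigma
  obtain ⟨n, φ, hφ, rfl⟩ := Gadget.exists_eq_block_comp hg hinj.of_comp
  have hφinj : Function.Injective φ := (Function.Injective.of_comp hinj).of_comp
  obtain rfl := hY.eq_of_injective hφ hφinj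
  rw [hY.eq_id hφ hφinj]
  exact ⟨n, rfl⟩

theorem exists_eq_core_or_inr {f : Y i → TotalSpace S} (hf : Continuous f)
    (hinj : Function.Injective f) :
    (∃ n, f = core i ∘ Gadget.block n) ∨
      ∃ n c, f = fun y ↦ Sum.inr (⟨i, Gadget.block n y⟩, c) := by
  have := hY.preconnectedSpace i
  have : ConnectedSpace (Y i) := { toNonempty := ⟨(S i).point 0⟩ }
  obtain ⟨g, hg, rfl⟩ | ⟨g, hg, rfl⟩ := exists_lift_sum hf
  · obtain ⟨n, rfl⟩ := exists_eq_sigmaMk_comp_block hY hg hinj.of_comp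
    exact .inl ⟨n, rfl⟩
  · have hconst (y z : Y i) : (g y).2 = (g z).2 :=
      (isPreconnected_range (continuous_snd.comp hg)).subsingleton ⟨y, rfl⟩ ⟨z, rfl⟩
    have hfst : Function.Injective fun y ↦ (g y).1 := fun y z h ↦
      hinj (congrArg Sum.inr (Prod.ext h (hconst y z)))
    obtain ⟨n, hn⟩ := exists_eq_sigmaMk_comp_block hY (continuous_fst.comp hg) hfst
    exact .inr ⟨n, (g ((S i).point 0)).2, funext fun y ↦
      congrArg Sum.inr (Prod.ext (congrFun hn y) (hconst y _))⟩

lemma exists_eq_core_of_isOpenEmbedding {f : Y i → TotalSpace S} (hf : IsOpenEmbedding f) :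
    ∃ n, f = core i ∘ Gadget.block n := by
  refine (exists_eq_core_or_inr hY hf.continuous hf.injective).resolve_right ?_
  rintro ⟨n, c, rfl⟩
  let y := (S i).point 0
  have hcont : Continuous fun d : ℕ → Bool ↦
      (Sum.inr (⟨i, Gadget.block n y⟩, d) : TotalSpace S) := by fun_prop
  refine not_isOpen_singleton_pi c ?_
  convert hf.isOpen_range.preimage hcont
  ext d
  simp [y, eq_comm]

lemma exists_forall_eq_core_block {U V : Set (TotalSpace S)} (hU : IsOpen U) (hV : IsOpen V)
    {e : U → V} (he : IsOpenEmbedding e) {n : ℕ} (h : ∀ y, core i (Gadget.block n y) ∈ U) :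
    ∃ m, ∀ y, (e ⟨core i (Gadget.block n y), h y⟩ : TotalSpace S) = core i (Gadget.block m y) := by
  have hblock : IsOpenEmbedding fun y ↦ (⟨core i (Gadget.block n y), h y⟩ : U) :=
    .of_comp _ hU.isOpenEmbedding_subtypeVal (isOpenEmbedding_core_comp_block i n)
  obtain ⟨m, hm⟩ := exists_eq_core_of_isOpenEmbedding hY
    (hV.isOpenEmbedding_subtypeVal.comp (he.comp hblock))
  exact ⟨m, congrFun hm⟩

theorem mem_union_of_existsInjCont (hi : i ∈ A)
    (h : ExistsInjCont (region (S := S) A C i) (region (S := S) A' C' i')) : i ∈ A' ∪ C' := by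
  obtain ⟨f, hf, hinj⟩ := h
  have hmem (y : Y i) : core i (Gadget.block 1 y) ∈ region (S := S) A C i :=
    core_block_mem_region.2 ⟨hi, fun _ ↦ one_ne_zero⟩
  have hblock := isOpenEmbedding_core_comp_block (S := S) i 1
  let y := (S i).point 0
  have hy := (f ⟨_, hmem y⟩).2
  obtain ⟨n, hn⟩ | ⟨n, c, hn⟩ := exists_eq_core_or_inr hY
    (f := fun y ↦ (f ⟨_, hmem y⟩ : TotalSpace S))
    (continuous_subtype_val.comp (hf.comp (hblock.continuous.subtype_mk hmem)))
    fun y z hyz ↦ hblock.injective (congrArg Subtype.val (hinj (Subtype.ext hyz)))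
  · rw [congrFun hn y] at hy
    exact .inl hy.1
  · rw [congrFun hn y] at hy
    exact .inr hy

theorem mem_of_homeoToClopenSubset (hi : i ∈ A)
    (h : HomeoToClopenSubset (region (S := S) A C i) (region (S := S) A' C' i')) : i ∈ A' := by
  obtain ⟨t, ht, ⟨e⟩⟩ := h
  obtain ⟨m, hm⟩ := exists_forall_eq_core_block hY isClopen_region.isOpen isClopen_region.isOpen
    (ht.isOpen.isOpenEmbedding_subtypeVal.comp e.isOpenEmbedding) (n := 1)
    fun y ↦ core_block_mem_region.2 ⟨hi, fun _ ↦ one_ne_zero⟩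
  exact (core_block_mem_region.1 (hm ((S i).point 0) ▸ Subtype.coe_prop _)).1

lemma exists_bijective_block_map (hi : i ∈ A) (hne : i ≠ i')
    (e : region (S := S) A C i ≃ₜ region (S := S) A' C' i') :
    ∃ σ : ℕ → ℕ, Function.Bijective σ ∧ ∀ n y h,
      (e ⟨core i (Gadget.block (n + 1) y), h⟩ : TotalSpace S) = core i (Gadget.block (σ n) y) := by
  have hi' : i ∈ A' := mem_of_homeoToClopenSubset hY hi ⟨univ, isClopen_univ,
    ⟨e.trans (Homeomorph.Set.univ _).symm⟩⟩
  have hmem (n : ℕ) (y : Y i) : core i (Gadget.block (n + 1) y) ∈ region (S := S) A C i :=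
    core_block_mem_region.2 ⟨hi, fun _ ↦ n.succ_ne_zero⟩
  have hmem' (n : ℕ) (y : Y i) : core i (Gadget.block n y) ∈ region (S := S) A' C' i' :=
    core_block_mem_region.2 ⟨hi', fun h ↦ (hne h).elim⟩
  choose σ hσ using fun n ↦ exists_forall_eq_core_block hY isClopen_region.isOpen
    isClopen_region.isOpen e.isOpenEmbedding (hmem n)
  refine ⟨σ, ⟨fun n m hnm ↦ ?_, fun m ↦ ?_⟩, fun n y _ ↦ hσ n y⟩
  · have h : e ⟨_, hmem n ((S i).point 0)⟩ = e ⟨_, hmem m ((S i).point 0)⟩ :=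
      Subtype.ext (by rw [hσ, hσ, hnm])
    simpa using (core_block_inj.1 (congrArg Subtype.val (e.injective h))).1
  · obtain ⟨k, hk⟩ := exists_forall_eq_core_block hY isClopen_region.isOpen
      isClopen_region.isOpen e.symm.isOpenEmbedding (hmem' m)
    let y := (S i).point 0
    have hk₀ : k ≠ 0 := (core_block_mem_region.1 (hk y ▸ Subtype.coe_prop _)).2 rfl
    obtain ⟨n, rfl⟩ := Nat.exists_eq_succ_of_ne_zero hk₀
    have h : e ⟨_, hmem n y⟩ = ⟨_, hmem' m y⟩ :=
      e.symm.injective (Subtype.ext (by rw [e.symm_apply_apply, hk]))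
    exact ⟨n, (core_block_inj.1 ((hσ n y).symm.trans (congrArg Subtype.val h))).1⟩

theorem isEmpty_homeomorph_region (hi : i ∈ A) (hne : i ≠ i') :
    IsEmpty (region (S := S) A C i ≃ₜ region (S := S) A' C' i') := by
  refine ⟨fun e ↦ ?_⟩
  obtain ⟨σ, hσ, he⟩ := exists_bijective_block_map hY hi hne e
  let x (n : ℕ) : region (S := S) A C i := ⟨core i (Gadget.block (n + 1) ((S i).point (n + 1))),
    core_block_mem_region.2 ⟨hi, fun _ ↦ n.succ_ne_zero⟩⟩
  let x₀ : region (S := S) A C i := ⟨core i (Gadget.limit 0),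
    core_mem_region.2 ⟨hi, fun _ ↦ Gadget.limit_notMem_range_block⟩⟩
  have hx : Tendsto x atTop (𝓝 x₀) := by
    refine tendsto_subtype_rng.2 (((isClosedEmbedding_core i).continuous.tendsto _).comp ?_)
    simpa [Function.comp_def] using
      (Gadget.tendsto_block_limit (S := S i) 0).comp (tendsto_add_atTop_nat 1)
  have hex : Tendsto (fun n ↦ core i (Gadget.block (σ n) ((S i).point (n + 1)))) atTop
      (𝓝 (e x₀ : TotalSpace S)) := by
    simpa only [x, Function.comp_def, he] using
      (continuous_subtype_val.comp e.continuous).continuousAt.tendsto.comp hx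
  obtain ⟨a, ha⟩ := (isClosedEmbedding_core i).isClosed_range.mem_of_tendsto hex
    (.of_forall fun n ↦ mem_range_self _)
  rw [← ha] at hex
  obtain ⟨k, hk⟩ := Gadget.exists_eventually_toNat_eq_of_tendsto hσ.injective
    ((isClosedEmbedding_core i).tendsto_nhds_iff.2 hex)
  have : 1 - 2 * k = 0 := eq_zero_of_bijective_of_eventually_eq_add hσ
    (hk.mono fun n hn ↦ by lia)
  lia

end Rigid

instance [∀ i, TopologicalSpace.MetrizableSpace (Y i)] :
    TopologicalSpace.MetrizableSpace (TotalSpace S) := by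
  have := metrizableSpace_sigma fun i ↦ Gadget (S i)
  have : TopologicalSpace.MetrizableSpace (ℕ → Bool) := by
    let := TopologicalSpace.metrizableSpaceMetric Bool
    infer_instance
  exact metrizableSpace_sum _ _

end TotalSpace

variable {I : Type u} {Y : I → Type u} [∀ i, TopologicalSpace (Y i)]

lemma mk_totalSpace (S : ∀ i, BiorthogonalSystem (Y i)) (hI : 𝔠 ≤ #I) (hY : ∀ i, #(Y i) ≤ #I) :
    #(TotalSpace S) = #I := by
  have hI₀ : ℵ₀ ≤ #I := aleph0_le_continuum.trans hI
  have hsigma : #(Σ i, Gadget (S i)) ≤ #I := by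
    rw [mk_sigma]
    exact (sum_le_mk_mul_iSup _).trans
      (mul_le_of_le hI₀ le_rfl (ciSup_le' fun i ↦ Gadget.mk_le (S i) hI₀ (hY i)))
  refine le_antisymm ?_ (mk_le_of_injective (f := fun i ↦ core (S := S) i (Gadget.limit 0)) ?_)
  · rw [mk_sum, lift_id, lift_id, mk_prod, lift_uzero]
    refine add_le_of_le hI₀ hsigma (mul_le_of_le hI₀ hsigma ?_)
    simpa using hI
  · intro i j h
    exact congrArg Sigma.fst (Sum.inl_injective h)

theorem IsRigidFamily.representsPairsNoIsolated [∀ i, T1Space (Y i)] (hY : IsRigidFamily Y)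
    (S : ∀ i, BiorthogonalSystem (Y i)) : RepresentsPairsNoIsolated #I (TotalSpace S) := by
  intro Q le₁ le₂ ⟨ι, hι⟩ refl₁ trans₁ _ trans₂ le₂_of_le₁
  have hpre (i : I) : PreconnectedSpace (Y i) := hY.preconnectedSpace i
  let A (q : Q) : Set I := ι '' {p | le₁ p q}
  let C (q : Q) : Set I := ι '' {p | le₂ p q}
  have mem_A {p q : Q} : ι p ∈ A q ↔ le₁ p q := hι.mem_set_image
  have mem_C {p q : Q} : ι p ∈ C q ↔ le₂ p q := hι.mem_set_image
  have A_subset_C (q : Q) : A q ⊆ C q := image_mono fun p hp ↦ le₂_of_le₁ p q hp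
  have C_subset_C {q q' : Q} (h : le₂ q q') : C q ⊆ C q' :=
    image_mono fun p hp ↦ trans₂ p q q' hp h
  have mem_A_self (q : Q) : ι q ∈ A q := mem_A.2 (refl₁ q)
  refine ⟨fun q ↦ region (A q) (C q) (ι q), fun q ↦ isClopen_region, fun q q' hne ↦
    isEmpty_homeomorph_region hY (mem_A_self q) (hι.ne hne), fun q ↦
    not_isOpen_singleton_of_isOpen isClopen_region.isOpen, fun q q' ↦ ⟨fun h ↦ ?_, fun h ↦ ?_⟩,
    fun q q' h ↦ ?_, fun q q' h hex ↦ h (mem_C.1 ?_)⟩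
  · exact homeoToClopenSubset_region (image_mono fun p hp ↦ trans₁ p q q' hp h)
      (C_subset_C (le₂_of_le₁ q q' h))
  · exact mem_A.1 (mem_of_homeoToClopenSubset hY (mem_A_self q) h)
  · exact homeoToClosedSubset_region ((A_subset_C q).trans (C_subset_C h)) (C_subset_C h)
  · exact union_subset (A_subset_C q') subset_rfl
      (mem_union_of_existsInjCont hY (mem_A_self q) hex)

end RigidRepresentation

theorem statement1 (α : Cardinal.{u}) (hα : Cardinal.continuum ≤ α) :
    ∃ (X : Type u) (tX : TopologicalSpace X),
      @TopologicalSpace.MetrizableSpace X tX ∧ #X = α ∧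
      @RepresentsPairsNoIsolated α X tX := by
  obtain ⟨I, rfl⟩ : ∃ I, #I = α := ⟨α.out, α.mk_out⟩
  obtain ⟨Y, _, hY, hYI⟩ := RigidRepresentation.exists_isRigidFamily I hα
  have (i : I) : TopologicalSpace.MetrizableSpace (Y i) := (hYI i).1
  let S (i : I) : RigidRepresentation.BiorthogonalSystem (Y i) := (hYI i).2.2.some
  exact ⟨RigidRepresentation.TotalSpace S, inferInstance, inferInstance,
    RigidRepresentation.mk_totalSpace S hα fun i ↦ (hYI i).2.1, hY.representsPairsNoIsolated S⟩
end
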